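/- For every path connected topological space X there exists a quasi-isomorphism φ : (∧V,d) → A_PL(X) from a minimal Sullivan algebra; and if ψ : (∧W,d) → A_PL(X) is a second quasi-isomorphism from a minimal Sullivan algebra, then there is a cdga isomorphism χ : (∧W,d) → (∧V,d) such that φ∘χ is homotopic to ψ. -/

import Mathlib

/-! # Core definitions for rational homotopy theory via Sullivan models -/

noncomputable section

open scoped TensorProduct

/-- A commutative (in the graded sense) differential graded algebra over `ℚ`,
presented as a `ℤ`-graded algebra: a ring together with an internal grading by
`ℚ`-subspaces, graded commutativity with Koszul signs, and a degree `+1`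
differential which is a derivation and squares to zero. -/
structure CDGA : Type 1 where
  carrier : Type
  [ring : Ring carrier]
  [algebra : Algebra ℚ carrier]
  grading : ℤ → Submodule ℚ carrier
  spanning : (⨆ i, grading i) = ⊤
  indep : ∀ f : ℤ →₀ carrier, (∀ i, f i ∈ grading i) → (f.sum fun _ x => x) = 0 → f = 0
  one_mem : (1 : carrier) ∈ grading 0
  mul_mem : ∀ {i j : ℤ} {a b : carrier}, a ∈ grading i → b ∈ grading j → a * b ∈ grading (i + j)
  gcomm : ∀ {i j : ℤ} {a b : carrier}, a ∈ grading i → b ∈ grading j →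
    a * b = ((-1 : ℚ) ^ (i * j)) • (b * a)
  d : carrier →ₗ[ℚ] carrier
  d_mem : ∀ {i : ℤ} {a : carrier}, a ∈ grading i → d a ∈ grading (i + 1)
  d_sq : ∀ a, d (d a) = 0
  leibniz : ∀ {i : ℤ} {a : carrier}, a ∈ grading i → ∀ b : carrier,
    d (a * b) = d a * b + ((-1 : ℚ) ^ i) • (a * d b)

attribute [instance] CDGA.ring CDGA.algebra

namespace CDGA

/-- A morphism of cdga's: a ring homomorphism which is `ℚ`-linear, preserves the
grading and commutes with the differentials. -/
structure Hom (A B : CDGA) where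
  toFun : A.carrier →+* B.carrier
  map_smul : ∀ (q : ℚ) (x : A.carrier), toFun (q • x) = q • toFun x
  map_grading : ∀ i : ℤ, ∀ x ∈ A.grading i, toFun x ∈ B.grading i
  map_d : ∀ x, toFun (A.d x) = B.d (toFun x)

def Hom.id (A : CDGA) : Hom A A :=
  ⟨RingHom.id _, fun _ _ => rfl, fun _ _ h => h, fun _ => rfl⟩

def Hom.comp {A B C : CDGA} (g : Hom B C) (f : Hom A B) : Hom A C where
  toFun := g.toFun.comp f.toFun
  map_smul q x := by simp [RingHom.comp_apply, f.map_smul, g.map_smul]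
  map_grading i x hx := g.map_grading i _ (f.map_grading i x hx)
  map_d x := by simp [RingHom.comp_apply, f.map_d, g.map_d]

/-- An isomorphism of cdga's. -/
def IsIso {A B : CDGA} (f : Hom A B) : Prop :=
  ∃ g : Hom B A, (∀ x, g.toFun (f.toFun x) = x) ∧ ∀ y, f.toFun (g.toFun y) = y

def cocycles (A : CDGA) (n : ℤ) : Submodule ℚ A.carrier :=
  A.grading n ⊓ LinearMap.ker A.d

def cobounds (A : CDGA) (n : ℤ) : Submodule ℚ A.carrier :=
  A.grading n ⊓ LinearMap.range A.d

/-- The `n`-th cohomology of a cdga, as a `ℚ`-vector space. -/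
def H (A : CDGA) (n : ℤ) : Type :=
  A.cocycles n ⧸ ((A.cobounds n).comap (A.cocycles n).subtype)

instance (A : CDGA) (n : ℤ) : AddCommGroup (A.H n) :=
  inferInstanceAs (AddCommGroup (_ ⧸ _))

instance (A : CDGA) (n : ℤ) : Module ℚ (A.H n) :=
  inferInstanceAs (Module ℚ (_ ⧸ _))

/-- A quasi-isomorphism: a morphism inducing an isomorphism in cohomology
(expressed at the level of cocycles and coboundaries). -/
def QuasiIso {A B : CDGA} (f : Hom A B) : Prop :=
  (∀ n : ℤ, ∀ a ∈ A.cocycles n, f.toFun a ∈ B.cobounds n → a ∈ A.cobounds n) ∧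
  ∀ n : ℤ, ∀ b ∈ B.cocycles n, ∃ a ∈ A.cocycles n, b - f.toFun a ∈ B.cobounds n

/-- `H⁰(A) = ℚ`. -/
def HZeroIsQ (A : CDGA) : Prop :=
  (∀ a ∈ A.cocycles 0, ∃ q : ℚ, a - q • (1 : A.carrier) ∈ A.cobounds 0) ∧
  (1 : A.carrier) ∉ A.cobounds 0

/-- The cylinder `∧(t,dt) ⊗ A` on a cdga `A`, characterized (up to isomorphism)
as a cdga containing `A` and an element `t` of degree `0` such that the whole
algebra is a free `A`-module on the monomials `tᵏ` and `tᵏ·dt`, together with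
the two augmentations `ε₀, ε₁` evaluating `t` at `0` and `1`.  -/
structure Cylinder (A : CDGA) where
  C : CDGA
  ι : Hom A C
  t : C.carrier
  t_mem : t ∈ C.grading 0
  ε₀ : Hom C A
  ε₁ : Hom C A
  ε₀_ι : ∀ a, ε₀.toFun (ι.toFun a) = a
  ε₁_ι : ∀ a, ε₁.toFun (ι.toFun a) = a
  ε₀_t : ε₀.toFun t = 0
  ε₁_t : ε₁.toFun t = 1
  basis : ∀ c : C.carrier, ∃! pq : (ℕ →₀ A.carrier) × (ℕ →₀ A.carrier),
    c = (pq.1.sum fun k a => ι.toFun a * t ^ k) +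
        pq.2.sum fun k a => ι.toFun a * t ^ k * C.d t
  grading_compat : ∀ (n : ℤ) (p q : ℕ →₀ A.carrier),
    (∀ k, p k ∈ A.grading n) → (∀ k, q k ∈ A.grading (n - 1)) →
    ((p.sum fun k a => ι.toFun a * t ^ k) +
      q.sum fun k a => ι.toFun a * t ^ k * C.d t) ∈ C.grading n

/-- Sullivan's notion of homotopy of cdga morphisms: `f ∼ g` iff there is a
morphism into the cylinder `∧(t,dt) ⊗ A` restricting to `f` at `t = 0` and to
`g` at `t = 1`. -/
def Homotopic {S A : CDGA} (f g : Hom S A) : Prop :=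
  ∃ (cy : Cylinder A) (Φ : Hom S cy.C),
    (∀ x, cy.ε₀.toFun (Φ.toFun x) = f.toFun x) ∧ ∀ x, cy.ε₁.toFun (Φ.toFun x) = g.toFun x

def QIso (A B : CDGA) : Prop := ∃ f : Hom A B, QuasiIso f

/-- Weak equivalence of cdga's: a zig-zag of quasi-isomorphisms. -/
def WeakEq : CDGA → CDGA → Prop := Relation.EqvGen QIso

end CDGA

/-- A Sullivan algebra `(∧V, d)`: a cdga which is free as a graded-commutative
algebra on a graded subspace `V = {V^k}_{k ≥ 1}` (expressed by the universal
property of extending degreewise linear maps on `V` uniquely to graded algebra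
morphisms), together with an increasing filtration `V(0) ⊆ V(1) ⊆ ⋯` of `V`
with `d (V(0)) = 0` and `d(V(r+1)) ⊆ ∧V(r)`. -/
structure SullivanAlgebra extends CDGA where
  V : ℤ → Submodule ℚ carrier
  V_le : ∀ k, V k ≤ grading k
  V_nonpos : ∀ k ≤ 0, V k = ⊥
  gen : Algebra.adjoin ℚ (((⨆ k, V k) : Submodule ℚ carrier) : Set carrier) = ⊤
  free : ∀ (B : CDGA) (f : ∀ k : ℤ, (V k) →ₗ[ℚ] B.carrier),
    (∀ (k : ℤ) (v : V k), f k v ∈ B.grading k) →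
    ∃! φ : carrier →+* B.carrier,
      (∀ (q : ℚ) (x : carrier), φ (q • x) = q • φ x) ∧
      (∀ i : ℤ, ∀ x ∈ grading i, φ x ∈ B.grading i) ∧
      ∀ (k : ℤ) (v : V k), φ v = f k v
  filt : ℕ → Submodule ℚ carrier
  filt_le : ∀ r, filt r ≤ ⨆ k, V k
  filt_mono : Monotone filt
  filt_exhausts : (⨆ k, V k) ≤ ⨆ r, filt r
  d_filt_zero : ∀ x ∈ filt 0, d x = 0
  d_filt_succ : ∀ r : ℕ, ∀ x ∈ filt (r + 1), d x ∈ Algebra.adjoin ℚ ((filt r : Set carrier))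

namespace SullivanAlgebra

def Vtot (S : SullivanAlgebra) : Submodule ℚ S.carrier := ⨆ k, S.V k

/-- `∧^{≥ m} V`: the span of the products of at least `m` elements of `V`. -/
def wedge (S : SullivanAlgebra) (m : ℕ) : Submodule ℚ S.carrier :=
  S.Vtot ^ m * ⊤

end SullivanAlgebra

/-- A minimal Sullivan algebra: `d(V) ⊆ ∧^{≥2} V`. -/
structure MinimalSullivanAlgebra extends SullivanAlgebra where
  minimal : ∀ x ∈ toSullivanAlgebra.Vtot, d x ∈ toSullivanAlgebra.wedge 2
/-! ### Singular cohomology and homology with rational coefficients -/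

/-- The standard topological `n`-simplex. -/
def SSimplex (n : ℕ) : Type :=
  {f : Fin (n + 1) → ℝ // (∀ i, 0 ≤ f i) ∧ ∑ i, f i = 1}

instance (n : ℕ) : TopologicalSpace (SSimplex n) := by
  unfold SSimplex; infer_instance

/-- The `i`-th face inclusion of standard simplices. -/
def SSimplex.face {n : ℕ} (i : Fin (n + 2)) : C(SSimplex n, SSimplex (n + 1)) where
  toFun f := ⟨fun j => ∑ k : Fin (n + 1), if i.succAbove k = j then f.1 k else 0, by
    constructor
    · intro j
      refine Finset.sum_nonneg fun k _ => ?_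
      split
      · exact f.2.1 k
      · exact le_rfl
    · rw [Finset.sum_comm]
      have h : ∀ k : Fin (n + 1),
          (∑ j : Fin (n + 2), if i.succAbove k = j then f.1 k else 0) = f.1 k := by
        intro k
        simp [Finset.sum_ite_eq]
      rw [Finset.sum_congr rfl fun k _ => h k]
      exact f.2.2⟩
  continuous_toFun := by
    apply Continuous.subtype_mk
    apply continuous_pi
    intro j
    apply continuous_finset_sum
    intro k _
    by_cases h : i.succAbove k = j
    · have hk : Continuous fun f : SSimplex n => f.1 k :=
        (continuous_apply k).comp continuous_subtype_val
      simpa [h] using hk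
    · simpa [h] using continuous_const

/-- Singular simplices in `X`. -/
abbrev SingularSimplex (X : Type) [TopologicalSpace X] (n : ℕ) := C(SSimplex n, X)

/-- Rational singular cochains. -/
abbrev scochain (X : Type) [TopologicalSpace X] (n : ℕ) : Type :=
  SingularSimplex X n → ℚ

/-- The singular coboundary operator. -/
def scoboundary (X : Type) [TopologicalSpace X] (n : ℕ) :
    scochain X n →ₗ[ℚ] scochain X (n + 1) where
  toFun f := fun σ => ∑ i : Fin (n + 2), (-1 : ℚ) ^ (i : ℕ) * f (σ.comp (SSimplex.face i))
  map_add' f g := by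
    funext σ
    simp [mul_add, Finset.sum_add_distrib]
  map_smul' q f := by
    funext σ
    simp [Finset.mul_sum, mul_left_comm]

def scocycles (X : Type) [TopologicalSpace X] (n : ℕ) : Submodule ℚ (scochain X n) :=
  LinearMap.ker (scoboundary X n)

def scobounds (X : Type) [TopologicalSpace X] : (n : ℕ) → Submodule ℚ (scochain X n)
  | 0 => ⊥
  | n + 1 => LinearMap.range (scoboundary X n)

/-- Rational singular cohomology `H^n(X;ℚ)`. -/
def SingCoh (X : Type) [TopologicalSpace X] (n : ℕ) : Type :=
  scocycles X n ⧸ ((scobounds X n).comap (scocycles X n).subtype)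

instance (X : Type) [TopologicalSpace X] (n : ℕ) : AddCommGroup (SingCoh X n) :=
  inferInstanceAs (AddCommGroup (_ ⧸ _))

instance (X : Type) [TopologicalSpace X] (n : ℕ) : Module ℚ (SingCoh X n) :=
  inferInstanceAs (Module ℚ (_ ⧸ _))

/-- Rational singular chains. -/
abbrev schain (X : Type) [TopologicalSpace X] (n : ℕ) := SingularSimplex X n →₀ ℚ

/-- The singular boundary operator `C_{n+1} → C_n`. -/
def sboundary (X : Type) [TopologicalSpace X] (n : ℕ) :
    schain X (n + 1) →ₗ[ℚ] schain X n :=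
  (Finsupp.lift (schain X n) ℚ (SingularSimplex X (n + 1))) fun σ =>
    ∑ i : Fin (n + 2), ((-1 : ℚ) ^ (i : ℕ)) • Finsupp.single (σ.comp (SSimplex.face i)) (1 : ℚ)

def scycles (X : Type) [TopologicalSpace X] : (n : ℕ) → Submodule ℚ (schain X n)
  | 0 => ⊤
  | n + 1 => LinearMap.ker (sboundary X n)

def sbounds (X : Type) [TopologicalSpace X] (n : ℕ) : Submodule ℚ (schain X n) :=
  LinearMap.range (sboundary X n)

/-- Rational singular homology `H_n(X;ℚ)`. -/
def SingH (X : Type) [TopologicalSpace X] (n : ℕ) : Type :=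
  scycles X n ⧸ ((sbounds X n).comap (scycles X n).subtype)

instance (X : Type) [TopologicalSpace X] (n : ℕ) : AddCommGroup (SingH X n) :=
  inferInstanceAs (AddCommGroup (_ ⧸ _))

instance (X : Type) [TopologicalSpace X] (n : ℕ) : Module ℚ (SingH X n) :=
  inferInstanceAs (Module ℚ (_ ⧸ _))

/-! ### Lusternik-Schnirelmann category -/

/-- `U` is contractible in `X`: the inclusion is null-homotopic. -/
def NullhomotopicIncl {X : Type} [TopologicalSpace X] (U : Set X) : Prop :=
  ∃ x₀ : X, ContinuousMap.Homotopic
    ⟨(Subtype.val : U → X), continuous_subtype_val⟩ (ContinuousMap.const U x₀)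

/-- `cat X ≤ m`: `X` is covered by `m+1` open subsets, each contractible in `X`. -/
def catLeSpace (X : Type) [TopologicalSpace X] (m : ℕ) : Prop :=
  ∃ U : Fin (m + 1) → Set X, (∀ i, IsOpen (U i)) ∧ (⋃ i, U i) = Set.univ ∧
    ∀ i, NullhomotopicIncl (U i)

/-- The LS category of a topological space, valued in `ℕ∞`. -/
def catSpace (X : Type) [TopologicalSpace X] : ℕ∞ :=
  sInf {e : ℕ∞ | ∃ m : ℕ, e = m ∧ catLeSpace X m}

/-- The quotient `(∧V/∧^{>m}V, d̄)` of a Sullivan algebra, characterized as a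
surjective cdga morphism with kernel `∧^{> m} V`. -/
structure SullivanAlgebra.LengthQuotient (S : SullivanAlgebra) (m : ℕ) where
  Q : CDGA
  ρ : CDGA.Hom S.toCDGA Q
  surj : Function.Surjective ρ.toFun
  ker : ∀ x : S.carrier, ρ.toFun x = 0 ↔ x ∈ S.wedge (m + 1)

/-- `cat (∧V,d) ≤ m`: there is a morphism `ψ` from a Sullivan model `(∧W,d)` of
`∧V/∧^{>m}V` into `(∧V,d)` with `ρ ∘ ψ ∼ φ`. -/
def SullivanAlgebra.catLe (S : SullivanAlgebra) (m : ℕ) : Prop :=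
  ∃ (LQ : S.LengthQuotient m) (W : SullivanAlgebra) (φ : CDGA.Hom W.toCDGA LQ.Q),
    CDGA.QuasiIso φ ∧ ∃ ψ : CDGA.Hom W.toCDGA S.toCDGA,
      CDGA.Homotopic (LQ.ρ.comp ψ) φ

/-- The LS category of a Sullivan algebra, valued in `ℕ∞`. -/
def SullivanAlgebra.cat (S : SullivanAlgebra) : ℕ∞ :=
  sInf {e : ℕ∞ | ∃ m : ℕ, e = m ∧ S.catLe m}

/-! ### Sullivan's functor `A_PL` -/

/-- The data of Sullivan's contravariant functor `A_PL` from topological spaces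
to rational cdga's: it is functorial, homotopy invariant, concentrated in
non-negative degrees, and its cohomology is (degreewise) isomorphic to rational
singular cohomology. -/
structure APLTheory : Type 1 where
  obj : (X : Type) → TopologicalSpace X → CDGA
  map : {X Y : Type} → (tX : TopologicalSpace X) → (tY : TopologicalSpace Y) →
    C(X, Y) → CDGA.Hom (obj Y tY) (obj X tX)
  map_id : ∀ (X : Type) (tX : TopologicalSpace X) (a : (obj X tX).carrier),
    (map tX tX (ContinuousMap.id X)).toFun a = a
  map_comp : ∀ {X Y Z : Type} (tX : TopologicalSpace X) (tY : TopologicalSpace Y)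
    (tZ : TopologicalSpace Z) (f : C(X, Y)) (g : C(Y, Z)) (a : (obj Z tZ).carrier),
    (map tX tZ (g.comp f)).toFun a = (map tX tY f).toFun ((map tY tZ g).toFun a)
  grading_neg : ∀ (X : Type) (tX : TopologicalSpace X) (n : ℤ), n < 0 →
    (obj X tX).grading n = ⊥
  cohEquiv : ∀ (X : Type) (tX : TopologicalSpace X) (n : ℕ),
    Nonempty (((obj X tX).H n) ≃ₗ[ℚ] @SingCoh X tX n)
  htpy_invariant : ∀ {X Y : Type} (tX : TopologicalSpace X) (tY : TopologicalSpace Y)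
    (f g : C(X, Y)), @ContinuousMap.Homotopic X Y tX tY f g →
    CDGA.Homotopic (map tX tY f) (map tX tY g)

/-- `A` plays the role of `A_PL(X)`: a cdga concentrated in non-negative degrees
whose cohomology is the rational cohomology of `X`. -/
def IsAPLModelOf (A : CDGA) (X : Type) [TopologicalSpace X] : Prop :=
  (∀ n : ℤ, n < 0 → A.grading n = ⊥) ∧
  ∀ n : ℕ, Nonempty (A.H n ≃ₗ[ℚ] SingCoh X n)

namespace CDGA

/-! ### Homogeneous components -/

theorem isInternal (A : CDGA) : DirectSum.IsInternal A.grading := by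
  rw [DirectSum.isInternal_submodule_iff_iSupIndep_and_iSup_eq_top]
  refine ⟨?_, A.spanning⟩
  refine iSupIndep_of_dfinsupp_lsum_injective _ ?_
  refine (injective_iff_map_eq_zero _).2 fun x hx => ?_
  classical
  have h := A.indep (Finsupp.onFinset x.support (fun i => (x i : A.carrier))
    (fun i hi => by
      rw [DFinsupp.mem_support_iff]
      intro h0
      exact hi (by rw [h0]; rfl))) (fun i => (x i).2) (by
      rw [Finsupp.onFinset_sum _ (fun _ => rfl)]
      rw [DFinsupp.lsum_apply_apply, DFinsupp.sumAddHom_apply] at hx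
      exact hx)
  ext i
  exact DFunLike.congr_fun h i

/-- The linear map agreeing with `f i` on the elements of degree `i`. -/
def glift (A : CDGA) {M : Type*} [AddCommGroup M] [Module ℚ M] (f : ℤ → A.carrier →ₗ[ℚ] M) :
    A.carrier →ₗ[ℚ] M :=
  letI := A.isInternal.chooseDecomposition
  (DirectSum.toModule ℚ ℤ M fun i => (f i).comp (A.grading i).subtype).comp
    (DirectSum.decomposeLinearEquiv A.grading).toLinearMap

theorem glift_of_mem (A : CDGA) {M : Type*} [AddCommGroup M] [Module ℚ M]
    (f : ℤ → A.carrier →ₗ[ℚ] M) {i : ℤ} {x : A.carrier} (hx : x ∈ A.grading i) :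
    A.glift f x = f i x := by
  let := A.isInternal.chooseDecomposition
  simp only [glift, LinearMap.comp_apply, LinearEquiv.coe_coe,
    DirectSum.decomposeLinearEquiv_apply]
  rw [DirectSum.decompose_of_mem _ hx]
  exact DirectSum.toModule_lof ℚ i _

@[elab_as_elim]
theorem homogeneous_induction (A : CDGA) {P : A.carrier → Prop} (x : A.carrier)
    (hom : ∀ i, ∀ x ∈ A.grading i, P x) (add : ∀ x y, P x → P y → P (x + y)) : P x := by
  have hx : x ∈ ⨆ i, A.grading i := by rw [A.spanning]; trivial
  exact Submodule.iSup_induction _ (motive := P) hx hom (hom 0 0 (Submodule.zero_mem _)) add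

/-- The projection onto the component of degree `k`. -/
def proj (A : CDGA) (k : ℤ) : A.carrier →ₗ[ℚ] A.carrier :=
  A.glift fun i => if i = k then LinearMap.id else 0

theorem proj_self (A : CDGA) {k : ℤ} {x : A.carrier} (hx : x ∈ A.grading k) :
    A.proj k x = x := by
  simp [proj, A.glift_of_mem _ hx]

theorem proj_of_ne (A : CDGA) {i k : ℤ} (hik : i ≠ k) {x : A.carrier} (hx : x ∈ A.grading i) :
    A.proj k x = 0 := by
  simp [proj, A.glift_of_mem _ hx, hik]

theorem proj_mem (A : CDGA) (k : ℤ) (x : A.carrier) : A.proj k x ∈ A.grading k := by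
  induction x using A.homogeneous_induction with
  | hom i x hx =>
    by_cases h : i = k
    · subst h; rwa [A.proj_self hx]
    · rw [A.proj_of_ne h hx]; exact Submodule.zero_mem _
  | add x y hx hy => rw [map_add]; exact Submodule.add_mem _ hx hy

theorem exists_sum_proj_eq (A : CDGA) (x : A.carrier) :
    ∃ s : Finset ℤ, ∀ t, s ⊆ t → ∑ k ∈ t, A.proj k x = x := by
  induction x using A.homogeneous_induction with
  | hom i x hx =>
    refine ⟨{i}, fun t ht => ?_⟩
    rw [Finset.sum_eq_single i (fun k _ hk => A.proj_of_ne hk.symm hx)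
      (fun h => absurd (ht (Finset.mem_singleton_self i)) h), A.proj_self hx]
  | add x y hx hy =>
    obtain ⟨s, hs⟩ := hx
    obtain ⟨s', hs'⟩ := hy
    refine ⟨s ∪ s', fun t ht => ?_⟩
    simp only [map_add, Finset.sum_add_distrib]
    rw [hs t (Finset.union_subset_left ht), hs' t (Finset.union_subset_right ht)]

theorem mem_of_forall_proj_mem (A : CDGA) (Q : Submodule ℚ A.carrier) {x : A.carrier}
    (hx : ∀ k, A.proj k x ∈ Q) : x ∈ Q := by
  obtain ⟨s, hs⟩ := A.exists_sum_proj_eq x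
  rw [← hs s subset_rfl]
  exact Submodule.sum_mem _ fun k _ => hx k

theorem eq_zero_of_mem_of_mem (A : CDGA) {i j : ℤ} (hij : i ≠ j) {x : A.carrier}
    (hi : x ∈ A.grading i) (hj : x ∈ A.grading j) : x = 0 := by
  rw [← A.proj_self hi, A.proj_of_ne hij.symm hj]

theorem proj_d (A : CDGA) (k : ℤ) (x : A.carrier) : A.proj (k + 1) (A.d x) = A.d (A.proj k x) := by
  induction x using A.homogeneous_induction with
  | hom i x hx =>
    by_cases h : i = k
    · subst h; rw [A.proj_self hx, A.proj_self (A.d_mem hx)]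
    · rw [A.proj_of_ne h hx, map_zero, A.proj_of_ne (by simpa using h) (A.d_mem hx)]
  | add x y hx hy => simp only [map_add, hx, hy]

/-- The sign involution `x ↦ (-1)^|x| x`. -/
def sgn (A : CDGA) : A.carrier →ₗ[ℚ] A.carrier :=
  A.glift fun i => ((-1 : ℚ) ^ i) • LinearMap.id

theorem sgn_of_mem (A : CDGA) {i : ℤ} {x : A.carrier} (hx : x ∈ A.grading i) :
    A.sgn x = ((-1 : ℚ) ^ i) • x := by
  simp [sgn, A.glift_of_mem _ hx]

theorem sgn_mem (A : CDGA) {i : ℤ} {x : A.carrier} (hx : x ∈ A.grading i) :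
    A.sgn x ∈ A.grading i := by
  rw [A.sgn_of_mem hx]; exact Submodule.smul_mem _ _ hx

theorem sgn_one (A : CDGA) : A.sgn 1 = 1 := by simp [A.sgn_of_mem A.one_mem]

theorem sgn_mul (A : CDGA) (x y : A.carrier) : A.sgn (x * y) = A.sgn x * A.sgn y := by
  induction x using A.homogeneous_induction with
  | hom i x hx =>
    induction y using A.homogeneous_induction with
    | hom j y hy =>
      rw [A.sgn_of_mem hx, A.sgn_of_mem hy, A.sgn_of_mem (A.mul_mem hx hy),
        zpow_add₀ (by norm_num), smul_mul_smul_comm]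
    | add y z hy hz => simp only [mul_add, map_add, hy, hz]
  | add x z hx hz => simp only [add_mul, map_add, hx, hz]

theorem sgn_sgn (A : CDGA) (x : A.carrier) : A.sgn (A.sgn x) = x := by
  induction x using A.homogeneous_induction with
  | hom i x hx =>
    rw [A.sgn_of_mem hx, map_smul, A.sgn_of_mem hx, smul_smul, ← mul_zpow]
    simp
  | add x z hx hz => simp only [map_add, hx, hz]

theorem d_sgn (A : CDGA) (x : A.carrier) : A.d (A.sgn x) = - A.sgn (A.d x) := by
  induction x using A.homogeneous_induction with
  | hom i x hx =>
    rw [A.sgn_of_mem hx, map_smul, A.sgn_of_mem (A.d_mem hx), zpow_add₀ (by norm_num)]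
    simp
  | add x z hx hz => simp only [map_add, hx, hz]; abel

/-- The sign involution as an algebra morphism. -/
def sgnAlgHom (A : CDGA) : A.carrier →ₐ[ℚ] A.carrier :=
  AlgHom.ofLinearMap A.sgn A.sgn_one A.sgn_mul

theorem d_mul (A : CDGA) (x y : A.carrier) :
    A.d (x * y) = A.d x * y + A.sgn x * A.d y := by
  induction x using A.homogeneous_induction with
  | hom i x hx => rw [A.leibniz hx, A.sgn_of_mem hx, smul_mul_assoc]
  | add x z hx hz => simp only [add_mul, map_add, hx, hz]; abel

theorem d_one (A : CDGA) : A.d 1 = 0 := by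
  have h := A.d_mul 1 1
  rw [A.sgn_one] at h
  simpa using h

theorem exists_d_eq_of_mem_cobounds (A : CDGA) {n : ℤ} {x : A.carrier} (hx : x ∈ A.cobounds n) :
    ∃ y ∈ A.grading (n - 1), A.d y = x := by
  obtain ⟨hx, y, rfl⟩ := hx
  refine ⟨A.proj (n - 1) y, A.proj_mem _ _, ?_⟩
  rw [← A.proj_d, sub_add_cancel, A.proj_self hx]

theorem d_mem_cobounds (A : CDGA) {n : ℤ} {y : A.carrier} (hy : y ∈ A.grading (n - 1)) :
    A.d y ∈ A.cobounds n :=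
  ⟨by simpa using A.d_mem hy, y, rfl⟩

theorem mem_cocycles (A : CDGA) {n : ℤ} {x : A.carrier} :
    x ∈ A.cocycles n ↔ x ∈ A.grading n ∧ A.d x = 0 := Iff.rfl

theorem cobounds_le_cocycles (A : CDGA) (n : ℤ) : A.cobounds n ≤ A.cocycles n := by
  rintro _ ⟨hx, y, rfl⟩
  exact ⟨hx, A.d_sq y⟩

/-! ### Graded algebra morphisms -/

/-- An algebra morphism between the underlying algebras which preserves degrees. -/
def IsGraded {A B : CDGA} (f : A.carrier →ₐ[ℚ] B.carrier) : Prop :=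
  ∀ i : ℤ, ∀ x ∈ A.grading i, f x ∈ B.grading i

/-- The algebra morphism underlying a morphism of cdga's. -/
def Hom.alg {A B : CDGA} (f : Hom A B) : A.carrier →ₐ[ℚ] B.carrier :=
  { f.toFun with
    commutes' := fun q => by
      change f.toFun (algebraMap ℚ _ q) = _
      rw [Algebra.algebraMap_eq_smul_one, f.map_smul, map_one, Algebra.algebraMap_eq_smul_one] }

/-- A degree preserving algebra morphism commuting with differentials is a cdga morphism. -/
def Hom.ofAlgHom {A B : CDGA} (f : A.carrier →ₐ[ℚ] B.carrier) (hf : IsGraded f)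
    (hd : ∀ x, f (A.d x) = B.d (f x)) : Hom A B where
  toFun := f.toRingHom
  map_smul q x := _root_.map_smul f q x
  map_grading := hf
  map_d := hd

theorem IsGraded.map_sgn {A B : CDGA} {f : A.carrier →ₐ[ℚ] B.carrier} (hf : IsGraded f)
    (x : A.carrier) : f (A.sgn x) = B.sgn (f x) := by
  induction x using A.homogeneous_induction with
  | hom i x hx => rw [A.sgn_of_mem hx, B.sgn_of_mem (hf i x hx), map_smul]
  | add x y hx hy => simp only [map_add, hx, hy]

theorem Hom.map_proj {A B : CDGA} (f : Hom A B) (k : ℤ) (x : A.carrier) :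
    f.toFun (A.proj k x) = B.proj k (f.toFun x) := by
  induction x using A.homogeneous_induction with
  | hom i x hx =>
    by_cases h : i = k
    · subst h; rw [A.proj_self hx, B.proj_self (f.map_grading _ _ hx)]
    · rw [A.proj_of_ne h hx, B.proj_of_ne h (f.map_grading _ _ hx), map_zero]
  | add x y hx hy => simp only [map_add, hx, hy]

/-- A degree preserving algebra morphism commuting with the differentials on a set `s` does so
on the subalgebra generated by `s`. -/
theorem IsGraded.map_d_of_mem_adjoin {A B : CDGA} {f : A.carrier →ₐ[ℚ] B.carrier}
    (hf : IsGraded f) {s : Set A.carrier} (hs : ∀ x ∈ s, f (A.d x) = B.d (f x)) {x : A.carrier}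
    (hx : x ∈ Algebra.adjoin ℚ s) : f (A.d x) = B.d (f x) := by
  induction hx using Algebra.adjoin_induction with
  | mem x hx => exact hs x hx
  | algebraMap q =>
    simp only [AlgHom.commutes]
    simp only [Algebra.algebraMap_eq_smul_one, map_smul, d_one, smul_zero, map_zero]
  | add x y _ _ hx hy => simp only [map_add, hx, hy]
  | mul x y _ _ hx hy => simp only [A.d_mul, B.d_mul, map_add, map_mul, hx, hy, hf.map_sgn]

/-! ### Quasi-isomorphisms -/

theorem Hom.map_cocycles {A B : CDGA} (f : Hom A B) {n : ℤ} {x : A.carrier}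
    (hx : x ∈ A.cocycles n) : f.toFun x ∈ B.cocycles n :=
  ⟨f.map_grading n x hx.1, by
    have h : A.d x = 0 := hx.2
    change B.d (f.toFun x) = 0
    rw [← f.map_d, h, map_zero]⟩

theorem Hom.map_cobounds {A B : CDGA} (f : Hom A B) {n : ℤ} {x : A.carrier}
    (hx : x ∈ A.cobounds n) : f.toFun x ∈ B.cobounds n := by
  obtain ⟨hx, y, rfl⟩ := hx
  exact ⟨f.map_grading n _ hx, f.toFun y, (f.map_d y).symm⟩

theorem QuasiIso.comp {A B C : CDGA} {g : Hom B C} {f : Hom A B} (hg : QuasiIso g)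
    (hf : QuasiIso f) : QuasiIso (g.comp f) := by
  refine ⟨fun n a ha h => hf.1 n a ha (hg.1 n _ (f.map_cocycles ha) h), fun n c hc => ?_⟩
  obtain ⟨b, hb, hcb⟩ := hg.2 n c hc
  obtain ⟨a, ha, hba⟩ := hf.2 n b hb
  refine ⟨a, ha, ?_⟩
  have h := Submodule.add_mem _ hcb (g.map_cobounds hba)
  rwa [map_sub, sub_add_sub_cancel] at h

theorem QuasiIso.of_comp_left {A B C : CDGA} {g : Hom B C} {f : Hom A B} (hg : QuasiIso g)
    (hgf : QuasiIso (g.comp f)) : QuasiIso f := by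
  refine ⟨fun n a ha h => hgf.1 n a ha (g.map_cobounds h), fun n b hb => ?_⟩
  obtain ⟨a, ha, hba⟩ := hgf.2 n _ (g.map_cocycles hb)
  refine ⟨a, ha, hg.1 n _ (Submodule.sub_mem _ hb (f.map_cocycles ha)) ?_⟩
  rw [map_sub]
  exact hba

theorem QuasiIso.of_comp_right {A B C : CDGA} {g : Hom B C} {f : Hom A B} (hf : QuasiIso f)
    (hgf : QuasiIso (g.comp f)) : QuasiIso g := by
  refine ⟨fun n b hb h => ?_, fun n c hc => ?_⟩
  · obtain ⟨a, ha, hba⟩ := hf.2 n b hb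
    have h2 : (g.comp f).toFun a ∈ C.cobounds n := by
      have h3 := Submodule.sub_mem _ h (g.map_cobounds hba)
      rwa [map_sub, sub_sub_cancel] at h3
    have h4 := Submodule.add_mem _ hba (f.map_cobounds (hgf.1 n a ha h2))
    rwa [sub_add_cancel] at h4
  · obtain ⟨a, ha, hca⟩ := hgf.2 n c hc
    exact ⟨_, f.map_cocycles ha, hca⟩

theorem QuasiIso.id (A : CDGA) : QuasiIso (Hom.id A) :=
  ⟨fun _ _ _ h => h, fun n b hb => ⟨b, hb, by
    change b - b ∈ _
    rw [sub_self]; exact Submodule.zero_mem _⟩⟩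

end CDGA

/-! ### Subalgebras generated by homogeneous elements -/

namespace CDGA

theorem exists_grading_of_mem_closure (A : CDGA) {s : Set A.carrier}
    (hs : ∀ x ∈ s, ∃ i, x ∈ A.grading i) {x : A.carrier} (hx : x ∈ Submonoid.closure s) :
    ∃ i, x ∈ A.grading i := by
  induction hx using Submonoid.closure_induction with
  | mem x hx => exact hs x hx
  | one => exact ⟨0, A.one_mem⟩
  | mul x y _ _ hx hy =>
    obtain ⟨i, hi⟩ := hx
    obtain ⟨j, hj⟩ := hy
    exact ⟨i + j, A.mul_mem hi hj⟩

theorem proj_mem_adjoin (A : CDGA) {s : Set A.carrier} (hs : ∀ x ∈ s, ∃ i, x ∈ A.grading i)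
    {x : A.carrier} (hx : x ∈ Algebra.adjoin ℚ s) (k : ℤ) :
    A.proj k x ∈ Algebra.adjoin ℚ s := by
  rw [← Subalgebra.mem_toSubmodule, Algebra.adjoin_eq_span] at hx ⊢
  induction hx using Submodule.span_induction with
  | mem x hx =>
    obtain ⟨i, hi⟩ := A.exists_grading_of_mem_closure hs hx
    by_cases h : i = k
    · subst h
      rw [A.proj_self hi]
      exact Submodule.subset_span hx
    · rw [A.proj_of_ne h hi]
      exact Submodule.zero_mem _
  | zero => rw [map_zero]; exact Submodule.zero_mem _
  | add x y _ _ hx hy => rw [map_add]; exact Submodule.add_mem _ hx hy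
  | smul q x _ hx => rw [map_smul]; exact Submodule.smul_mem _ _ hx

/-- A product of homogeneous elements of `s` of positive degrees is `1`, an element of `s`, or a
product of at least two factors of lower degree. -/
theorem exists_word_type (A : CDGA) {s : Set A.carrier}
    (hs : ∀ x ∈ s, ∃ i, 1 ≤ i ∧ x ∈ A.grading i) {x : A.carrier}
    (hx : x ∈ Submonoid.closure s) :
    x = 1 ∨ ∃ m, 1 ≤ m ∧ x ∈ A.grading m ∧ x ∈ Submodule.span ℚ s * (⊤ : Submodule ℚ A.carrier) ∧
      (x ∈ s ∨ (x ∈ Algebra.adjoin ℚ {y ∈ s | ∃ i < m, y ∈ A.grading i} ∧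
        x ∈ Submodule.span ℚ s ^ 2 * (⊤ : Submodule ℚ A.carrier))) := by
  induction hx using Submonoid.closure_induction_left with
  | one => exact Or.inl rfl
  | mul_left x hx y _ hy =>
    obtain ⟨m, hm, hxm⟩ := hs x hx
    have hxs : x ∈ Submodule.span ℚ s := Submodule.subset_span hx
    have hxy : x * y ∈ Submodule.span ℚ s * (⊤ : Submodule ℚ A.carrier) :=
      Submodule.mul_mem_mul hxs Submodule.mem_top
    rcases hy with rfl | ⟨n, hn, hyn, hys, hy⟩
    · rw [mul_one] at hxy ⊢
      exact Or.inr ⟨m, hm, hxm, hxy, Or.inl hx⟩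
    refine Or.inr ⟨m + n, by omega, A.mul_mem hxm hyn, hxy, Or.inr ⟨?_, ?_⟩⟩
    · refine Subalgebra.mul_mem _ (Algebra.subset_adjoin ⟨hx, m, by omega, hxm⟩) ?_
      rcases hy with h | ⟨h, -⟩
      · exact Algebra.subset_adjoin ⟨h, n, by omega, hyn⟩
      · refine Algebra.adjoin_mono ?_ h
        rintro y ⟨hy, i, hi, hyi⟩
        exact ⟨hy, i, by omega, hyi⟩
    · rw [pow_two, mul_assoc]
      exact Submodule.mul_mem_mul hxs hys

theorem mem_adjoin_split (A : CDGA) {s : Set A.carrier}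
    (hs : ∀ x ∈ s, ∃ i, 1 ≤ i ∧ x ∈ A.grading i) {m : ℤ} (hm : 1 ≤ m) {x : A.carrier}
    (hx : x ∈ Algebra.adjoin ℚ s) (hxm : x ∈ A.grading m) :
    ∃ u ∈ Submodule.span ℚ (s ∩ A.grading m),
      ∃ y ∈ Algebra.adjoin ℚ {y ∈ s | ∃ i < m, y ∈ A.grading i},
        y ∈ Submodule.span ℚ s ^ 2 * (⊤ : Submodule ℚ A.carrier) ∧ x = u + y := by
  rw [← A.proj_self hxm]
  clear hxm
  rw [← Subalgebra.mem_toSubmodule, Algebra.adjoin_eq_span] at hx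
  induction hx using Submodule.span_induction with
  | mem x hx =>
    have h0 : ∀ i ≠ m, x ∈ A.grading i →
        ∃ u ∈ Submodule.span ℚ (s ∩ A.grading m),
          ∃ y ∈ Algebra.adjoin ℚ {y ∈ s | ∃ i < m, y ∈ A.grading i},
            y ∈ Submodule.span ℚ s ^ 2 * (⊤ : Submodule ℚ A.carrier) ∧ A.proj m x = u + y :=
      fun i him hi => ⟨0, Submodule.zero_mem _, 0, Subalgebra.zero_mem _, Submodule.zero_mem _, by
        rw [A.proj_of_ne him hi, add_zero]⟩
    rcases A.exists_word_type hs hx with rfl | ⟨n, hn, hxn, -, hx⟩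
    · exact h0 0 (by omega) A.one_mem
    · by_cases hnm : n = m
      · subst hnm
        rw [A.proj_self hxn]
        rcases hx with hx | ⟨hx, hx2⟩
        · exact ⟨x, Submodule.subset_span ⟨hx, hxn⟩, 0, Subalgebra.zero_mem _,
            Submodule.zero_mem _, (add_zero x).symm⟩
        · exact ⟨0, Submodule.zero_mem _, x, hx, hx2, (zero_add x).symm⟩
      · exact h0 n hnm hxn
  | zero =>
    exact ⟨0, Submodule.zero_mem _, 0, Subalgebra.zero_mem _, Submodule.zero_mem _, by simp⟩
  | add x x' _ _ hx hx' =>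
    obtain ⟨u, hu, y, hy, hy2, hx⟩ := hx
    obtain ⟨u', hu', y', hy', hy2', hx'⟩ := hx'
    exact ⟨u + u', Submodule.add_mem _ hu hu', y + y', Subalgebra.add_mem _ hy hy',
      Submodule.add_mem _ hy2 hy2', by rw [map_add, hx, hx', add_add_add_comm]⟩
  | smul q x _ hx =>
    obtain ⟨u, hu, y, hy, hy2, hx⟩ := hx
    exact ⟨q • u, Submodule.smul_mem _ _ hu, q • y, Subalgebra.smul_mem _ hy _,
      Submodule.smul_mem _ _ hy2, by rw [map_smul, hx, smul_add]⟩

theorem mem_span_one_of_mem_adjoin (A : CDGA) {s : Set A.carrier}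
    (hs : ∀ x ∈ s, ∃ i, 1 ≤ i ∧ x ∈ A.grading i) {m : ℤ} (hm : m ≤ 0) {x : A.carrier}
    (hx : x ∈ Algebra.adjoin ℚ s) (hxm : x ∈ A.grading m) : ∃ q : ℚ, x = q • 1 := by
  rw [← A.proj_self hxm]
  clear hxm
  rw [← Subalgebra.mem_toSubmodule, Algebra.adjoin_eq_span] at hx
  induction hx using Submodule.span_induction with
  | mem x hx =>
    rcases A.exists_word_type hs hx with rfl | ⟨n, hn, hxn, -, hx⟩
    · by_cases h : 0 = m
      · subst h
        exact ⟨1, by rw [A.proj_self A.one_mem, one_smul]⟩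
      · exact ⟨0, by rw [A.proj_of_ne h A.one_mem, zero_smul]⟩
    · exact ⟨0, by rw [A.proj_of_ne (by omega) hxn, zero_smul]⟩
  | zero => exact ⟨0, by simp⟩
  | add x y _ _ hx hy =>
    obtain ⟨q, hq⟩ := hx
    obtain ⟨q', hq'⟩ := hy
    exact ⟨q + q', by rw [map_add, hq, hq', add_smul]⟩
  | smul c x _ hx =>
    obtain ⟨q, hq⟩ := hx
    exact ⟨c * q, by rw [map_smul, hq, mul_smul]⟩

end CDGA

/-! ### Linear algebra -/

theorem LinearMap.exists_section_on_range {W E : Type*} [AddCommGroup W] [Module ℚ W]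
    [AddCommGroup E] [Module ℚ E] (D : W →ₗ[ℚ] E) :
    ∃ τ : E →ₗ[ℚ] W, ∀ z ∈ LinearMap.range D, D (τ z) = z := by
  obtain ⟨σ, hσ⟩ := D.rangeRestrict.exists_rightInverse_of_surjective D.range_rangeRestrict
  obtain ⟨τ, hτ⟩ := LinearMap.exists_extend σ
  refine ⟨τ, fun z hz => ?_⟩
  have h1 : τ z = σ ⟨z, hz⟩ := LinearMap.congr_fun hτ ⟨z, hz⟩
  have h2 := congrArg Subtype.val (LinearMap.congr_fun hσ ⟨z, hz⟩)
  rw [h1]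
  exact h2

theorem exists_linearMap_of_monotone {E B : Type*} [AddCommGroup E] [Module ℚ E]
    [AddCommGroup B] [Module ℚ B] (G : ℕ → Submodule ℚ E) (hG : Monotone G)
    (f : ℕ → E →ₗ[ℚ] B) (hf : ∀ r, ∀ v ∈ G r, f (r + 1) v = f r v) :
    ∃ g : E →ₗ[ℚ] B, ∀ r, ∀ v ∈ G r, g v = f r v := by
  have hf' : ∀ r s, r ≤ s → ∀ v ∈ G r, f s v = f r v := by
    intro r s hrs
    induction s, hrs using Nat.le_induction with
    | base => exact fun v _ => rfl
    | succ s hrs ih => exact fun v hv => (hf s v (hG hrs hv)).trans (ih v hv)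
  let F : ℕ → E →ₗ.[ℚ] B := fun r => ⟨G r, (f r).domRestrict (G r)⟩
  have hF : Monotone F := by
    intro r s hrs
    refine ⟨hG hrs, ?_⟩
    rintro ⟨x, hx⟩ ⟨y, hy⟩ (rfl : x = y)
    exact (hf' r s hrs x hx).symm
  have hdir : DirectedOn (· ≤ ·) (Set.range F) := by
    rintro _ ⟨r, rfl⟩ _ ⟨s, rfl⟩
    exact ⟨F (max r s), ⟨_, rfl⟩, hF (le_max_left r s), hF (le_max_right r s)⟩
  obtain ⟨g, hg⟩ := LinearMap.exists_extend (LinearPMap.sSup (Set.range F) hdir).toFun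
  refine ⟨g, fun r v hv => ?_⟩
  have hle : F r ≤ LinearPMap.sSup (Set.range F) hdir := LinearPMap.le_sSup hdir ⟨r, rfl⟩
  have h1 := LinearMap.congr_fun hg ⟨v, hle.1 hv⟩
  have h2 := hle.2 (x := ⟨v, hv⟩) (y := ⟨v, hle.1 hv⟩) rfl
  exact h1.trans h2.symm

section Lifting

/-! ### Lifting morphisms from Sullivan algebras -/

open CDGA

theorem CDGA.QuasiIso.exists_cone_section {P A : CDGA} {p : Hom P A} (hp : QuasiIso p) (k : ℤ) :
    ∃ τ : P.carrier × A.carrier →ₗ[ℚ] P.carrier × A.carrier,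
      (∀ e, (τ e).1 ∈ P.grading k ∧ (τ e).2 ∈ A.grading (k - 1)) ∧
      ∀ e₁ ∈ P.grading (k + 1), P.d e₁ = 0 → ∀ e₂ ∈ A.grading k, p.toFun e₁ = A.d e₂ →
        P.d (τ (e₁, e₂)).1 = e₁ ∧ p.toFun (τ (e₁, e₂)).1 + A.d (τ (e₁, e₂)).2 = e₂ := by
  let W : Submodule ℚ (P.carrier × A.carrier) := (P.grading k).prod (A.grading (k - 1))
  let D : P.carrier × A.carrier →ₗ[ℚ] P.carrier × A.carrier :=
    (P.d.comp (LinearMap.fst ℚ _ _)).prod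
      (p.alg.toLinearMap.comp (LinearMap.fst ℚ _ _) + A.d.comp (LinearMap.snd ℚ _ _))
  obtain ⟨τ, hτ⟩ := (D.domRestrict W).exists_section_on_range
  refine ⟨W.subtype.comp τ, fun e => (τ e).2, fun e₁ h₁ hd₁ e₂ h₂ h₁₂ => ?_⟩
  have hmem : (e₁, e₂) ∈ LinearMap.range (D.domRestrict W) := by
    have hc : e₁ ∈ P.cobounds (k + 1) := by
      refine hp.1 _ _ ⟨h₁, hd₁⟩ ?_
      rw [h₁₂]
      exact A.d_mem_cobounds (by simpa using h₂)
    obtain ⟨w, hw, rfl⟩ := P.exists_d_eq_of_mem_cobounds hc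
    rw [add_sub_cancel_right] at hw
    obtain ⟨z, hz, hzb⟩ := hp.2 k (e₂ - p.toFun w)
      ⟨Submodule.sub_mem _ h₂ (p.map_grading _ _ hw), by
        change A.d _ = 0
        rw [map_sub, ← h₁₂, p.map_d, sub_self]⟩
    obtain ⟨b, hb, hbe⟩ := A.exists_d_eq_of_mem_cobounds hzb
    refine ⟨⟨(w + z, b), Submodule.add_mem _ hw hz.1, hb⟩, ?_⟩
    have hz0 : P.d z = 0 := hz.2
    refine Prod.ext ?_ ?_
    · change P.d (w + z) = _
      rw [map_add, hz0, add_zero]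
    · change p.toFun (w + z) + A.d b = _
      rw [hbe, map_add]
      abel
  have h := hτ _ hmem
  exact ⟨congrArg Prod.fst h, congrArg Prod.snd h⟩

namespace SullivanAlgebra

theorem exists_gradedAlgHom (T : SullivanAlgebra) (B : CDGA)
    (f : ∀ k : ℤ, T.V k →ₗ[ℚ] B.carrier) (hf : ∀ (k : ℤ) (v : T.V k), f k v ∈ B.grading k) :
    ∃ χ : T.carrier →ₐ[ℚ] B.carrier, IsGraded (A := T.toCDGA) χ ∧
      ∀ (k : ℤ) (v : T.V k), χ v = f k v := by
  obtain ⟨φ, ⟨h1, h2, h3⟩, -⟩ := T.free B f hf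
  refine ⟨{ φ with commutes' := fun q => ?_ }, h2, h3⟩
  change φ (algebraMap ℚ _ q) = _
  rw [Algebra.algebraMap_eq_smul_one, h1, map_one, Algebra.algebraMap_eq_smul_one]

/-- The set of homogeneous generators. -/
def gens (T : SullivanAlgebra) : Set T.carrier := ⋃ k, (T.V k : Set T.carrier)

theorem adjoin_gens (T : SullivanAlgebra) : Algebra.adjoin ℚ T.gens = ⊤ := by
  rw [eq_top_iff, ← T.gen]
  refine Algebra.adjoin_le fun x hx => ?_
  have h : (⨆ k, T.V k) ≤ Subalgebra.toSubmodule (Algebra.adjoin ℚ T.gens) :=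
    iSup_le fun k v hv => Algebra.subset_adjoin (Set.mem_iUnion.2 ⟨k, hv⟩)
  exact h hx

/-- The filtration by graded subspaces associated with the given filtration. -/
def gfilt (T : SullivanAlgebra) (k : ℤ) (r : ℕ) : Submodule ℚ T.carrier :=
  (T.filt r).map (T.toCDGA.proj k)

theorem proj_mem_V (T : SullivanAlgebra) (k : ℤ) {x : T.carrier} (hx : x ∈ ⨆ k, T.V k) :
    T.toCDGA.proj k x ∈ T.V k := by
  induction hx using Submodule.iSup_induction' with
  | mem i x hx =>
    by_cases h : i = k
    · subst h
      rwa [T.toCDGA.proj_self (T.V_le _ hx)]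
    · rw [T.toCDGA.proj_of_ne h (T.V_le _ hx)]
      exact Submodule.zero_mem _
  | zero => rw [map_zero]; exact Submodule.zero_mem _
  | add x y _ _ hx hy => rw [map_add]; exact Submodule.add_mem _ hx hy

theorem gfilt_le (T : SullivanAlgebra) (k : ℤ) (r : ℕ) : T.gfilt k r ≤ T.V k := by
  rintro _ ⟨x, hx, rfl⟩
  exact T.proj_mem_V k (T.filt_le r hx)

theorem gfilt_mono (T : SullivanAlgebra) (k : ℤ) : Monotone (T.gfilt k) :=
  fun _ _ h => Submodule.map_mono (T.filt_mono h)

theorem exists_mem_gfilt (T : SullivanAlgebra) {k : ℤ} {v : T.carrier} (hv : v ∈ T.V k) :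
    ∃ r, v ∈ T.gfilt k r := by
  have h : v ∈ ⨆ r, T.filt r := T.filt_exhausts (Submodule.mem_iSup_of_mem k hv)
  rw [Submodule.mem_iSup_of_directed _ T.filt_mono.directed_le] at h
  obtain ⟨r, hr⟩ := h
  exact ⟨r, v, hr, T.toCDGA.proj_self (T.V_le k hv)⟩

theorem d_gfilt_zero (T : SullivanAlgebra) {k : ℤ} {v : T.carrier} (hv : v ∈ T.gfilt k 0) :
    T.d v = 0 := by
  obtain ⟨x, hx, rfl⟩ := hv
  rw [← T.toCDGA.proj_d, T.d_filt_zero x hx, map_zero]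

theorem d_gfilt_succ (T : SullivanAlgebra) {k : ℤ} {r : ℕ} {v : T.carrier}
    (hv : v ∈ T.gfilt k (r + 1)) :
    T.d v ∈ Algebra.adjoin ℚ (⋃ j, (T.gfilt j r : Set T.carrier)) := by
  obtain ⟨x, hx, rfl⟩ := hv
  rw [← T.toCDGA.proj_d]
  refine T.toCDGA.proj_mem_adjoin ?_ ?_ _
  · intro y hy
    obtain ⟨j, hj⟩ := Set.mem_iUnion.1 hy
    exact ⟨j, T.V_le j (T.gfilt_le j r hj)⟩
  · refine Algebra.adjoin_le (fun y hy => ?_) (T.d_filt_succ r x hx)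
    exact T.toCDGA.mem_of_forall_proj_mem (Subalgebra.toSubmodule
      (Algebra.adjoin ℚ (⋃ j, (T.gfilt j r : Set T.carrier)))) fun j =>
        Algebra.subset_adjoin (Set.mem_iUnion.2 ⟨j, y, hy, rfl⟩)

/-- `χ` commutes with the differential on `s` and lifts `ψ` through `p` on `s`. -/
def LiftsOn (T : SullivanAlgebra) {P A : CDGA} (p : Hom P A) (ψ : Hom T.toCDGA A)
    (χ : T.carrier →ₐ[ℚ] P.carrier) (s : Set T.carrier) : Prop :=
  ∀ x ∈ s, χ (T.d x) = P.d (χ x) ∧ p.toFun (χ x) = ψ.toFun x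

theorem LiftsOn.adjoin {T : SullivanAlgebra} {P A : CDGA} {p : Hom P A} {ψ : Hom T.toCDGA A}
    {χ : T.carrier →ₐ[ℚ] P.carrier} (hχ : IsGraded (A := T.toCDGA) χ) {s : Set T.carrier}
    (hs : T.LiftsOn p ψ χ s) : T.LiftsOn p ψ χ (Algebra.adjoin ℚ s) := by
  refine fun x hx => ⟨hχ.map_d_of_mem_adjoin (fun y hy => (hs y hy).1) hx, ?_⟩
  have h : Algebra.adjoin ℚ s ≤ AlgHom.equalizer (p.alg.comp χ) ψ.alg :=
    Algebra.adjoin_le fun y hy => (hs y hy).2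
  exact h hx

theorem eq_of_mem_adjoin {R S : Type*} [Ring R] [Algebra ℚ R] [Ring S] [Algebra ℚ S]
    {f g : R →ₐ[ℚ] S} {s : Set R} (hs : ∀ x ∈ s, f x = g x) {x : R}
    (hx : x ∈ Algebra.adjoin ℚ s) : f x = g x :=
  (Algebra.adjoin_le hs : Algebra.adjoin ℚ s ≤ AlgHom.equalizer f g) hx

theorem exists_correction (T : SullivanAlgebra) {P A : CDGA} {p : Hom P A} (hp : QuasiIso p)
    (ψ : Hom T.toCDGA A) {χ : T.carrier →ₐ[ℚ] P.carrier} (hχ : IsGraded (A := T.toCDGA) χ)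
    (l : A.carrier →ₗ[ℚ] P.carrier) (N : Set ℤ)
    (hl : ∀ k ∈ N, ∀ b ∈ A.grading (k - 1), l b ∈ P.grading (k - 1) ∧ p.toFun (l b) = b) :
    ∃ χ' : T.carrier →ₐ[ℚ] P.carrier, IsGraded (A := T.toCDGA) χ' ∧
      (∀ k ∉ N, ∀ v ∈ T.V k, χ' v = χ v) ∧
      (∀ k, ∀ v ∈ T.V k, χ (T.d v) = P.d (χ v) → p.toFun (χ v) = ψ.toFun v → χ' v = χ v) ∧
      ∀ k ∈ N, ∀ v ∈ T.V k, P.d (χ (T.d v)) = 0 → p.toFun (χ (T.d v)) = ψ.toFun (T.d v) →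
        P.d (χ' v) = χ (T.d v) ∧ p.toFun (χ' v) = ψ.toFun v := by
  classical
  choose τ hτ hτ' using fun k => hp.exists_cone_section k
  let e : T.carrier →ₗ[ℚ] P.carrier × A.carrier :=
    (χ.toLinearMap.comp T.d - P.d.comp χ.toLinearMap).prod
      (ψ.alg.toLinearMap - p.alg.toLinearMap.comp χ.toLinearMap)
  have he : ∀ v, e v = (χ (T.d v) - P.d (χ v), ψ.toFun v - p.toFun (χ v)) := fun v => rfl
  let c : ℤ → T.carrier →ₗ[ℚ] P.carrier := fun k =>
    (LinearMap.fst ℚ _ _ + (P.d.comp l).comp (LinearMap.snd ℚ _ _)).comp ((τ k).comp e)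
  have hc : ∀ k v, c k v = (τ k (e v)).1 + P.d (l (τ k (e v)).2) := fun k v => rfl
  have hcN : ∀ k ∈ N, ∀ v, c k v ∈ P.grading k := by
    intro k hk v
    rw [hc]
    refine Submodule.add_mem _ (hτ k _).1 ?_
    have h := P.d_mem (hl k hk _ (hτ k (e v)).2).1
    rwa [sub_add_cancel] at h
  obtain ⟨χ', hχ', hv⟩ := T.exists_gradedAlgHom P
    (fun k => (χ.toLinearMap + if k ∈ N then c k else 0).comp (T.V k).subtype) (by
      intro k v
      have h1 : χ v ∈ P.grading k := hχ k _ (T.V_le k v.2)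
      by_cases hk : k ∈ N
      · simp only [hk, if_true]
        exact Submodule.add_mem _ h1 (hcN k hk v)
      · simpa [hk] using h1)
  have hin : ∀ k ∈ N, ∀ v ∈ T.V k, χ' v = χ v + c k v := by
    intro k hk v hvk
    have h := hv k ⟨v, hvk⟩
    simp only [hk, if_true] at h
    exact h
  have hout : ∀ k ∉ N, ∀ v ∈ T.V k, χ' v = χ v := by
    intro k hk v hvk
    have h := hv k ⟨v, hvk⟩
    simpa [hk] using h
  refine ⟨χ', hχ', hout, fun k v hvk h1 h2 => ?_, fun k hk v hvk h1 h2 => ?_⟩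
  · by_cases hk : k ∈ N
    · have he0 : e v = 0 := by rw [he, h1, h2, sub_self, sub_self, Prod.mk_zero_zero]
      rw [hin k hk v hvk, hc, he0]
      simp
    · exact hout k hk v hvk
  · have hvd := T.V_le k hvk
    obtain ⟨h3, h4⟩ := hτ' k (χ (T.d v) - P.d (χ v))
      (Submodule.sub_mem _ (hχ _ _ (T.d_mem hvd)) (P.d_mem (hχ _ _ hvd)))
      (by rw [map_sub, h1, P.d_sq, sub_zero]) (ψ.toFun v - p.toFun (χ v))
      (Submodule.sub_mem _ (ψ.map_grading _ _ hvd) (p.map_grading _ _ (hχ _ _ hvd)))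
      (by rw [map_sub, map_sub, h2, ψ.map_d, p.map_d])
    rw [← he] at h3 h4
    rw [hin k hk v hvk, hc]
    refine ⟨?_, ?_⟩
    · rw [map_add, map_add, h3, P.d_sq]
      abel
    · rw [map_add, map_add, p.map_d, (hl k hk _ (hτ k (e v)).2).2, h4]
      abel

/-- Passage to the limit in the construction of a lift along an exhaustion of part of the
generators. -/
theorem exists_lift_of_steps (T : SullivanAlgebra) {P A : CDGA} (p : Hom P A)
    (ψ : Hom T.toCDGA A) (G : ℤ → ℕ → Submodule ℚ T.carrier) (hGV : ∀ k r, G k r ≤ T.V k)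
    (hG : ∀ k, Monotone (G k))
    (hGd : ∀ k r, ∀ v ∈ G k r, T.d v ∈ Algebra.adjoin ℚ (⋃ j, (G j r : Set T.carrier)))
    {χ₀ : T.carrier →ₐ[ℚ] P.carrier} (hχ₀ : IsGraded (A := T.toCDGA) χ₀)
    (h₀ : T.LiftsOn p ψ χ₀ (⋃ j, (G j 0 : Set T.carrier)))
    (step : ∀ (r : ℕ) (χ : T.carrier →ₐ[ℚ] P.carrier), IsGraded (A := T.toCDGA) χ →
      T.LiftsOn p ψ χ (⋃ j, (G j r : Set T.carrier)) →
      ∃ χ' : T.carrier →ₐ[ℚ] P.carrier, IsGraded (A := T.toCDGA) χ' ∧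
        T.LiftsOn p ψ χ' (⋃ j, (G j (r + 1) : Set T.carrier)) ∧
        ∀ k, ∀ v ∈ G k r, χ' v = χ v) :
    ∃ χ : T.carrier →ₐ[ℚ] P.carrier, IsGraded (A := T.toCDGA) χ ∧
      (∀ r, T.LiftsOn p ψ χ (⋃ j, (G j r : Set T.carrier))) ∧
      ∀ k, ∀ v ∈ G k 0, χ v = χ₀ v := by
  let St : ℕ → Type := fun r => {χ : T.carrier →ₐ[ℚ] P.carrier //
    IsGraded (A := T.toCDGA) χ ∧ T.LiftsOn p ψ χ (⋃ j, (G j r : Set T.carrier))}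
  have next : ∀ r (χ : St r), ∃ χ' : St (r + 1), ∀ k, ∀ v ∈ G k r, χ'.1 v = χ.1 v := by
    rintro r ⟨χ, h1, h2⟩
    obtain ⟨χ', h1', h2', h3⟩ := step r χ h1 h2
    exact ⟨⟨χ', h1', h2'⟩, h3⟩
  choose nx hnx using next
  let seq : ∀ r, St r := fun r => Nat.rec ⟨χ₀, hχ₀, h₀⟩ nx r
  have hseq : ∀ r k, ∀ v ∈ G k r, (seq (r + 1)).1 v = (seq r).1 v := fun r k v hv =>
    hnx r (seq r) k v hv
  choose g hg using fun k => exists_linearMap_of_monotone (G k) (hG k)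
    (fun r => (seq r).1.toLinearMap) (fun r v hv => hseq r k v hv)
  obtain ⟨χ, hχ, hχv⟩ := T.exists_gradedAlgHom P
    (fun k => ((P.proj k).comp (g k)).comp (T.V k).subtype) (fun k v => P.proj_mem _ _)
  have hχr : ∀ k r, ∀ v ∈ G k r, χ v = (seq r).1 v := by
    intro k r v hv
    refine (hχv k ⟨v, hGV k r hv⟩).trans ?_
    change P.proj k (g k v) = _
    rw [hg k r v hv]
    exact P.proj_self ((seq r).2.1 k v (T.V_le k (hGV k r hv)))
  refine ⟨χ, hχ, fun r x hx => ?_, fun k v hv => hχr k 0 v hv⟩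
  obtain ⟨k, hk⟩ := Set.mem_iUnion.1 hx
  obtain ⟨h1, h2⟩ := (seq r).2.2 x hx
  have h3 : χ (T.d x) = (seq r).1 (T.d x) := by
    refine eq_of_mem_adjoin (fun y hy => ?_) (hGd k r x hk)
    obtain ⟨j, hj⟩ := Set.mem_iUnion.1 hy
    exact hχr j r y hj
  rw [hχr k r x hk, h3]
  exact ⟨h1, h2⟩

/-- Construction of a lift along an exhaustion of part of the generators, where only generators
with degree in `N` are added. -/
theorem exists_lift_along (T : SullivanAlgebra) {P A : CDGA} {p : Hom P A} (hp : QuasiIso p)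
    (ψ : Hom T.toCDGA A) (G : ℤ → ℕ → Submodule ℚ T.carrier) (hGV : ∀ k r, G k r ≤ T.V k)
    (hG : ∀ k, Monotone (G k))
    (hGd₀ : ∀ k, ∀ v ∈ G k 0, T.d v ∈ Algebra.adjoin ℚ (⋃ j, (G j 0 : Set T.carrier)))
    (hGd : ∀ k r, ∀ v ∈ G k (r + 1), T.d v ∈ Algebra.adjoin ℚ (⋃ j, (G j r : Set T.carrier)))
    (N : Set ℤ) (hN : ∀ k ∉ N, ∀ r, G k (r + 1) ≤ G k r)
    (hl : ∀ χ : T.carrier →ₐ[ℚ] P.carrier, IsGraded (A := T.toCDGA) χ →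
      T.LiftsOn p ψ χ (⋃ j, (G j 0 : Set T.carrier)) → ∃ l : A.carrier →ₗ[ℚ] P.carrier,
        ∀ k ∈ N, ∀ b ∈ A.grading (k - 1), l b ∈ P.grading (k - 1) ∧ p.toFun (l b) = b)
    {χ₀ : T.carrier →ₐ[ℚ] P.carrier} (hχ₀ : IsGraded (A := T.toCDGA) χ₀)
    (h₀ : T.LiftsOn p ψ χ₀ (⋃ j, (G j 0 : Set T.carrier))) :
    ∃ χ : T.carrier →ₐ[ℚ] P.carrier, IsGraded (A := T.toCDGA) χ ∧
      (∀ r, T.LiftsOn p ψ χ (⋃ j, (G j r : Set T.carrier))) ∧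
      ∀ k, ∀ v ∈ G k 0, χ v = χ₀ v := by
  have hsub : ∀ {r s}, r ≤ s → (⋃ j, (G j r : Set T.carrier)) ⊆ ⋃ j, (G j s : Set T.carrier) :=
    fun h => Set.iUnion_mono fun j => SetLike.coe_subset_coe.2 (hG j h)
  refine T.exists_lift_of_steps p ψ G hGV hG ?_ hχ₀ h₀ ?_
  · rintro k (_ | r) v hv
    · exact hGd₀ k v hv
    · exact Algebra.adjoin_mono (hsub (Nat.le_succ r)) (hGd k r v hv)
  · intro r χ hχ hr
    obtain ⟨l, hl⟩ := hl χ hχ fun x hx => hr x (hsub (Nat.zero_le r) hx)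
    obtain ⟨χ', hχ', h1, h2, h3⟩ := T.exists_correction hp ψ hχ l N hl
    have hagree : ∀ k, ∀ v ∈ G k r, χ' v = χ v := by
      intro k v hv
      obtain ⟨h4, h5⟩ := hr v (Set.mem_iUnion.2 ⟨k, hv⟩)
      exact h2 k v (hGV k r hv) h4 h5
    refine ⟨χ', hχ', ?_, hagree⟩
    intro x hx
    obtain ⟨k, hk⟩ := Set.mem_iUnion.1 hx
    have hdx := hGd k r x hk
    have hdx' : χ' (T.d x) = χ (T.d x) := by
      refine eq_of_mem_adjoin (fun y hy => ?_) hdx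
      obtain ⟨j, hj⟩ := Set.mem_iUnion.1 hy
      exact hagree j y hj
    rw [hdx']
    by_cases hkN : k ∈ N
    · obtain ⟨h4, h5⟩ := hr.adjoin hχ _ hdx
      rw [T.d_sq, map_zero] at h4
      obtain ⟨h6, h7⟩ := h3 k hkN x (hGV k (r + 1) hk) h4.symm h5
      exact ⟨h6.symm, h7⟩
    · rw [h1 k hkN x (hGV k (r + 1) hk)]
      exact hr x (Set.mem_iUnion.2 ⟨k, hN k hkN r hk⟩)

/-- A lift on generators is a cdga morphism lifting `ψ`. -/
theorem exists_hom_of_liftsOn_gens (T : SullivanAlgebra) {P A : CDGA} {p : Hom P A}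
    {ψ : Hom T.toCDGA A} {χ : T.carrier →ₐ[ℚ] P.carrier} (hχ : IsGraded (A := T.toCDGA) χ)
    (h : T.LiftsOn p ψ χ T.gens) :
    ∃ Χ : Hom T.toCDGA P, ∀ x, p.toFun (Χ.toFun x) = ψ.toFun x := by
  have h' := h.adjoin hχ
  rw [T.adjoin_gens] at h'
  exact ⟨Hom.ofAlgHom χ hχ fun x => (h' x trivial).1, fun x => (h' x trivial).2⟩

/-- Morphisms from a Sullivan algebra lift through surjective quasi-isomorphisms. -/
theorem exists_lift_of_surjective (T : SullivanAlgebra) {P A : CDGA} {p : Hom P A}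
    (hp : QuasiIso p) (hsurj : Function.Surjective p.toFun) (ψ : Hom T.toCDGA A) :
    ∃ χ : Hom T.toCDGA P, ∀ x, p.toFun (χ.toFun x) = ψ.toFun x := by
  obtain ⟨s, hs⟩ := p.alg.toLinearMap.exists_section_on_range
  have hs' : ∀ a, p.toFun (s a) = a := fun a => hs a (hsurj a)
  let l : A.carrier →ₗ[ℚ] P.carrier := A.glift fun i => (P.proj i).comp s
  have hl : ∀ k, ∀ b ∈ A.grading k, l b ∈ P.grading k ∧ p.toFun (l b) = b := by
    intro k b hb
    have hlb : l b = P.proj k (s b) := A.glift_of_mem _ hb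
    rw [hlb]
    refine ⟨P.proj_mem _ _, ?_⟩
    rw [p.map_proj, hs', A.proj_self hb]
  obtain ⟨χ₀, hχ₀, hχ₀v⟩ := T.exists_gradedAlgHom P
    (fun k => (l.comp ψ.alg.toLinearMap).comp (T.V k).subtype)
    (fun k v => (hl k _ (ψ.map_grading _ _ (T.V_le k v.2))).1)
  obtain ⟨G, hG0, hGs⟩ : ∃ G : ℤ → ℕ → Submodule ℚ T.carrier,
      (∀ k, G k 0 = ⊥) ∧ ∀ k r, G k (r + 1) = T.gfilt k r :=
    ⟨fun k r => Nat.casesOn r ⊥ fun r => T.gfilt k r, fun _ => rfl, fun _ _ => rfl⟩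
  have hGV : ∀ k r, G k r ≤ T.V k := by
    rintro k (_ | r)
    · rw [hG0]; exact bot_le
    · rw [hGs]; exact T.gfilt_le k r
  have hGd : ∀ k r, ∀ v ∈ G k (r + 1),
      T.d v ∈ Algebra.adjoin ℚ (⋃ j, (G j r : Set T.carrier)) := by
    rintro k (_ | r) v hv
    · rw [hGs] at hv
      rw [T.d_gfilt_zero hv]
      exact Subalgebra.zero_mem _
    · simp only [hGs] at hv ⊢
      exact T.d_gfilt_succ hv
  have hGm : ∀ k, Monotone (G k) := by
    refine fun k => monotone_nat_of_le_succ ?_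
    rintro (_ | r)
    · rw [hG0]; exact bot_le
    · rw [hGs, hGs]; exact T.gfilt_mono k (Nat.le_succ r)
  have hv0 : ∀ k, ∀ v ∈ G k 0, v = 0 := fun k v hv => by rwa [hG0] at hv
  have h₀ : T.LiftsOn p ψ χ₀ (⋃ j, (G j 0 : Set T.carrier)) := by
    intro x hx
    obtain ⟨j, hj⟩ := Set.mem_iUnion.1 hx
    rw [hv0 j x hj]
    simp only [map_zero, true_and]
  obtain ⟨χ, hχ, hlift, -⟩ := T.exists_lift_along hp ψ G hGV hGm
    (fun k v hv => by
      rw [hv0 k v hv, map_zero]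
      exact Subalgebra.zero_mem _) hGd Set.univ (fun k hk => absurd trivial hk)
    (fun _ _ _ => ⟨l, fun k _ b hb => hl _ b hb⟩) hχ₀ h₀
  refine T.exists_hom_of_liftsOn_gens hχ fun x hx => ?_
  obtain ⟨k, hk⟩ := Set.mem_iUnion.1 hx
  obtain ⟨r, hr⟩ := T.exists_mem_gfilt hk
  exact hlift (r + 1) x (Set.mem_iUnion.2 ⟨k, by rwa [hGs]⟩)

end SullivanAlgebra

end Lifting

section Minimality

/-! ### Minimal Sullivan algebras -/

open CDGA

namespace SullivanAlgebra

theorem V_le_Vtot (T : SullivanAlgebra) (k : ℤ) : T.V k ≤ T.Vtot := le_iSup T.V k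

theorem eq_zero_of_mem_Vtot_of_mem_wedge_two (T : SullivanAlgebra) {u : T.carrier}
    (hu : u ∈ T.Vtot) (hu' : u ∈ T.wedge 2) : u = 0 := by
  obtain ⟨χ, -, hχ⟩ := T.exists_gradedAlgHom T.toCDGA
    (fun k => (2 : ℚ) • (T.V k).subtype)
    (fun k v => Submodule.smul_mem _ _ (T.V_le k v.2))
  let σ : Module.End ℚ T.carrier := χ.toLinearMap
  have hV : T.Vtot ≤ σ.eigenspace 2 :=
    iSup_le fun k v hv => Module.End.mem_eigenspace_iff.2 (hχ k ⟨v, hv⟩)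
  have hW : T.wedge 2 ≤ ⨆ (μ) (_ : μ ≠ 2), σ.eigenspace μ := by
    rw [wedge, Submodule.mul_le]
    intro a ha b hb
    clear hb
    have hb : b ∈ Algebra.adjoin ℚ (T.Vtot : Set T.carrier) := by
      rw [Vtot, T.gen]; trivial
    rw [pow_two] at ha
    induction ha using Submodule.mul_induction_on' with
    | mem_mul_mem a₁ h₁ a₂ h₂ =>
      rw [← Subalgebra.mem_toSubmodule, Algebra.adjoin_eq_span] at hb
      induction hb using Submodule.span_induction with
      | mem b hb =>
        have hl : ∃ l : ℕ, χ b = (2 : ℚ) ^ l • b := by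
          induction hb using Submonoid.closure_induction with
          | mem x hx => exact ⟨1, by rw [pow_one]; exact Module.End.mem_eigenspace_iff.1 (hV hx)⟩
          | one => exact ⟨0, by simp⟩
          | mul x y _ _ hx hy =>
            obtain ⟨l, hl⟩ := hx
            obtain ⟨m, hm⟩ := hy
            exact ⟨l + m, by rw [map_mul, hl, hm, smul_mul_smul_comm, pow_add]⟩
        obtain ⟨l, hl⟩ := hl
        have h₁' : χ a₁ = (2 : ℚ) • a₁ := Module.End.mem_eigenspace_iff.1 (hV h₁)
        have h₂' : χ a₂ = (2 : ℚ) • a₂ := Module.End.mem_eigenspace_iff.1 (hV h₂)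
        have hne : (2 : ℚ) * 2 * 2 ^ l ≠ 2 := by
          have : (1 : ℚ) ≤ 2 ^ l := one_le_pow₀ (by norm_num)
          intro h
          linarith
        refine Submodule.mem_iSup_of_mem _ (Submodule.mem_iSup_of_mem hne ?_)
        rw [Module.End.mem_eigenspace_iff]
        change χ (a₁ * a₂ * b) = _
        rw [map_mul, map_mul, h₁', h₂', hl, smul_mul_smul_comm, smul_mul_smul_comm]
      | zero => rw [mul_zero]; exact Submodule.zero_mem _
      | add x y _ _ hx hy => rw [mul_add]; exact Submodule.add_mem _ hx hy
      | smul q x _ hx => rw [mul_smul_comm]; exact Submodule.smul_mem _ _ hx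
    | add x _ y _ hx hy => rw [add_mul]; exact Submodule.add_mem _ hx hy
  exact Submodule.disjoint_def.1 (σ.eigenspaces_iSupIndep 2) u (hV hu) (hW hu')

theorem exists_grading_of_mem_V (T : SullivanAlgebra) {j : ℤ} {x : T.carrier} (hx : x ∈ T.V j) :
    ∃ i, 1 ≤ i ∧ x ∈ T.grading i := by
  by_cases h : 1 ≤ j
  · exact ⟨j, h, T.V_le j hx⟩
  · rw [T.V_nonpos j (by lia)] at hx
    have hx0 : x = 0 := hx
    exact ⟨1, le_rfl, hx0 ▸ Submodule.zero_mem _⟩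

theorem mem_adjoin_of_mem_grading (T : SullivanAlgebra) {m n : ℤ} (hmn : m < n) {x : T.carrier}
    (hx : x ∈ T.grading m) :
    x ∈ Algebra.adjoin ℚ (⋃ j, ⋃ (_ : j < n), (T.V j : Set T.carrier)) := by
  have hxg : x ∈ Algebra.adjoin ℚ T.gens := by rw [T.adjoin_gens]; trivial
  have hs : ∀ x ∈ T.gens, ∃ i, 1 ≤ i ∧ x ∈ T.grading i := fun y hy => by
    obtain ⟨j, hj⟩ := Set.mem_iUnion.1 hy
    exact T.exists_grading_of_mem_V hj
  have key : ∀ y ∈ T.gens, ∀ i < n, y ∈ T.grading i →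
      y ∈ Algebra.adjoin ℚ (⋃ j, ⋃ (_ : j < n), (T.V j : Set T.carrier)) := by
    intro y hy i hi hyi
    obtain ⟨j, hj⟩ := Set.mem_iUnion.1 hy
    by_cases h : j = i
    · subst h
      exact Algebra.subset_adjoin (Set.mem_iUnion₂.2 ⟨j, hi, hj⟩)
    · rw [T.eq_zero_of_mem_of_mem h (T.V_le j hj) hyi]
      exact Subalgebra.zero_mem _
  by_cases hm : 1 ≤ m
  · obtain ⟨u, hu, y, hy, -, rfl⟩ := T.mem_adjoin_split hs hm hxg hx
    refine Subalgebra.add_mem _ ?_ (Algebra.adjoin_le ?_ hy)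
    · rw [← Subalgebra.mem_toSubmodule]
      exact Submodule.span_le.2 (fun y hy => key y hy.1 m hmn hy.2) hu
    · rintro y ⟨hy, i, hi, hyi⟩
      exact key y hy i (hi.trans hmn) hyi
  · obtain ⟨q, rfl⟩ := T.mem_span_one_of_mem_adjoin hs (by lia) hxg hx
    exact Subalgebra.smul_mem _ (Subalgebra.one_mem _) q

end SullivanAlgebra

namespace MinimalSullivanAlgebra

theorem d_mem_adjoin (S : MinimalSullivanAlgebra) {n : ℤ} (hn : 1 ≤ n) {r : ℕ} {v : S.carrier}
    (hv : v ∈ S.gfilt n (r + 1)) :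
    S.d v ∈ Algebra.adjoin ℚ
      ((⋃ j, ⋃ (_ : j < n), (S.V j : Set S.carrier)) ∪ (S.gfilt n r : Set S.carrier)) := by
  have hvV := S.gfilt_le n (r + 1) hv
  obtain ⟨u, hu, y, hy, hy2, hdv⟩ := S.mem_adjoin_split (s := ⋃ j, (S.gfilt j r : Set S.carrier))
    (fun x hx => by
      obtain ⟨j, hj⟩ := Set.mem_iUnion.1 hx
      exact S.exists_grading_of_mem_V (S.gfilt_le j r hj)) (m := n + 1) (by lia)
    (S.d_gfilt_succ hv) (S.d_mem (S.V_le n hvV))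
  have hs : Submodule.span ℚ (⋃ j, (S.gfilt j r : Set S.carrier)) ≤ S.Vtot := by
    refine Submodule.span_le.2 fun x hx => ?_
    obtain ⟨j, hj⟩ := Set.mem_iUnion.1 hx
    exact S.V_le_Vtot j (S.gfilt_le j r hj)
  have hu0 : u = 0 := by
    refine S.eq_zero_of_mem_Vtot_of_mem_wedge_two
      (hs (Submodule.span_mono Set.inter_subset_left hu)) ?_
    rw [← add_sub_cancel_right u y, ← hdv]
    refine Submodule.sub_mem _ (S.minimal v (S.V_le_Vtot n hvV)) ?_
    exact mul_le_mul' (pow_le_pow_left' hs 2) le_rfl hy2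
  rw [hdv, hu0, zero_add]
  refine Algebra.adjoin_le ?_ hy
  rintro x ⟨hx, i, hi, hxi⟩
  obtain ⟨j, hj⟩ := Set.mem_iUnion.1 hx
  have hjV := S.gfilt_le j r hj
  by_cases h : j = i
  · subst h
    refine Algebra.subset_adjoin ?_
    by_cases hjn : j = n
    · subst hjn
      exact Or.inr hj
    · exact Or.inl (Set.mem_iUnion₂.2 ⟨j, by lia, hjV⟩)
  · rw [S.eq_zero_of_mem_of_mem h (S.V_le j hjV) hxi]
    exact Subalgebra.zero_mem _

theorem d_mem_adjoin_lt (S : MinimalSullivanAlgebra) {k n : ℤ} (hkn : k < n) {v : S.carrier}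
    (hv : v ∈ S.V k) :
    S.d v ∈ Algebra.adjoin ℚ (⋃ j, ⋃ (_ : j < n), (S.V j : Set S.carrier)) := by
  by_cases hk : 1 ≤ k
  · obtain ⟨r, hr⟩ := S.exists_mem_gfilt hv
    refine Algebra.adjoin_mono ?_ (S.d_mem_adjoin hk (S.gfilt_mono k (Nat.le_succ r) hr))
    refine Set.union_subset ?_ fun x hx => Set.mem_iUnion₂.2 ⟨k, hkn, S.gfilt_le k r hx⟩
    exact Set.iUnion₂_subset fun j hj x hx => Set.mem_iUnion₂.2 ⟨j, hj.trans hkn, hx⟩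
  · rw [S.V_nonpos k (by lia)] at hv
    have hv0 : v = 0 := hv
    rw [hv0, map_zero]
    exact Subalgebra.zero_mem _

theorem exists_section_step (S : MinimalSullivanAlgebra) {P : CDGA} {p : Hom P S.toCDGA}
    (hp : QuasiIso p) {n : ℤ} (hn : 1 ≤ n) {χ : S.carrier →ₐ[ℚ] P.carrier}
    (hχ : IsGraded (A := S.toCDGA) χ)
    (h : S.LiftsOn p (Hom.id _) χ (⋃ j, ⋃ (_ : j < n), (S.V j : Set S.carrier))) :
    ∃ χ' : S.carrier →ₐ[ℚ] P.carrier, IsGraded (A := S.toCDGA) χ' ∧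
      S.LiftsOn p (Hom.id _) χ' (⋃ j, ⋃ (_ : j ≤ n), (S.V j : Set S.carrier)) ∧
      ∀ j < n, ∀ v ∈ S.V j, χ' v = χ v := by
  classical
  obtain ⟨F, hF0, hFs⟩ : ∃ F : ℕ → Submodule ℚ S.carrier,
      F 0 = ⊥ ∧ ∀ r, F (r + 1) = S.gfilt n r :=
    ⟨fun r => Nat.casesOn r ⊥ fun r => S.gfilt n r, rfl, fun _ => rfl⟩
  let G : ℤ → ℕ → Submodule ℚ S.carrier := fun k r =>
    if k < n then S.V k else if k = n then F r else ⊥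
  have hGlt : ∀ k < n, ∀ r, G k r = S.V k := fun k hk r => if_pos hk
  have hGn : ∀ r, G n r = F r := fun r => by simp [G]
  have hGgt : ∀ k, ¬ k < n → k ≠ n → ∀ r, G k r = ⊥ := fun k h1 h2 r => by simp [G, h1, h2]
  have hFm : Monotone F := by
    refine monotone_nat_of_le_succ ?_
    rintro (_ | r)
    · rw [hF0]; exact bot_le
    · rw [hFs, hFs]; exact S.gfilt_mono n (Nat.le_succ r)
  have hU : ∀ r, (⋃ j, (G j r : Set S.carrier)) =
      (⋃ j, ⋃ (_ : j < n), (S.V j : Set S.carrier)) ∪ (F r : Set S.carrier) := by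
    intro r
    ext x
    simp only [Set.mem_iUnion, Set.mem_union, SetLike.mem_coe]
    constructor
    · rintro ⟨j, hj⟩
      by_cases h1 : j < n
      · rw [hGlt j h1] at hj
        exact Or.inl ⟨j, h1, hj⟩
      · by_cases h2 : j = n
        · subst h2
          rw [hGn] at hj
          exact Or.inr hj
        · rw [hGgt j h1 h2] at hj
          have hx0 : x = 0 := hj
          rw [hx0]
          exact Or.inr (Submodule.zero_mem _)
    · rintro (⟨j, h1, hj⟩ | hx)
      · exact ⟨j, by rwa [hGlt j h1]⟩
      · exact ⟨n, by rwa [hGn]⟩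
  have hU0 : (⋃ j, (G j 0 : Set S.carrier)) ⊆
      (⋃ j, ⋃ (_ : j < n), (S.V j : Set S.carrier)) ∪ {0} := by
    rw [hU 0, hF0]
    exact Set.union_subset_union_right _ fun x hx => hx
  have hLift0 : ∀ χ : S.carrier →ₐ[ℚ] P.carrier,
      S.LiftsOn p (Hom.id _) χ (⋃ j, ⋃ (_ : j < n), (S.V j : Set S.carrier)) →
      S.LiftsOn p (Hom.id _) χ (⋃ j, (G j 0 : Set S.carrier)) := by
    intro χ hχ x hx
    rcases hU0 hx with hx | rfl
    · exact hχ x hx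
    · simp only [map_zero, true_and]
  have hdlt : ∀ k < n, ∀ r, ∀ v ∈ S.V k,
      S.d v ∈ Algebra.adjoin ℚ (⋃ j, (G j r : Set S.carrier)) := by
    intro k hk r v hv
    rw [hU]
    exact Algebra.adjoin_mono Set.subset_union_left (S.d_mem_adjoin_lt hk hv)
  obtain ⟨χ', hχ', h1, h2⟩ := S.exists_lift_along hp (Hom.id _) G
    (fun k r => by
      by_cases h1 : k < n
      · rw [hGlt k h1]
      · by_cases h2 : k = n
        · subst h2
          rw [hGn]
          rcases r with _ | r
          · rw [hF0]; exact bot_le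
          · rw [hFs]; exact S.gfilt_le k r
        · rw [hGgt k h1 h2]
          exact bot_le)
    (fun k r s hrs => by
      simp only [G]
      split_ifs
      · exact le_rfl
      · exact hFm hrs
      · exact le_rfl)
    (fun k v hv => by
      rcases hU0 (Set.mem_iUnion.2 ⟨k, hv⟩) with hx | rfl
      · obtain ⟨j, hj, hvj⟩ := Set.mem_iUnion₂.1 hx
        exact hdlt j hj 0 v hvj
      · rw [map_zero]
        exact Subalgebra.zero_mem _)
    (fun k r v hv => by
      by_cases h1 : k < n
      · rw [hGlt k h1] at hv
        exact hdlt k h1 r v hv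
      · by_cases h2 : k = n
        · subst h2
          rw [hGn] at hv
          rw [hFs] at hv
          rcases r with _ | r
          · rw [S.d_gfilt_zero hv]
            exact Subalgebra.zero_mem _
          · rw [hU, hFs]
            exact S.d_mem_adjoin hn hv
        · rw [hGgt k h1 h2] at hv
          have hv0 : v = 0 := hv
          rw [hv0, map_zero]
          exact Subalgebra.zero_mem _)
    {n}
    (fun k hk r => by
      simp only [G, if_neg (show k ≠ n from hk)]
      exact le_rfl)
    (fun χ hχ hl => by
      refine ⟨χ.toLinearMap, fun k hk b hb => ⟨hχ _ b hb, ?_⟩⟩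
      have hk' : k = n := hk
      subst hk'
      have hmem := S.mem_adjoin_of_mem_grading (show k - 1 < k by lia) hb
      refine (hl.adjoin hχ b (Algebra.adjoin_mono ?_ hmem)).2
      rw [hU]
      exact Set.subset_union_left) hχ (hLift0 χ h)
  refine ⟨χ', hχ', fun x hx => ?_, fun j hj v hv => h2 j v (by rwa [hGlt j hj])⟩
  obtain ⟨j, hj, hxj⟩ := Set.mem_iUnion₂.1 hx
  rcases hj.lt_or_eq with hj | rfl
  · exact h1 0 x (Set.mem_iUnion.2 ⟨j, by rwa [hGlt j hj]⟩)
  · obtain ⟨r, hr⟩ := S.exists_mem_gfilt hxj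
    exact h1 (r + 1) x (Set.mem_iUnion.2 ⟨j, by rwa [hGn, hFs]⟩)

/-- Every quasi-isomorphism onto a minimal Sullivan algebra has a section. -/
theorem exists_section (S : MinimalSullivanAlgebra) {P : CDGA} {p : Hom P S.toCDGA}
    (hp : QuasiIso p) : ∃ α : Hom S.toCDGA P, ∀ x, p.toFun (α.toFun x) = x := by
  classical
  let G : ℤ → ℕ → Submodule ℚ S.carrier := fun k r => if k ≤ r then S.V k else ⊥
  have hGle : ∀ (k : ℤ) (r : ℕ), k ≤ r → G k r = S.V k := fun k r hk => if_pos hk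
  have hGgt : ∀ (k : ℤ) (r : ℕ), ¬ k ≤ r → G k r = ⊥ := fun k r hk => if_neg hk
  have hU : ∀ (r : ℕ) (n : ℤ), n = r + 1 → ∀ x, x ∈ (⋃ j, (G j r : Set S.carrier)) →
      x = 0 ∨ x ∈ ⋃ j, ⋃ (_ : j < n), (S.V j : Set S.carrier) := by
    rintro r n rfl x hx
    obtain ⟨j, hj⟩ := Set.mem_iUnion.1 hx
    by_cases h : j ≤ r
    · rw [hGle j r h] at hj
      exact Or.inr (Set.mem_iUnion₂.2 ⟨j, by lia, hj⟩)
    · rw [hGgt j r h] at hj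
      exact Or.inl hj
  have hU' : ∀ (r : ℕ), (⋃ j, ⋃ (_ : j < (r : ℤ) + 1), (S.V j : Set S.carrier)) ⊆
      ⋃ j, (G j r : Set S.carrier) := fun r =>
    Set.iUnion₂_subset fun j hj x hx =>
      Set.mem_iUnion.2 ⟨j, by rwa [hGle j r (by lia)]⟩
  obtain ⟨χ₀, hχ₀, -⟩ := S.exists_gradedAlgHom P (fun _ => 0) fun k _ => Submodule.zero_mem _
  obtain ⟨χ, hχ, h1, -⟩ := S.exists_lift_of_steps p (Hom.id _) G
    (fun k r => by
      simp only [G]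
      split_ifs
      · exact le_rfl
      · exact bot_le)
    (fun k r s hrs => by
      by_cases h : k ≤ r
      · rw [hGle k r h, hGle k s (by lia)]
      · rw [hGgt k r h]
        exact bot_le)
    (fun k r v hv => by
      rcases hU r _ rfl v (Set.mem_iUnion.2 ⟨k, hv⟩) with rfl | hx
      · rw [map_zero]
        exact Subalgebra.zero_mem _
      · obtain ⟨j, hj, hvj⟩ := Set.mem_iUnion₂.1 hx
        exact Algebra.adjoin_mono (hU' r) (S.d_mem_adjoin_lt hj hvj))
    hχ₀
    (fun x hx => by
      have hx0 : x = 0 := by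
        obtain ⟨j, hj⟩ := Set.mem_iUnion.1 hx
        by_cases h : j ≤ (0 : ℕ)
        · rw [hGle j 0 h, S.V_nonpos j (by simpa using h)] at hj
          exact hj
        · rw [hGgt j 0 h] at hj
          exact hj
      rw [hx0]
      simp only [map_zero, true_and])
    (fun r χ hχ hl => by
      obtain ⟨χ', hχ', h1, h2⟩ := S.exists_section_step hp (n := (r : ℤ) + 1) (by lia) hχ
        fun x hx => hl x (hU' r hx)
      refine ⟨χ', hχ', fun x hx => ?_, fun k v hv => ?_⟩
      · rcases hU (r + 1) _ rfl x hx with rfl | hx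
        · simp only [map_zero, true_and]
        · obtain ⟨j, hj, hxj⟩ := Set.mem_iUnion₂.1 hx
          exact h1 x (Set.mem_iUnion₂.2 ⟨j, by push_cast at hj; lia, hxj⟩)
      · rcases hU r _ rfl v (Set.mem_iUnion.2 ⟨k, hv⟩) with rfl | hx
        · simp only [map_zero]
        · obtain ⟨j, hj, hxj⟩ := Set.mem_iUnion₂.1 hx
          exact h2 j hj v hxj)
  refine S.exists_hom_of_liftsOn_gens (p := p) (ψ := Hom.id _) hχ fun x hx => ?_
  obtain ⟨k, hk⟩ := Set.mem_iUnion.1 hx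
  exact h1 k.toNat x (Set.mem_iUnion.2 ⟨k, by rwa [hGle k _ (by lia)]⟩)

/-- A quasi-isomorphism between minimal Sullivan algebras is an isomorphism. -/
theorem isIso_of_quasiIso {S T : MinimalSullivanAlgebra} {χ : Hom T.toCDGA S.toCDGA}
    (hχ : QuasiIso χ) : IsIso χ := by
  obtain ⟨α, hα⟩ := S.exists_section hχ
  have hαq : QuasiIso α := by
    refine hχ.of_comp_left ?_
    have h : χ.comp α = Hom.id _ := by
      have h' : (χ.comp α).toFun = (Hom.id S.toCDGA).toFun := RingHom.ext hα
      cases hc : χ.comp α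
      rw [hc] at h'
      cases h'
      rfl
    rw [h]
    exact QuasiIso.id _
  obtain ⟨β, hβ⟩ := T.exists_section hαq
  refine ⟨α, fun x => ?_, hα⟩
  have h : χ.toFun x = β.toFun x := by
    have h2 := hα (β.toFun x)
    rwa [hβ] at h2
  rw [h, hβ]

end MinimalSullivanAlgebra

end Minimality

/-! ### Products and subalgebras of cdga's -/

namespace CDGA

theorem indep_of_projections {M : Type*} [AddCommGroup M] [Module ℚ M] (gr : ℤ → Submodule ℚ M)
    (π : ℤ → M →ₗ[ℚ] M) (h₁ : ∀ i, ∀ x ∈ gr i, π i x = x)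
    (h₂ : ∀ i j, i ≠ j → ∀ x ∈ gr i, π j x = 0) (f : ℤ →₀ M) (hf : ∀ i, f i ∈ gr i)
    (h : (f.sum fun _ x => x) = 0) : f = 0 := by
  ext j
  have h' := congrArg (π j) h
  rw [map_zero, map_finsuppSum, Finsupp.sum, Finset.sum_eq_single j] at h'
  · rwa [h₁ j _ (hf j)] at h'
  · exact fun i _ hij => h₂ i j hij _ (hf i)
  · intro hj
    rw [Finsupp.notMem_support_iff.1 hj, map_zero]

/-- The product of two cdga's. -/
def prod (A B : CDGA) : CDGA where
  carrier := A.carrier × B.carrier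
  grading k := (A.grading k).prod (B.grading k)
  spanning := by
    rw [eq_top_iff]
    rintro ⟨a, b⟩ -
    have ha : ((a, 0) : A.carrier × B.carrier) ∈ ⨆ k, (A.grading k).prod (B.grading k) := by
      induction a using A.homogeneous_induction with
      | hom i a ha => exact Submodule.mem_iSup_of_mem i ⟨ha, Submodule.zero_mem _⟩
      | add x y hx hy => simpa using Submodule.add_mem _ hx hy
    have hb : ((0, b) : A.carrier × B.carrier) ∈ ⨆ k, (A.grading k).prod (B.grading k) := by
      induction b using B.homogeneous_induction with
      | hom i b hb => exact Submodule.mem_iSup_of_mem i ⟨Submodule.zero_mem _, hb⟩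
      | add x y hx hy => simpa using Submodule.add_mem _ hx hy
    simpa using Submodule.add_mem _ ha hb
  indep := indep_of_projections _ (fun k => (A.proj k).prodMap (B.proj k))
    (fun i x hx => Prod.ext (A.proj_self hx.1) (B.proj_self hx.2))
    (fun i j hij x hx => Prod.ext (A.proj_of_ne hij hx.1) (B.proj_of_ne hij hx.2))
  one_mem := ⟨A.one_mem, B.one_mem⟩
  mul_mem ha hb := ⟨A.mul_mem ha.1 hb.1, B.mul_mem ha.2 hb.2⟩
  gcomm ha hb := Prod.ext (A.gcomm ha.1 hb.1) (B.gcomm ha.2 hb.2)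
  d := A.d.prodMap B.d
  d_mem ha := ⟨A.d_mem ha.1, B.d_mem ha.2⟩
  d_sq a := Prod.ext (A.d_sq _) (B.d_sq _)
  leibniz ha b := Prod.ext (A.leibniz ha.1 _) (B.leibniz ha.2 _)

/-- The projections from a product. -/
def Hom.fst (A B : CDGA) : Hom (A.prod B) A where
  toFun := RingHom.fst _ _
  map_smul _ _ := rfl
  map_grading _ _ h := h.1
  map_d _ := rfl

/-- The second projection of a product. -/
def Hom.snd (A B : CDGA) : Hom (A.prod B) B where
  toFun := RingHom.snd _ _
  map_smul _ _ := rfl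
  map_grading _ _ h := h.2
  map_d _ := rfl

/-- The cdga structure on a graded subalgebra stable under the differential. -/
def sub (A : CDGA) (B : Subalgebra ℚ A.carrier) (hp : ∀ k, ∀ x ∈ B, A.proj k x ∈ B)
    (hd : ∀ x ∈ B, A.d x ∈ B) : CDGA where
  carrier := B
  grading k := (A.grading k).comap B.val.toLinearMap
  spanning := by
    rw [eq_top_iff]
    rintro x -
    obtain ⟨s, hs⟩ := A.exists_sum_proj_eq x.1
    have hx : x = ∑ k ∈ s, (⟨A.proj k x.1, hp k _ x.2⟩ : B) := by
      apply Subtype.ext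
      rw [AddSubmonoidClass.coe_finsetSum]
      exact (hs s subset_rfl).symm
    rw [hx]
    exact Submodule.sum_mem _ fun k _ => Submodule.mem_iSup_of_mem k (A.proj_mem k x.1)
  indep := indep_of_projections _
    (fun k => (A.proj k).restrict (p := Subalgebra.toSubmodule B) (q := Subalgebra.toSubmodule B)
      (hp k))
    (fun i x hx => Subtype.ext (A.proj_self hx))
    (fun i j hij x hx => Subtype.ext (A.proj_of_ne hij hx))
  one_mem := A.one_mem
  mul_mem ha hb := A.mul_mem ha hb
  gcomm ha hb := Subtype.ext (A.gcomm ha hb)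
  d := A.d.restrict (p := Subalgebra.toSubmodule B) (q := Subalgebra.toSubmodule B) hd
  d_mem ha := A.d_mem ha
  d_sq a := Subtype.ext (A.d_sq a.1)
  leibniz ha b := Subtype.ext (A.leibniz ha b.1)

/-- The inclusion of a sub-cdga. -/
def Hom.ofSub (A : CDGA) (B : Subalgebra ℚ A.carrier) (hp : ∀ k, ∀ x ∈ B, A.proj k x ∈ B)
    (hd : ∀ x ∈ B, A.d x ∈ B) : Hom (A.sub B hp hd) A where
  toFun := B.val.toRingHom
  map_smul _ _ := rfl
  map_grading _ _ h := h
  map_d _ := rfl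

/-- Morphisms factoring through a sub-cdga. -/
def Hom.codRestrict {A C : CDGA} (f : Hom C A) (B : Subalgebra ℚ A.carrier)
    (hp : ∀ k, ∀ x ∈ B, A.proj k x ∈ B) (hd : ∀ x ∈ B, A.d x ∈ B) (hf : ∀ x, f.toFun x ∈ B) :
    Hom C (A.sub B hp hd) where
  toFun := f.toFun.codRestrict B hf
  map_smul q x := Subtype.ext (f.map_smul q x)
  map_grading i x h := f.map_grading i x h
  map_d x := Subtype.ext (f.map_d x)

end CDGA

/-! ### The cylinder -/

namespace Polynomial

variable {R S : Type*} [Ring R] [Algebra ℚ R] [Ring S] [Algebra ℚ S]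

/-- Application of a linear map to the coefficients of a polynomial. -/
def mapCoeff (f : R →ₗ[ℚ] S) :
    R[X] →ₗ[ℚ] S[X] :=
  lsum fun k => (monomial k).restrictScalars ℚ ∘ₗ f

theorem mapCoeff_monomial (f : R →ₗ[ℚ] S) (k : ℕ) (a : R) :
    mapCoeff f (monomial k a) = monomial k (f a) := by
  simp [mapCoeff, lsum]

theorem coeff_mapCoeff (f : R →ₗ[ℚ] S) (p : R[X]) (k : ℕ) :
    (mapCoeff f p).coeff k = f (p.coeff k) := by
  induction p using Polynomial.induction_on' with
  | add p q hp hq => simp only [map_add, coeff_add, hp, hq]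
  | monomial n a =>
    rw [mapCoeff_monomial, coeff_monomial, coeff_monomial]
    split_ifs <;> simp

theorem derivative_mapCoeff (f : R →ₗ[ℚ] S) (p : R[X]) :
    derivative (mapCoeff f p) = mapCoeff f (derivative p) := by
  ext k
  simp only [coeff_derivative, coeff_mapCoeff]
  norm_cast
  rw [← nsmul_eq_mul', ← nsmul_eq_mul', map_nsmul]

/-- The primitive without constant term of a polynomial. -/
def primitive : R[X] →ₗ[ℚ] R[X] :=
  lsum fun k => ((k : ℚ) + 1)⁻¹ • (monomial (k + 1)).restrictScalars ℚ

theorem primitive_monomial (k : ℕ) (a : R) :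
    primitive (monomial k a) = monomial (k + 1) (((k : ℚ) + 1)⁻¹ • a) := by
  rw [primitive, lsum_apply, sum_monomial_index]
  · rw [LinearMap.smul_apply, LinearMap.restrictScalars_apply, smul_monomial]
  · exact LinearMap.map_zero _

theorem derivative_primitive (p : R[X]) : derivative (primitive p) = p := by
  induction p using Polynomial.induction_on' with
  | add p q hp hq => simp only [map_add, hp, hq]
  | monomial n a =>
    rw [primitive_monomial, derivative_monomial, Nat.add_sub_cancel, ← nsmul_eq_mul',
      ← Nat.cast_smul_eq_nsmul ℚ, smul_smul]
    push_cast
    rw [mul_inv_cancel₀ (by positivity), one_smul]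

theorem coeff_zero_primitive (p : R[X]) : (primitive p).coeff 0 = 0 := by
  induction p using Polynomial.induction_on' with
  | add p q hp hq => simp only [map_add, coeff_add, hp, hq, add_zero]
  | monomial n a => rw [primitive_monomial, coeff_monomial, if_neg (Nat.succ_ne_zero n)]

theorem primitive_mapCoeff (f : R →ₗ[ℚ] S) (p : R[X]) :
    primitive (mapCoeff f p) = mapCoeff f (primitive p) := by
  induction p using Polynomial.induction_on' with
  | add p q hp hq => simp only [map_add, hp, hq]
  | monomial n a => simp only [primitive_monomial, mapCoeff_monomial, map_smul]

theorem primitive_derivative (p : R[X]) (hp : p.coeff 0 = 0) : primitive (derivative p) = p := by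
  have h : ∀ p : R[X], primitive (derivative p) = p - C (p.coeff 0) := by
    intro p
    induction p using Polynomial.induction_on' with
    | add p q hp hq =>
      simp only [map_add, coeff_add, hp, hq]
      abel
    | monomial n a =>
      rcases n with _ | n
      · simp
      · rw [derivative_monomial, Nat.add_sub_cancel, primitive_monomial, ← nsmul_eq_mul',
          ← Nat.cast_smul_eq_nsmul ℚ, smul_smul]
        push_cast
        rw [inv_mul_cancel₀ (by positivity), one_smul]
        simp
  rw [h, hp, map_zero, sub_zero]

theorem coeff_primitive_mem (W : Submodule ℚ R) {p : R[X]} (hp : ∀ k, p.coeff k ∈ W) (k : ℕ) :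
    (primitive p).coeff k ∈ W := by
  rcases k with _ | k
  · rw [coeff_zero_primitive]
    exact Submodule.zero_mem _
  · have h := congrArg (fun q => coeff q k) (derivative_primitive p)
    simp only [coeff_derivative] at h
    have h2 : (primitive p).coeff (k + 1) = ((k : ℚ) + 1)⁻¹ • p.coeff k := by
      rw [← h]
      norm_cast
      rw [← nsmul_eq_mul', ← Nat.cast_smul_eq_nsmul ℚ, smul_smul, inv_mul_cancel₀ (by positivity),
        one_smul]
    rw [h2]
    exact Submodule.smul_mem _ _ (hp k)

theorem mapCoeff_mul_of_forall {f g h : R →ₗ[ℚ] S} {g' h' : R →ₗ[ℚ] S}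
    (H : ∀ a b, f (a * b) = g a * h b + g' a * h' b) (p q : R[X]) :
    mapCoeff f (p * q) = mapCoeff g p * mapCoeff h q + mapCoeff g' p * mapCoeff h' q := by
  induction p using Polynomial.induction_on' with
  | add p₁ p₂ h₁ h₂ => simp only [map_add, add_mul, h₁, h₂]; abel
  | monomial m a =>
    induction q using Polynomial.induction_on' with
    | add q₁ q₂ h₁ h₂ => simp only [map_add, mul_add, h₁, h₂]; abel
    | monomial n b =>
      simp only [mapCoeff_monomial, monomial_mul_monomial, H, map_add]

end Polynomial

namespace CDGA

open Polynomial

theorem mapCoeff_sgn_mul (A : CDGA) (p q : A.carrier[X]) :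
    mapCoeff A.sgn (p * q) = mapCoeff A.sgn p * mapCoeff A.sgn q := by
  have h := mapCoeff_mul_of_forall (f := A.sgn) (g := A.sgn) (h := A.sgn) (g' := 0) (h' := A.sgn)
    (fun a b => by rw [A.sgn_mul]; simp) p q
  have h0 : mapCoeff (0 : A.carrier →ₗ[ℚ] A.carrier) p = 0 := by
    ext k
    simp [coeff_mapCoeff]
  rwa [h0, zero_mul, add_zero] at h

theorem mapCoeff_d_mul (A : CDGA) (p q : A.carrier[X]) :
    mapCoeff A.d (p * q) = mapCoeff A.d p * q + mapCoeff A.sgn p * mapCoeff A.d q := by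
  have h := mapCoeff_mul_of_forall (f := A.d) (g := A.d) (h := LinearMap.id) (g' := A.sgn)
    (h' := A.d) (fun a b => A.d_mul a b) p q
  have h0 : mapCoeff (LinearMap.id : A.carrier →ₗ[ℚ] A.carrier) q = q := by
    ext k
    simp [coeff_mapCoeff]
  rwa [h0] at h

theorem mapCoeff_sgn_one (A : CDGA) : mapCoeff A.sgn 1 = 1 := by
  rw [← C_1, ← monomial_zero_left, mapCoeff_monomial, A.sgn_one]

theorem mapCoeff_sgn_of_mem (A : CDGA) {n : ℤ} {p : A.carrier[X]}
    (hp : ∀ k, p.coeff k ∈ A.grading n) : mapCoeff A.sgn p = ((-1 : ℚ) ^ n) • p := by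
  ext k
  rw [coeff_mapCoeff, A.sgn_of_mem (hp k), coeff_smul]

theorem mapCoeff_sgn_sgn (A : CDGA) (p : A.carrier[X]) :
    mapCoeff A.sgn (mapCoeff A.sgn p) = p := by
  ext k
  rw [coeff_mapCoeff, coeff_mapCoeff, A.sgn_sgn]

theorem mapCoeff_d_sgn (A : CDGA) (p : A.carrier[X]) :
    mapCoeff A.d (mapCoeff A.sgn p) = - mapCoeff A.sgn (mapCoeff A.d p) := by
  ext k
  simp only [coeff_mapCoeff, coeff_neg, A.d_sgn]

theorem mapCoeff_d_d (A : CDGA) (p : A.carrier[X]) : mapCoeff A.d (mapCoeff A.d p) = 0 := by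
  ext k
  simp only [coeff_mapCoeff, A.d_sq, coeff_zero]

theorem coeff_mul_mem (A : CDGA) {m n : ℤ} {p q : A.carrier[X]}
    (hp : ∀ k, p.coeff k ∈ A.grading m) (hq : ∀ k, q.coeff k ∈ A.grading n) (k : ℕ) :
    (p * q).coeff k ∈ A.grading (m + n) := by
  rw [coeff_mul]
  exact Submodule.sum_mem _ fun x _ => A.mul_mem (hp _) (hq _)

theorem poly_gcomm (A : CDGA) {m n : ℤ} {p q : A.carrier[X]}
    (hp : ∀ k, p.coeff k ∈ A.grading m) (hq : ∀ k, q.coeff k ∈ A.grading n) :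
    p * q = ((-1 : ℚ) ^ (m * n)) • (q * p) := by
  ext k
  rw [coeff_smul, coeff_mul, coeff_mul, ← Finset.Nat.sum_antidiagonal_swap, Finset.smul_sum]
  exact Finset.sum_congr rfl fun x _ => A.gcomm (hp _) (hq _)

theorem coeff_derivative_mem (A : CDGA) {m : ℤ} {p : A.carrier[X]}
    (hp : ∀ k, p.coeff k ∈ A.grading m) (k : ℕ) : (derivative p).coeff k ∈ A.grading m := by
  rw [coeff_derivative]
  norm_cast
  rw [← nsmul_eq_mul']
  exact Submodule.smul_of_tower_mem _ _ (hp _)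

/-- The underlying space of `∧(t,dt) ⊗ A`; the pair `(p, q)` stands for `p + q dt`, with
polynomials in `t` having their coefficients in `A` written on the left. -/
@[ext]
structure Cyl (A : CDGA) : Type where
  fst : A.carrier[X]
  snd : A.carrier[X]

namespace Cyl

variable {A : CDGA}

variable (A) in
/-- Elements of the cylinder as pairs of polynomials. -/
def equivProd : Cyl A ≃ A.carrier[X] × A.carrier[X] where
  toFun x := (x.fst, x.snd)
  invFun p := ⟨p.1, p.2⟩

instance : AddCommGroup (Cyl A) := (equivProd A).addCommGroup

instance : Module ℚ (Cyl A) := (equivProd A).module ℚ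

instance : Mul (Cyl A) :=
  ⟨fun x y => ⟨x.fst * y.fst, x.fst * y.snd + x.snd * mapCoeff A.sgn y.fst⟩⟩

instance : One (Cyl A) := ⟨⟨1, 0⟩⟩

theorem fst_add (x y : Cyl A) : (x + y).fst = x.fst + y.fst := rfl
theorem snd_add (x y : Cyl A) : (x + y).snd = x.snd + y.snd := rfl
theorem fst_zero : (0 : Cyl A).fst = 0 := rfl
theorem snd_zero : (0 : Cyl A).snd = 0 := rfl
theorem fst_smul (c : ℚ) (x : Cyl A) : (c • x).fst = c • x.fst := rfl
theorem snd_smul (c : ℚ) (x : Cyl A) : (c • x).snd = c • x.snd := rfl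
theorem fst_mul (x y : Cyl A) : (x * y).fst = x.fst * y.fst := rfl
theorem snd_mul (x y : Cyl A) : (x * y).snd = x.fst * y.snd + x.snd * mapCoeff A.sgn y.fst := rfl
theorem fst_one : (1 : Cyl A).fst = 1 := rfl
theorem snd_one : (1 : Cyl A).snd = 0 := rfl

instance : Ring (Cyl A) :=
  { (inferInstance : AddCommGroup (Cyl A)) with
    mul := (· * ·)
    one := 1
    left_distrib := fun x y z => by
      ext1
      · simp only [fst_mul, fst_add, mul_add]
      · simp only [snd_mul, fst_add, snd_add, mul_add, map_add]; abel
    right_distrib := fun x y z => by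
      ext1
      · simp only [fst_mul, fst_add, add_mul]
      · simp only [snd_mul, fst_add, snd_add, add_mul]; abel
    zero_mul := fun x => by
      ext1
      · simp only [fst_mul, fst_zero, zero_mul]
      · simp only [snd_mul, fst_zero, snd_zero, zero_mul, add_zero]
    mul_zero := fun x => by
      ext1
      · simp only [fst_mul, fst_zero, mul_zero]
      · simp only [snd_mul, fst_zero, snd_zero, mul_zero, map_zero, add_zero]
    mul_assoc := fun x y z => by
      ext1
      · simp only [fst_mul, mul_assoc]
      · simp only [snd_mul, fst_mul, mapCoeff_sgn_mul, mul_add, add_mul, mul_assoc]; abel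
    one_mul := fun x => by
      ext1
      · simp only [fst_mul, fst_one, one_mul]
      · simp only [snd_mul, fst_one, snd_one, one_mul, zero_mul, add_zero]
    mul_one := fun x => by
      ext1
      · simp only [fst_mul, fst_one, mul_one]
      · simp only [snd_mul, fst_one, snd_one, mapCoeff_sgn_one, mul_one, mul_zero, zero_add]
  }

instance : Algebra ℚ (Cyl A) := Algebra.ofModule
  (fun r x y => by
    ext1
    · simp only [fst_mul, fst_smul, smul_mul_assoc]
    · simp only [snd_mul, snd_smul, smul_mul_assoc, smul_add])
  (fun r x y => by
    ext1
    · simp only [fst_mul, fst_smul, mul_smul_comm]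
    · simp only [snd_mul, snd_smul, mul_smul_comm, smul_add])

variable (A) in
/-- The component of degree `n`. -/
def gr (n : ℤ) : Submodule ℚ (Cyl A) where
  carrier := {x | (∀ k, x.fst.coeff k ∈ A.grading n) ∧ ∀ k, x.snd.coeff k ∈ A.grading (n - 1)}
  add_mem' hx hy := ⟨fun k => by
      rw [fst_add, coeff_add]; exact Submodule.add_mem _ (hx.1 k) (hy.1 k), fun k => by
      rw [snd_add, coeff_add]; exact Submodule.add_mem _ (hx.2 k) (hy.2 k)⟩
  zero_mem' := ⟨fun k => by rw [fst_zero, coeff_zero]; exact Submodule.zero_mem _, fun k => by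
      rw [snd_zero, coeff_zero]; exact Submodule.zero_mem _⟩
  smul_mem' c x hx := ⟨fun k => by
      rw [fst_smul, coeff_smul]; exact Submodule.smul_mem _ _ (hx.1 k), fun k => by
      rw [snd_smul, coeff_smul]; exact Submodule.smul_mem _ _ (hx.2 k)⟩

variable (A) in
/-- The inclusion of polynomials in `t`. -/
def inl : A.carrier[X] →ₗ[ℚ] Cyl A  where
  toFun p := ⟨p, 0⟩
  map_add' _ _ := Cyl.ext rfl (add_zero 0).symm
  map_smul' c _ := Cyl.ext rfl (smul_zero c).symm

variable (A) in
/-- The inclusion of polynomials in `t` multiplied by `dt`. -/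
def inr : A.carrier[X] →ₗ[ℚ] Cyl A  where
  toFun p := ⟨0, p⟩
  map_add' _ _ := Cyl.ext (add_zero 0).symm rfl
  map_smul' c _ := Cyl.ext (smul_zero c).symm rfl

theorem fst_inl (p : A.carrier[X]) : (inl A p).fst = p := rfl
theorem snd_inl (p : A.carrier[X]) : (inl A p).snd = 0 := rfl
theorem fst_inr (p : A.carrier[X]) : (inr A p).fst = 0 := rfl
theorem snd_inr (p : A.carrier[X]) : (inr A p).snd = p := rfl

theorem inl_add_inr (x : Cyl A) : inl A x.fst + inr A x.snd = x :=
  Cyl.ext (add_zero x.fst) (zero_add x.snd)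

theorem inl_mem {n : ℤ} {p : A.carrier[X]} (hp : ∀ k, p.coeff k ∈ A.grading n) :
    inl A p ∈ gr A n :=
  ⟨hp, fun k => by rw [snd_inl, coeff_zero]; exact Submodule.zero_mem _⟩

theorem inr_mem {n : ℤ} {p : A.carrier[X]} (hp : ∀ k, p.coeff k ∈ A.grading (n - 1)) :
    inr A p ∈ gr A n :=
  ⟨fun k => by rw [fst_inr, coeff_zero]; exact Submodule.zero_mem _, hp⟩

theorem coeff_monomial_mem {n : ℤ} {a : A.carrier} (ha : a ∈ A.grading n) (m k : ℕ) :
    (monomial m a).coeff k ∈ A.grading n := by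
  rw [coeff_monomial]
  split_ifs
  · exact ha
  · exact Submodule.zero_mem _

variable (A) in
/-- The differential `d (p + q dt) = dp + (± p' + dq) dt`. -/
def diff : Cyl A →ₗ[ℚ] Cyl A where
  toFun x := ⟨mapCoeff A.d x.fst, mapCoeff A.sgn (derivative x.fst) + mapCoeff A.d x.snd⟩
  map_add' x y := by
    ext1
    · simp only [fst_add, map_add]
    · simp only [fst_add, snd_add, map_add]; abel
  map_smul' c x := by
    ext1
    · simp only [fst_smul, map_smul, RingHom.id_apply]
    · simp only [fst_smul, snd_smul, map_smul, derivative_smul, RingHom.id_apply, smul_add]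

theorem fst_diff (x : Cyl A) : (diff A x).fst = mapCoeff A.d x.fst := rfl
theorem snd_diff (x : Cyl A) :
    (diff A x).snd = mapCoeff A.sgn (derivative x.fst) + mapCoeff A.d x.snd := rfl

variable (A) in
/-- The projection onto the component of degree `n`. -/
def grProj (n : ℤ) : Cyl A →ₗ[ℚ] Cyl A where
  toFun x := ⟨mapCoeff (A.proj n) x.fst, mapCoeff (A.proj (n - 1)) x.snd⟩
  map_add' _ _ := Cyl.ext (map_add _ _ _) (map_add _ _ _)
  map_smul' _ _ := Cyl.ext (map_smul _ _ _) (map_smul _ _ _)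

end Cyl

open Cyl in
/-- The cdga `∧(t,dt) ⊗ A`. -/
def cyl (A : CDGA) : CDGA where
  carrier := Cyl A
  grading := gr A
  spanning := by
    rw [eq_top_iff]
    rintro x -
    rw [← inl_add_inr x]
    refine Submodule.add_mem _ ?_ ?_
    · induction x.fst using Polynomial.induction_on' with
      | add p q hp hq => rw [map_add]; exact Submodule.add_mem _ hp hq
      | monomial m a =>
        induction a using A.homogeneous_induction with
        | hom i a ha => exact Submodule.mem_iSup_of_mem i (inl_mem (coeff_monomial_mem ha m))
        | add a b ha hb => rw [map_add, map_add]; exact Submodule.add_mem _ ha hb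
    · induction x.snd using Polynomial.induction_on' with
      | add p q hp hq => rw [map_add]; exact Submodule.add_mem _ hp hq
      | monomial m a =>
        induction a using A.homogeneous_induction with
        | hom i a ha =>
          refine Submodule.mem_iSup_of_mem (i + 1) (inr_mem ?_)
          rw [add_sub_cancel_right]
          exact coeff_monomial_mem ha m
        | add a b ha hb => rw [map_add, map_add]; exact Submodule.add_mem _ ha hb
  indep := indep_of_projections _ (grProj A)
    (fun i x hx => by
      ext k
      · exact (coeff_mapCoeff _ _ _).trans (A.proj_self (hx.1 k))
      · exact (coeff_mapCoeff _ _ _).trans (A.proj_self (hx.2 k)))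
    (fun i j hij x hx => by
      ext k
      · exact (coeff_mapCoeff _ _ _).trans (A.proj_of_ne hij (hx.1 k))
      · exact (coeff_mapCoeff _ _ _).trans (A.proj_of_ne (by simpa using hij) (hx.2 k)))
  one_mem := by
    have h := inl_mem (A := A) (coeff_monomial_mem A.one_mem 0)
    rwa [monomial_zero_left, C_1] at h
  mul_mem := by
    intro i j x y hx hy
    refine ⟨A.coeff_mul_mem hx.1 hy.1, fun k => ?_⟩
    rw [snd_mul, coeff_add]
    refine Submodule.add_mem _ ?_ ?_
    · have h := A.coeff_mul_mem hx.1 hy.2 k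
      rwa [← add_sub_assoc] at h
    · rw [A.mapCoeff_sgn_of_mem hy.1, mul_smul_comm, coeff_smul]
      have h := A.coeff_mul_mem hx.2 hy.1 k
      rw [sub_add_eq_add_sub] at h
      exact Submodule.smul_mem _ _ h
  gcomm := by
    intro i j x y hx hy
    ext1
    · exact A.poly_gcomm hx.1 hy.1
    · rw [snd_smul, snd_mul, snd_mul, A.mapCoeff_sgn_of_mem hx.1, A.mapCoeff_sgn_of_mem hy.1,
        A.poly_gcomm hx.1 hy.2, mul_smul_comm, mul_smul_comm, A.poly_gcomm hx.2 hy.1, smul_add,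
        smul_smul, smul_smul, add_comm, ← zpow_add₀ (by norm_num), ← zpow_add₀ (by norm_num)]
      have e₁ : ((-1 : ℚ) ^ (j + (i - 1) * j)) = (-1) ^ (i * j) := by congr 1; ring
      have e₂ : ((-1 : ℚ) ^ (i * (j - 1))) = (-1) ^ (i * j + i) := by
        rw [mul_sub, mul_one, zpow_sub₀ (by norm_num), zpow_add₀ (by norm_num), div_eq_mul_inv,
          ← inv_zpow]
        norm_num
      rw [e₁, e₂]
  d := diff A
  d_mem := by
    intro i x hx
    refine ⟨fun k => ?_, fun k => ?_⟩
    · rw [fst_diff, coeff_mapCoeff]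
      exact A.d_mem (hx.1 k)
    · rw [snd_diff, coeff_add, coeff_mapCoeff, coeff_mapCoeff, add_sub_cancel_right]
      refine Submodule.add_mem _ (A.sgn_mem (A.coeff_derivative_mem hx.1 k)) ?_
      simpa using A.d_mem (hx.2 k)
  d_sq := by
    intro x
    ext1
    · rw [fst_diff, fst_diff, A.mapCoeff_d_d, fst_zero]
    · rw [snd_diff, snd_diff, fst_diff, map_add, A.mapCoeff_d_sgn, A.mapCoeff_d_d,
        derivative_mapCoeff, add_zero, add_neg_cancel, snd_zero]
  leibniz := by
    intro i x hx y
    ext1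
    · simp only [fst_diff, fst_mul, fst_add, fst_smul, mapCoeff_d_mul]
      rw [A.mapCoeff_sgn_of_mem hx.1, smul_mul_assoc]
    · simp only [snd_diff, snd_mul, fst_diff, fst_mul, snd_add, snd_smul, map_add,
        mapCoeff_d_mul, derivative_mul, mapCoeff_sgn_mul, A.mapCoeff_d_sgn, add_mul, mul_add,
        smul_add]
      have e₁ := A.mapCoeff_sgn_of_mem hx.1
      have e₂ := A.mapCoeff_sgn_of_mem hx.2
      have e₃ : ((-1 : ℚ) ^ (i - 1)) = - (-1) ^ i := by
        rw [zpow_sub₀ (by norm_num), zpow_one, div_neg, div_one]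
      rw [e₃, neg_smul] at e₂
      rw [e₁, e₂]
      simp only [smul_mul_assoc, neg_mul, mul_neg, neg_neg]
      abel

end CDGA

namespace CDGA

open Polynomial

namespace Cyl

variable {A : CDGA}

theorem inl_mul_inl (p q : A.carrier[X]) : inl A p * inl A q = inl A (p * q) := by
  ext1
  · rfl
  · rw [snd_mul, snd_inl, snd_inl, snd_inl, mul_zero, zero_mul, add_zero]

theorem inl_one : inl A 1 = 1 := rfl

theorem inl_mul_inr_one (p : A.carrier[X]) : inl A p * inr A 1 = inr A p := by
  ext1
  · rw [fst_mul, fst_inr, fst_inr, mul_zero]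
  · rw [snd_mul, snd_inl, snd_inr, fst_inl, snd_inr, zero_mul, mul_one, add_zero]

theorem inl_pow (p : A.carrier[X]) (k : ℕ) : inl A p ^ k = inl A (p ^ k) := by
  induction k with
  | zero => rw [pow_zero, pow_zero, inl_one]
  | succ k ih => rw [pow_succ, pow_succ, ih, inl_mul_inl]

theorem inl_C_mul_X_pow (a : A.carrier) (k : ℕ) :
    inl A (C a) * inl A X ^ k = inl A (monomial k a) := by
  rw [inl_pow, inl_mul_inl, C_mul_X_pow_eq_monomial]

theorem diff_inl_X : diff A (inl A X) = inr A 1 := by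
  ext1
  · rw [fst_diff, fst_inl, fst_inr, ← monomial_one_one_eq_X, mapCoeff_monomial, A.d_one,
      monomial_zero_right]
  · rw [snd_diff, fst_inl, snd_inl, snd_inr, map_zero, add_zero, derivative_X,
      A.mapCoeff_sgn_one]

variable (A) in
/-- The projection onto polynomials in `t`. -/
def fstHom : Cyl A →+* A.carrier[X] where
  toFun := fst
  map_one' := rfl
  map_mul' _ _ := rfl
  map_zero' := rfl
  map_add' _ _ := rfl

end Cyl

open Cyl

/-- The inclusion `A → ∧(t,dt) ⊗ A`. -/
def cylι (A : CDGA) : Hom A A.cyl where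
  toFun :=
    { toFun := fun a => inl A (C a)
      map_one' := rfl
      map_mul' := fun a b => by rw [C_mul]; exact (inl_mul_inl _ _).symm
      map_zero' := by rw [C_0, map_zero]; rfl
      map_add' := fun a b => by rw [C_add, map_add]; rfl }
  map_smul q a := by
    change inl A (C (q • a)) = q • inl A (C a)
    rw [← map_smul, smul_C]
  map_grading i a ha := inl_mem (coeff_monomial_mem ha 0)
  map_d a := by
    change inl A (C (A.d a)) = diff A (inl A (C a))
    ext1
    · rw [fst_diff, fst_inl, fst_inl, ← monomial_zero_left, ← monomial_zero_left,
        mapCoeff_monomial]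
    · rw [snd_diff, fst_inl, snd_inl, snd_inl, derivative_C, map_zero, map_zero, add_zero]

/-- The evaluation `∧(t,dt) ⊗ A → A` at `t = 0`. -/
def cylε₀ (A : CDGA) : Hom A.cyl A where
  toFun := constantCoeff.comp (fstHom A)
  map_smul q x := coeff_smul q x.fst 0
  map_grading _ _ hx := hx.1 0
  map_d x := coeff_mapCoeff A.d x.fst 0

theorem eval_one_mapCoeff {R S : Type*} [Ring R] [Algebra ℚ R] [Ring S] [Algebra ℚ S]
    (f : R →ₗ[ℚ] S) (p : R[X]) : (mapCoeff f p).eval 1 = f (p.eval 1) := by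
  induction p using Polynomial.induction_on' with
  | add p q hp hq => rw [map_add, eval_add, eval_add, hp, hq, map_add]
  | monomial n a => rw [mapCoeff_monomial, eval_monomial, eval_monomial, one_pow, one_pow,
      mul_one, mul_one]

/-- The evaluation `∧(t,dt) ⊗ A → A` at `t = 1`. -/
def cylε₁ (A : CDGA) : Hom A.cyl A where
  toFun := (eval₂RingHom' (RingHom.id A.carrier) 1 fun _ => Commute.one_right _).comp (fstHom A)
  map_smul q x := eval_smul _ _ _
  map_grading i x hx := by
    change eval 1 x.fst ∈ _
    rw [eval_eq_sum]
    refine Submodule.sum_mem _ fun k _ => ?_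
    beta_reduce
    rw [one_pow, mul_one]
    exact hx.1 k
  map_d x := eval_one_mapCoeff A.d x.fst

theorem cylε₀_apply (A : CDGA) (x : Cyl A) : A.cylε₀.toFun x = x.fst.coeff 0 := rfl

theorem coeff_finsuppSum_monomial {R : Type*} [Ring R] (p : ℕ →₀ R) (k : ℕ) :
    (p.sum fun i a => monomial i a).coeff k = p k := by
  rw [Finsupp.sum, finsetSum_coeff, Finset.sum_eq_single k]
  · rw [coeff_monomial_same]
  · intro i _ hi
    rw [coeff_monomial_of_ne _ hi.symm]
  · intro hk
    rw [Finsupp.notMem_support_iff.1 hk, monomial_zero_right, coeff_zero]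

/-- The element `t` of `∧(t,dt) ⊗ A`. -/
def cylT (A : CDGA) : A.cyl.carrier := inl A X

theorem cylι_mul_cylT_pow (A : CDGA) (a : A.carrier) (k : ℕ) :
    A.cylι.toFun a * A.cylT ^ k = inl A (monomial k a) :=
  inl_C_mul_X_pow a k

theorem cylι_mul_cylT_pow_mul_d (A : CDGA) (a : A.carrier) (k : ℕ) :
    A.cylι.toFun a * A.cylT ^ k * A.cyl.d A.cylT = inr A (monomial k a) := by
  have h : A.cyl.d A.cylT = inr A 1 := diff_inl_X
  rw [cylι_mul_cylT_pow, h]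
  exact inl_mul_inr_one _

theorem cyl_sum_eq (A : CDGA) (p q : ℕ →₀ A.carrier) :
    ((p.sum fun k a => A.cylι.toFun a * A.cylT ^ k) +
      q.sum fun k a => A.cylι.toFun a * A.cylT ^ k * A.cyl.d A.cylT) =
    (⟨p.sum fun k a => monomial k a, q.sum fun k a => monomial k a⟩ : Cyl A) := by
  simp only [cylι_mul_cylT_pow_mul_d]
  simp only [cylι_mul_cylT_pow]
  rw [← inl_add_inr (⟨_, _⟩ : Cyl A), map_finsuppSum, map_finsuppSum]
  rfl

/-- The cylinder `∧(t,dt) ⊗ A`. -/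
def cylinder (A : CDGA) : Cylinder A where
  C := A.cyl
  ι := A.cylι
  t := A.cylT
  t_mem := inl_mem fun k => by
    rw [← monomial_one_one_eq_X]
    exact coeff_monomial_mem A.one_mem 1 k
  ε₀ := A.cylε₀
  ε₁ := A.cylε₁
  ε₀_ι a := coeff_C_zero
  ε₁_ι a := eval_C
  ε₀_t := coeff_X_zero
  ε₁_t := eval_X
  basis c := by
    let F : A.carrier[X] → ℕ →₀ A.carrier := fun p =>
      Finsupp.onFinset p.support p.coeff fun k hk => mem_support_iff.2 hk
    refine ⟨(F (Cyl.fst c), F (Cyl.snd c)), ?_, ?_⟩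
    · beta_reduce
      rw [cyl_sum_eq]
      refine Cyl.ext (Polynomial.ext fun k => ?_) (Polynomial.ext fun k => ?_)
      · exact (coeff_finsuppSum_monomial (F (Cyl.fst c)) k).symm
      · exact (coeff_finsuppSum_monomial (F (Cyl.snd c)) k).symm
    · rintro ⟨p, q⟩ h
      rw [cyl_sum_eq] at h
      subst h
      ext k
      · exact (coeff_finsuppSum_monomial _ k).symm
      · exact (coeff_finsuppSum_monomial _ k).symm
  grading_compat n p q hp hq := by
    rw [cyl_sum_eq]
    refine ⟨fun k => ?_, fun k => ?_⟩
    · rw [coeff_finsuppSum_monomial]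
      exact hp k
    · rw [coeff_finsuppSum_monomial]
      exact hq k

/-- The relative homotopy contracting the forms on the cylinder which vanish at `t = 0`. -/
theorem exists_d_eq_of_cylε₀_eq_zero (A : CDGA) {n : ℤ} {x : Cyl A} (hx : x ∈ A.cyl.cocycles n)
    (h0 : A.cylε₀.toFun x = 0) :
    ∃ y ∈ A.cyl.grading (n - 1), A.cyl.d y = x ∧ A.cylε₀.toFun y = 0 := by
  obtain ⟨hg, hd⟩ := A.cyl.mem_cocycles.1 hx
  rw [cylε₀_apply] at h0
  have h1 : mapCoeff A.d x.fst = 0 := congrArg Cyl.fst hd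
  have h2 : mapCoeff A.sgn (derivative x.fst) + mapCoeff A.d x.snd = 0 := congrArg Cyl.snd hd
  refine ⟨inl A (primitive (mapCoeff A.sgn x.snd)), ?_, ?_, ?_⟩
  · refine inl_mem (coeff_primitive_mem _ fun k => ?_)
    rw [coeff_mapCoeff]
    exact A.sgn_mem (hg.2 k)
  · change diff A _ = x
    have h3 : mapCoeff A.d (primitive (mapCoeff A.sgn x.snd)) = x.fst := by
      rw [← primitive_mapCoeff, A.mapCoeff_d_sgn, ← neg_eq_of_add_eq_zero_right h2, map_neg,
        map_neg, A.mapCoeff_sgn_sgn, map_neg, neg_neg, primitive_derivative _ h0]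
    ext1
    · rw [fst_diff, fst_inl, h3]
    · rw [snd_diff, fst_inl, snd_inl, derivative_primitive, A.mapCoeff_sgn_sgn, map_zero, add_zero]
  · exact coeff_zero_primitive _

end CDGA

namespace CDGA

open Polynomial Cyl

theorem Hom.ext {A B : CDGA} {f g : Hom A B} (h : ∀ x, f.toFun x = g.toFun x) : f = g := by
  obtain ⟨f, _⟩ := f
  obtain ⟨g, _⟩ := g
  obtain rfl : f = g := RingHom.ext h
  rfl

/-! ### Uniqueness of minimal models -/

/-- The pairs `(s, c)` in `S × (∧(t,dt) ⊗ A)` with `φ s = ε₀ c`. -/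
def pathSubalgebra {S A : CDGA} (φ : Hom S A) : Subalgebra ℚ (S.prod A.cyl).carrier :=
  AlgHom.equalizer (φ.comp (Hom.fst S A.cyl)).alg (A.cylε₀.comp (Hom.snd S A.cyl)).alg

theorem mem_pathSubalgebra {S A : CDGA} (φ : Hom S A) {x : (S.prod A.cyl).carrier} :
    x ∈ pathSubalgebra φ ↔ φ.toFun ((Hom.fst S A.cyl).toFun x) =
      A.cylε₀.toFun ((Hom.snd S A.cyl).toFun x) := Iff.rfl

/-- The path object factoring `φ` into a quasi-isomorphism followed by a surjection. -/
def path {S A : CDGA} (φ : Hom S A) : CDGA :=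
  (S.prod A.cyl).sub (pathSubalgebra φ)
    (fun k x hx => by
      rw [mem_pathSubalgebra] at hx ⊢
      rw [Hom.map_proj, Hom.map_proj, Hom.map_proj, Hom.map_proj, hx])
    (fun x hx => by
      rw [mem_pathSubalgebra] at hx ⊢
      rw [Hom.map_d, Hom.map_d, Hom.map_d, Hom.map_d, hx])

/-- The component in `S` of the path object. -/
def pathFst {S A : CDGA} (φ : Hom S A) : Hom (path φ) S :=
  (Hom.fst S A.cyl).comp (Hom.ofSub _ _ _ _)

/-- The component in `∧(t,dt) ⊗ A` of the path object. -/
def pathSnd {S A : CDGA} (φ : Hom S A) : Hom (path φ) A.cyl :=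
  (Hom.snd S A.cyl).comp (Hom.ofSub _ _ _ _)

theorem pathFst_eq {S A : CDGA} (φ : Hom S A) (x : (path φ).carrier) :
    φ.toFun ((pathFst φ).toFun x) = A.cylε₀.toFun ((pathSnd φ).toFun x) := x.2

/-- The constant paths. -/
def pathConst {S A : CDGA} (φ : Hom S A) : Hom S (path φ) where
  toFun := ((RingHom.id S.carrier).prod (A.cylι.comp φ).toFun).codRestrict (pathSubalgebra φ)
    fun s => (mem_pathSubalgebra φ).2 (coeff_C_zero (a := φ.toFun s)).symm
  map_smul q x := Subtype.ext (Prod.ext rfl ((A.cylι.comp φ).map_smul q x))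
  map_grading i x h := ⟨h, (A.cylι.comp φ).map_grading i x h⟩
  map_d x := Subtype.ext (Prod.ext rfl ((A.cylι.comp φ).map_d x))

theorem quasiIso_pathFst {S A : CDGA} (φ : Hom S A) : QuasiIso (pathFst φ) := by
  refine ⟨fun n x hx hb => ?_, fun n s hs => ⟨(pathConst φ).toFun s,
    (pathConst φ).map_cocycles hs, ?_⟩⟩
  · obtain ⟨s, hs, hds⟩ := S.exists_d_eq_of_mem_cobounds hb
    have hj := (pathConst φ).map_grading _ _ hs
    have hc : (pathSnd φ).toFun (x - (path φ).d ((pathConst φ).toFun s)) ∈ A.cyl.cocycles n :=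
      (pathSnd φ).map_cocycles (Submodule.sub_mem _ hx
        ((path φ).cobounds_le_cocycles n ((path φ).d_mem_cobounds hj)))
    have hf : (pathFst φ).toFun (x - (path φ).d ((pathConst φ).toFun s)) = 0 := by
      rw [map_sub, ← hds, (pathFst φ).map_d]
      exact sub_self _
    obtain ⟨c, hc, hdc, h0⟩ := A.exists_d_eq_of_cylε₀_eq_zero hc (by
      rw [← pathFst_eq, hf, map_zero])
    let y : (path φ).carrier := ⟨((0 : S.carrier), c),
      (mem_pathSubalgebra φ).2 ((map_zero φ.toFun).trans h0.symm)⟩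
    have hy : y ∈ (path φ).grading (n - 1) := ⟨Submodule.zero_mem _, hc⟩
    have hdy : (path φ).d y = x - (path φ).d ((pathConst φ).toFun s) :=
      Subtype.ext (Prod.ext ((map_zero S.d).trans hf.symm) hdc)
    have h := Submodule.add_mem _ ((path φ).d_mem_cobounds hy) ((path φ).d_mem_cobounds hj)
    rwa [hdy, sub_add_cancel] at h
  · have h : (pathFst φ).toFun ((pathConst φ).toFun s) = s := rfl
    rw [h, sub_self]
    exact Submodule.zero_mem _

theorem quasiIso_pathConst {S A : CDGA} (φ : Hom S A) : QuasiIso (pathConst φ) :=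
  (quasiIso_pathFst φ).of_comp_left (QuasiIso.id S)

theorem surjective_pathSnd {S A : CDGA} (φ : Hom S A) :
    Function.Surjective (A.cylε₁.comp (pathSnd φ)).toFun := by
  intro a
  refine ⟨⟨((0 : S.carrier), inl A (monomial 1 a)), ?_⟩, ?_⟩
  · exact (mem_pathSubalgebra φ).2
      ((map_zero φ.toFun).trans (coeff_monomial_of_ne a (by norm_num)).symm)
  · change (monomial 1 a).eval 1 = a
    rw [eval_monomial, one_pow, mul_one]

theorem exists_isIso_homotopic {A : CDGA} (S T : MinimalSullivanAlgebra) (φ : Hom S.toCDGA A)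
    (ψ : Hom T.toCDGA A) (hφ : QuasiIso φ) (hψ : QuasiIso ψ) :
    ∃ χ : Hom T.toCDGA S.toCDGA, IsIso χ ∧ Homotopic (φ.comp χ) ψ := by
  have hc : (A.cylε₁.comp (pathSnd φ)).comp (pathConst φ) = φ := Hom.ext fun s => eval_C
  have hq : QuasiIso (A.cylε₁.comp (pathSnd φ)) :=
    (quasiIso_pathConst φ).of_comp_right (by rwa [hc])
  obtain ⟨Θ, hΘ⟩ := T.exists_lift_of_surjective hq (surjective_pathSnd φ) ψ
  have hΘq : QuasiIso Θ := by
    refine hq.of_comp_left ?_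
    rwa [show (A.cylε₁.comp (pathSnd φ)).comp Θ = ψ from Hom.ext hΘ]
  refine ⟨(pathFst φ).comp Θ, MinimalSullivanAlgebra.isIso_of_quasiIso
    ((quasiIso_pathFst φ).comp hΘq), A.cylinder, (pathSnd φ).comp Θ, fun x => ?_, fun x => hΘ x⟩
  exact (pathFst_eq φ (Θ.toFun x)).symm

end CDGA

section PathConnected

/-! ### Degree zero cohomology of a path connected space -/

namespace SSimplex

instance : Unique (SSimplex 0) where
  default := ⟨fun _ => 1, fun _ => zero_le_one, by simp⟩
  uniq f := by
    apply Subtype.ext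
    funext i
    have h := f.2.2
    rw [Fin.sum_univ_one] at h
    exact (congrArg f.1 (Fin.fin_one_eq_zero i)).trans h

theorem face_default_one (i : Fin 2) :
    (face i (default : SSimplex 0)).1 1 = if i = 0 then 1 else 0 := by
  have h : (default : SSimplex 0).1 0 = 1 := rfl
  change (∑ k : Fin 1, if i.succAbove k = 1 then (default : SSimplex 0).1 k else 0) = _
  rw [Fin.sum_univ_one, h]
  fin_cases i <;> simp

end SSimplex

variable {X : Type} [TopologicalSpace X]

theorem eq_of_mem_scocycles_zero [PathConnectedSpace X] {f : scochain X 0}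
    (hf : f ∈ scocycles X 0) (σ τ : SingularSimplex X 0) : f σ = f τ := by
  obtain ⟨γ⟩ := PathConnectedSpace.joined (σ default) (τ default)
  have hc : Continuous fun x : SSimplex 1 => x.1 1 :=
    (continuous_apply 1).comp continuous_subtype_val
  let s : SingularSimplex X 1 := ⟨fun x => γ.extend (x.1 1), γ.continuous_extend.comp hc⟩
  have h0 : s.comp (SSimplex.face 0) = τ := by
    ext x
    rw [Unique.eq_default x]
    change γ.extend _ = _
    rw [SSimplex.face_default_one, if_pos rfl, Path.extend_one]
  have h1 : s.comp (SSimplex.face 1) = σ := by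
    ext x
    rw [Unique.eq_default x]
    change γ.extend _ = _
    rw [SSimplex.face_default_one, if_neg (by decide), Path.extend_zero]
  have h := congrFun (LinearMap.mem_ker.1 hf) s
  change ∑ i : Fin 2, (-1 : ℚ) ^ (i : ℕ) * f (s.comp (SSimplex.face i)) = 0 at h
  rw [Fin.sum_univ_two, h0, h1] at h
  simp only [Fin.val_zero, pow_zero, one_mul, Fin.val_one, pow_one, neg_one_mul] at h
  linarith

theorem one_mem_scocycles_zero : (fun _ => 1 : scochain X 0) ∈ scocycles X 0 := by
  refine LinearMap.mem_ker.2 (funext fun s => ?_)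
  change ∑ i : Fin 2, (-1 : ℚ) ^ (i : ℕ) * 1 = 0
  rw [Fin.sum_univ_two]
  simp

theorem finrank_singCoh_zero [PathConnectedSpace X] : Module.finrank ℚ (SingCoh X 0) = 1 := by
  have hx : Nonempty (SingularSimplex X 0) := ⟨ContinuousMap.const _ (Nonempty.some inferInstance)⟩
  obtain ⟨σ⟩ := hx
  refine finrank_eq_one (Submodule.Quotient.mk ⟨_, one_mem_scocycles_zero⟩) ?_ ?_
  · intro h
    have h' := (Submodule.Quotient.mk_eq_zero _).1 h
    have h2 : (fun _ => 1 : scochain X 0) = 0 := (Submodule.mem_bot ℚ).1 h'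
    exact one_ne_zero (congrFun h2 σ)
  · intro w
    obtain ⟨⟨f, hf⟩, rfl⟩ := Submodule.Quotient.mk_surjective _ w
    refine ⟨f σ, ?_⟩
    refine congrArg Submodule.Quotient.mk (Subtype.ext (funext fun τ => ?_))
    change f σ * 1 = f τ
    rw [mul_one, eq_of_mem_scocycles_zero hf σ τ]

namespace CDGA

/-- A connected cdga: it is concentrated in nonnegative degrees and `H⁰ = ℚ`. -/
structure IsConn (A : CDGA) : Prop where
  neg : ∀ n : ℤ, n < 0 → A.grading n = ⊥
  one_ne_zero : (1 : A.carrier) ≠ 0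
  exists_smul_one : ∀ a ∈ A.cocycles 0, ∃ q : ℚ, a = q • (1 : A.carrier)

theorem isConn_of_isAPLModelOf [PathConnectedSpace X] {A : CDGA} (hA : IsAPLModelOf A X) :
    A.IsConn := by
  obtain ⟨e⟩ := hA.2 0
  have hr : Module.finrank ℚ (A.H 0) = 1 := e.finrank_eq.trans finrank_singCoh_zero
  have hb : ∀ x ∈ A.cobounds 0, x = 0 := by
    intro x hx
    obtain ⟨y, hy, rfl⟩ := A.exists_d_eq_of_mem_cobounds hx
    rw [hA.1 _ (by norm_num), Submodule.mem_bot] at hy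
    rw [hy, map_zero]
  have h1 : (1 : A.carrier) ∈ A.cocycles 0 := A.mem_cocycles.2 ⟨A.one_mem, A.d_one⟩
  have h10 : (1 : A.carrier) ≠ 0 := by
    intro h
    have hs : Subsingleton A.carrier := subsingleton_of_zero_eq_one h.symm
    have : Subsingleton (A.H 0) :=
      (Submodule.Quotient.mk_surjective _).subsingleton
    rw [Module.finrank_zero_of_subsingleton] at hr
    exact zero_ne_one hr
  refine ⟨hA.1, h10, fun a ha => ?_⟩
  have hu : (Submodule.Quotient.mk ⟨1, h1⟩ : A.H 0) ≠ 0 := fun h =>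
    h10 (hb _ ((Submodule.Quotient.mk_eq_zero
      ((A.cobounds 0).comap (A.cocycles 0).subtype) (x := ⟨1, h1⟩)).1 h))
  obtain ⟨q, hq⟩ := exists_smul_eq_of_finrank_eq_one hr hu (Submodule.Quotient.mk ⟨a, ha⟩)
  refine ⟨q, ?_⟩
  have h := hb _ ((Submodule.Quotient.eq ((A.cobounds 0).comap (A.cocycles 0).subtype)
    (x := q • (⟨1, h1⟩ : A.cocycles 0)) (y := ⟨a, ha⟩)).1 hq)
  exact (sub_eq_zero.1 h).symm

end CDGA

end PathConnected

/-! ### Free graded commutative algebras -/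

section FreeGraded

variable {I : Type} (deg : I → ℤ)

/-- The relations of graded commutativity between generators. -/
inductive FreeGCRel : FreeAlgebra ℚ I → FreeAlgebra ℚ I → Prop
  | comm (i j : I) : FreeGCRel (FreeAlgebra.ι ℚ i * FreeAlgebra.ι ℚ j)
      (((-1 : ℚ) ^ (deg i * deg j)) • (FreeAlgebra.ι ℚ j * FreeAlgebra.ι ℚ i))

/-- The free graded commutative algebra on generators of prescribed degrees. -/
abbrev FreeGC : Type := RingQuot (FreeGCRel deg)

namespace FreeGC

/-- The generators. -/
def gen (i : I) : FreeGC deg := RingQuot.mkAlgHom ℚ (FreeGCRel deg) (FreeAlgebra.ι ℚ i)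

theorem gen_mul_gen (i j : I) :
    gen deg i * gen deg j = ((-1 : ℚ) ^ (deg i * deg j)) • (gen deg j * gen deg i) := by
  rw [gen, gen, ← map_mul, RingQuot.mkAlgHom_rel ℚ (FreeGCRel.comm i j), map_smul, map_mul]

variable {deg} in
/-- The universal property. -/
def lift {B : Type*} [Ring B] [Algebra ℚ B] (f : I → B)
    (hf : ∀ i j, f i * f j = ((-1 : ℚ) ^ (deg i * deg j)) • (f j * f i)) : FreeGC deg →ₐ[ℚ] B :=
  RingQuot.liftAlgHom ℚ ⟨FreeAlgebra.lift ℚ f, fun x y h => by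
    obtain ⟨i, j⟩ := h
    simp only [map_mul, map_smul, FreeAlgebra.lift_ι_apply, hf i j]⟩

theorem lift_gen {B : Type*} [Ring B] [Algebra ℚ B] (f : I → B)
    (hf : ∀ i j, f i * f j = ((-1 : ℚ) ^ (deg i * deg j)) • (f j * f i)) (i : I) :
    lift f hf (gen deg i) = f i := by
  rw [lift, gen, RingQuot.liftAlgHom_mkAlgHom_apply, FreeAlgebra.lift_ι_apply]

theorem adjoin_range_gen : Algebra.adjoin ℚ (Set.range (gen deg)) = ⊤ := by
  have h := FreeAlgebra.adjoin_range_ι (R := ℚ) (X := I)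
  have h' := congrArg (Subalgebra.map (RingQuot.mkAlgHom ℚ (FreeGCRel deg))) h
  rw [AlgHom.map_adjoin, ← Set.range_comp, Algebra.map_top,
    (AlgHom.range_eq_top _).2 (RingQuot.mkAlgHom_surjective ℚ _)] at h'
  exact h'

/-- The coaction which records degrees. -/
def coact : FreeGC deg →ₐ[ℚ] AddMonoidAlgebra (FreeGC deg) ℤ :=
  lift (fun i => AddMonoidAlgebra.single (deg i) (gen deg i)) fun i j => by
    rw [AddMonoidAlgebra.single_mul_single, AddMonoidAlgebra.single_mul_single,
      gen_mul_gen, AddMonoidAlgebra.smul_single, add_comm]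

/-- The homogeneous elements of degree `n`. -/
def gr (n : ℤ) : Submodule ℚ (FreeGC deg) where
  carrier := {x | coact deg x = AddMonoidAlgebra.single n x}
  add_mem' {x y} hx hy := by
    rw [Set.mem_ofPred_eq] at *
    rw [map_add, hx, hy, AddMonoidAlgebra.single_add]
  zero_mem' := by
    rw [Set.mem_ofPred_eq, map_zero, AddMonoidAlgebra.single_zero]
  smul_mem' c x hx := by
    rw [Set.mem_ofPred_eq] at *
    rw [map_smul, hx, AddMonoidAlgebra.smul_single]

theorem mem_gr {n : ℤ} {x : FreeGC deg} :
    x ∈ gr deg n ↔ coact deg x = AddMonoidAlgebra.single n x := Iff.rfl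

/-- The projection onto the homogeneous elements of degree `n`. -/
def grProj (n : ℤ) : FreeGC deg →ₗ[ℚ] FreeGC deg where
  toFun x := (coact deg x).coeff n
  map_add' x y := by rw [map_add]; rfl
  map_smul' c x := by rw [map_smul]; rfl

theorem grProj_self {n : ℤ} {x : FreeGC deg} (hx : x ∈ gr deg n) : grProj deg n x = x := by
  change (coact deg x).coeff n = x
  rw [(mem_gr deg).1 hx, AddMonoidAlgebra.coeff_single, Finsupp.single_eq_same]

theorem grProj_of_ne {m n : ℤ} (hmn : m ≠ n) {x : FreeGC deg} (hx : x ∈ gr deg m) :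
    grProj deg n x = 0 := by
  change (coact deg x).coeff n = 0
  rw [(mem_gr deg).1 hx, AddMonoidAlgebra.coeff_single, Finsupp.single_eq_of_ne hmn.symm]

theorem gen_mem_gr (i : I) : gen deg i ∈ gr deg (deg i) := lift_gen deg _ _ i

theorem one_mem_gr : (1 : FreeGC deg) ∈ gr deg 0 := by
  rw [mem_gr, map_one]
  rfl

theorem mul_mem_gr {m n : ℤ} {x y : FreeGC deg} (hx : x ∈ gr deg m) (hy : y ∈ gr deg n) :
    x * y ∈ gr deg (m + n) := by
  rw [mem_gr] at *
  rw [map_mul, hx, hy, AddMonoidAlgebra.single_mul_single]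

theorem iSup_eq_top_of_mul {W : ℤ → Submodule ℚ (FreeGC deg)} (h1 : 1 ∈ W 0)
    (hmul : ∀ i j x y, x ∈ W i → y ∈ W j → x * y ∈ W (i + j))
    (hgen : ∀ i, gen deg i ∈ W (deg i)) : (⨆ n, W n) = ⊤ := by
  rw [eq_top_iff]
  rintro x -
  have hx : x ∈ Algebra.adjoin ℚ (Set.range (gen deg)) := by
    rw [adjoin_range_gen]
    trivial
  induction hx using Algebra.adjoin_induction with
  | mem x hx =>
    obtain ⟨i, rfl⟩ := hx
    exact Submodule.mem_iSup_of_mem _ (hgen i)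
  | algebraMap q =>
    rw [Algebra.algebraMap_eq_smul_one]
    exact Submodule.smul_mem _ _ (Submodule.mem_iSup_of_mem _ h1)
  | add x y _ _ hx hy => exact Submodule.add_mem _ hx hy
  | mul x y hx' hy' hx hy =>
    clear hx' hy'
    induction hx using Submodule.iSup_induction' with
    | mem i x hx =>
      induction hy using Submodule.iSup_induction' with
      | mem j y hy => exact Submodule.mem_iSup_of_mem _ (hmul i j x y hx hy)
      | zero => rw [mul_zero]; exact Submodule.zero_mem _
      | add y z _ _ hy hz => rw [mul_add]; exact Submodule.add_mem _ hy hz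
    | zero => rw [zero_mul]; exact Submodule.zero_mem _
    | add x z _ _ hx hz => rw [add_mul]; exact Submodule.add_mem _ hx hz

/-- Induction principle for homogeneous elements. -/
theorem gr_le {W : ℤ → Submodule ℚ (FreeGC deg)} (h1 : 1 ∈ W 0)
    (hmul : ∀ i j x y, x ∈ gr deg i → y ∈ gr deg j → x ∈ W i → y ∈ W j → x * y ∈ W (i + j))
    (hgen : ∀ i, gen deg i ∈ W (deg i)) (n : ℤ) : gr deg n ≤ W n := by
  intro x hx
  have htop : (⨆ n, W n ⊓ gr deg n) = ⊤ := iSup_eq_top_of_mul deg ⟨h1, one_mem_gr deg⟩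
    (fun i j x y hx hy => ⟨hmul i j x y hx.2 hy.2 hx.1 hy.1, mul_mem_gr deg hx.2 hy.2⟩)
    (fun i => ⟨hgen i, gen_mem_gr deg i⟩)
  have key : ∀ y ∈ ⨆ n, W n ⊓ gr deg n, grProj deg n y ∈ W n := by
    intro y hy
    induction hy using Submodule.iSup_induction' with
    | mem i y hy =>
      by_cases hi : i = n
      · subst hi
        rw [grProj_self deg hy.2]
        exact hy.1
      · rw [grProj_of_ne deg hi hy.2]
        exact Submodule.zero_mem _
    | zero => rw [map_zero]; exact Submodule.zero_mem _
    | add y z _ _ hy hz => rw [map_add]; exact Submodule.add_mem _ hy hz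
  have h := key x (by rw [htop]; trivial)
  rwa [grProj_self deg hx] at h

theorem iSup_gr : (⨆ n, gr deg n) = ⊤ :=
  iSup_eq_top_of_mul deg (one_mem_gr deg) (fun _ _ _ _ => mul_mem_gr deg) (gen_mem_gr deg)

theorem gcomm {m n : ℤ} {x y : FreeGC deg} (hx : x ∈ gr deg m) (hy : y ∈ gr deg n) :
    x * y = ((-1 : ℚ) ^ (m * n)) • (y * x) := by
  let W₁ : I → ℤ → Submodule ℚ (FreeGC deg) := fun i n =>
    LinearMap.eqLocus (LinearMap.mulLeft ℚ (gen deg i))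
      (((-1 : ℚ) ^ (deg i * n)) • LinearMap.mulRight ℚ (gen deg i))
  have hW₁ : ∀ i n, gr deg n ≤ W₁ i n := fun i => gr_le deg
    (by simp [W₁]) (fun m n x y _ _ hx hy => by
      simp only [W₁, LinearMap.mem_eqLocus, LinearMap.smul_apply, LinearMap.mulLeft_apply,
        LinearMap.mulRight_apply] at *
      rw [← mul_assoc, hx, smul_mul_assoc, mul_assoc, hy, mul_smul_comm, smul_smul,
        ← zpow_add₀ (by norm_num), mul_add, mul_assoc])
    (fun j => gen_mul_gen deg i j)
  let W₂ : ℤ → Submodule ℚ (FreeGC deg) := fun m =>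
    LinearMap.eqLocus (LinearMap.mulRight ℚ y)
      (((-1 : ℚ) ^ (m * n)) • LinearMap.mulLeft ℚ y)
  have hW₂ : ∀ m, gr deg m ≤ W₂ m := gr_le deg
    (by simp [W₂]) (fun m k x z _ _ hx hz => by
      simp only [W₂, LinearMap.mem_eqLocus, LinearMap.smul_apply, LinearMap.mulLeft_apply,
        LinearMap.mulRight_apply] at *
      rw [mul_assoc, hz, mul_smul_comm, ← mul_assoc, hx, smul_mul_assoc, smul_smul,
        ← zpow_add₀ (by norm_num), ← add_mul, add_comm k, mul_assoc])
    (fun j => hW₁ j n hy)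
  exact hW₂ m hx

variable (δ : ∀ i, gr deg (deg i + 1))

/-- The matrix valued morphism encoding the derivation with values `δ` on the generators. -/
def derMatrix : FreeGC deg →ₐ[ℚ] Matrix (Fin 2) (Fin 2) (FreeGC deg) :=
  lift (fun i => !![((-1 : ℚ) ^ (deg i)) • gen deg i, (δ i : FreeGC deg); 0, gen deg i])
    fun i j => by
      have h₁ := gcomm deg (gen_mem_gr deg i) (δ j).2
      have h₂ := gcomm deg (δ i).2 (gen_mem_gr deg j)
      ext a b
      fin_cases a <;> fin_cases b <;>
        simp [Matrix.mul_apply, gen_mul_gen deg i j, smul_smul]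
      · congr 1; ring
      · rw [h₁, h₂, smul_smul, add_comm, mul_add, add_mul, one_mul, mul_one,
          zpow_add₀ (by norm_num), zpow_add₀ (by norm_num)]
        congr 2
        rw [mul_left_comm, ← mul_zpow]
        norm_num

/-- The derivation with values `δ` on the generators. -/
def der : FreeGC deg →ₗ[ℚ] FreeGC deg where
  toFun x := derMatrix deg δ x 0 1
  map_add' x y := by rw [map_add]; rfl
  map_smul' c x := by rw [map_smul]; rfl

theorem der_gen (i : I) : der deg δ (gen deg i) = δ i := by
  change derMatrix deg δ (gen deg i) 0 1 = δ i
  rw [derMatrix, lift_gen]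
  rfl

theorem derMatrix_of_mem {n : ℤ} {x : FreeGC deg} (hx : x ∈ gr deg n) :
    derMatrix deg δ x = !![((-1 : ℚ) ^ n) • x, der deg δ x; 0, x] := by
  let e : Fin 2 → Fin 2 → FreeGC deg →ₗ[ℚ] FreeGC deg := fun a b =>
    { toFun := fun x => derMatrix deg δ x a b
      map_add' := fun x y => by rw [map_add]; rfl
      map_smul' := fun c x => by rw [map_smul]; rfl }
  let W : ℤ → Submodule ℚ (FreeGC deg) := fun n =>
    LinearMap.eqLocus (e 0 0) (((-1 : ℚ) ^ n) • LinearMap.id) ⊓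
      LinearMap.eqLocus (e 1 0) 0 ⊓ LinearMap.eqLocus (e 1 1) LinearMap.id
  have hW : ∀ n x, x ∈ W n ↔ (derMatrix deg δ x 0 0 = ((-1 : ℚ) ^ n) • x ∧
      derMatrix deg δ x 1 0 = 0) ∧ derMatrix deg δ x 1 1 = x := fun n x => Iff.rfl
  have hle : ∀ n, gr deg n ≤ W n := gr_le deg
    (by rw [hW, map_one]; simp)
    (fun m n x y _ _ hx hy => by
      rw [hW] at *
      rw [map_mul]
      simp only [Matrix.mul_apply, Fin.sum_univ_two, hx, hy, zero_mul, mul_zero, add_zero,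
        zero_add, and_true]
      rw [smul_mul_smul_comm, ← zpow_add₀ (by norm_num)])
    (fun i => by
      rw [hW, derMatrix, lift_gen]
      simp)
  obtain ⟨⟨h₀₀, h₁₀⟩, h₁₁⟩ := hle n hx
  ext a b
  fin_cases a <;> fin_cases b
  exacts [h₀₀, rfl, h₁₀, h₁₁]

theorem leibniz {n : ℤ} {x : FreeGC deg} (hx : x ∈ gr deg n) (y : FreeGC deg) :
    der deg δ (x * y) = der deg δ x * y + ((-1 : ℚ) ^ n) • (x * der deg δ y) := by
  have h11 : derMatrix deg δ y 1 1 = y := by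
    have hy : y ∈ ⨆ n, gr deg n := by
      rw [iSup_gr]
      trivial
    induction hy using Submodule.iSup_induction' with
    | mem i y hy =>
      rw [derMatrix_of_mem deg δ hy]
      rfl
    | zero => rw [map_zero]; rfl
    | add y z _ _ hy hz => rw [map_add, Matrix.add_apply, hy, hz]
  change derMatrix deg δ (x * y) 0 1 = _
  rw [map_mul, Matrix.mul_apply, Fin.sum_univ_two, derMatrix_of_mem deg δ hx, h11, add_comm]
  congr 1
  exact smul_mul_assoc _ _ _

theorem der_mem {n : ℤ} {x : FreeGC deg} (hx : x ∈ gr deg n) : der deg δ x ∈ gr deg (n + 1) := by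
  have hone : der deg δ 1 = 0 := by
    have h := leibniz deg δ (one_mem_gr deg) 1
    simpa using h
  refine gr_le deg (W := fun n => (gr deg (n + 1)).comap (der deg δ)) ?_ ?_ ?_ n hx
  · rw [Submodule.mem_comap, hone]
    exact Submodule.zero_mem _
  · intro i j x y hx hy hdx hdy
    rw [Submodule.mem_comap] at *
    rw [leibniz deg δ hx]
    refine Submodule.add_mem _ ?_ (Submodule.smul_mem _ _ ?_)
    · have h := mul_mem_gr deg hdx hy
      rwa [add_right_comm] at h
    · have h := mul_mem_gr deg hx hdy
      rwa [← add_assoc] at h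
  · intro i
    rw [Submodule.mem_comap, der_gen]
    exact (δ i).2

theorem der_der (hδ : ∀ i, der deg δ (δ i) = 0) (x : FreeGC deg) :
    der deg δ (der deg δ x) = 0 := by
  have hone : der deg δ 1 = 0 := by
    have h := leibniz deg δ (one_mem_gr deg) 1
    simpa using h
  have hx : x ∈ ⨆ n, gr deg n := by
    rw [iSup_gr]
    trivial
  have hle := gr_le deg (W := fun _ => LinearMap.ker (der deg δ ∘ₗ der deg δ))
    (by simp [hone])
    (fun i j x y hx hy hdx hdy => by
      simp only [LinearMap.mem_ker, LinearMap.comp_apply] at *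
      rw [leibniz deg δ hx, map_add, map_smul, leibniz deg δ (der_mem deg δ hx),
        leibniz deg δ hx, hdx, hdy, mul_zero, smul_zero, add_zero, zero_mul, zero_add,
        zpow_add₀ (by norm_num), zpow_one, mul_neg_one]
      module)
    (fun i => by simp [der_gen, hδ])
  exact (iSup_le hle) hx

/-- The free graded commutative algebra with the differential given by `δ`. -/
def cdga (hδ : ∀ i, der deg δ (δ i) = 0) : CDGA where
  carrier := FreeGC deg
  grading := gr deg
  spanning := iSup_gr deg
  indep := CDGA.indep_of_projections _ (grProj deg) (fun _ _ => grProj_self deg)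
    (fun _ _ h _ => grProj_of_ne deg h)
  one_mem := one_mem_gr deg
  mul_mem := mul_mem_gr deg
  gcomm := gcomm deg
  d := der deg δ
  d_mem := der_mem deg δ
  d_sq := der_der deg δ hδ
  leibniz := leibniz deg δ

/-- Two derivations which agree on some generators agree on the subalgebra they generate. -/
theorem der_congr {δ δ' : ∀ i, gr deg (deg i + 1)} {s : Set I} (h : ∀ i ∈ s, δ i = δ' i)
    {x : FreeGC deg} (hx : x ∈ Algebra.adjoin ℚ (gen deg '' s)) : der deg δ x = der deg δ' x := by
  have key : derMatrix deg δ x = derMatrix deg δ' x := by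
    induction hx using Algebra.adjoin_induction with
    | mem x hx =>
      obtain ⟨i, hi, rfl⟩ := hx
      rw [derMatrix, derMatrix, lift_gen, lift_gen, h i hi]
    | algebraMap q => rw [AlgHom.commutes, AlgHom.commutes]
    | add x y _ _ hx hy => rw [map_add, map_add, hx, hy]
    | mul x y _ _ hx hy => rw [map_mul, map_mul, hx, hy]
  exact congrFun (congrFun key 0) 1

variable (A : CDGA) (α : ∀ i, A.grading (deg i))

/-- The morphism to a cdga with values `α` on the generators. -/
def liftA : FreeGC deg →ₐ[ℚ] A.carrier :=
  lift (fun i => (α i : A.carrier)) fun i j => A.gcomm (α i).2 (α j).2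

theorem liftA_gen (i : I) : liftA deg A α (gen deg i) = α i := lift_gen deg _ _ i

theorem liftA_mem {n : ℤ} {x : FreeGC deg} (hx : x ∈ gr deg n) :
    liftA deg A α x ∈ A.grading n := by
  refine gr_le deg (W := fun n => (A.grading n).comap (liftA deg A α).toLinearMap) ?_ ?_ ?_ n hx
  · simpa using A.one_mem
  · intro i j x y _ _ hx hy
    simp only [Submodule.mem_comap, AlgHom.toLinearMap_apply, map_mul] at *
    exact A.mul_mem hx hy
  · intro i
    rw [Submodule.mem_comap, AlgHom.toLinearMap_apply, liftA_gen]
    exact (α i).2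

variable {A} in
theorem liftA_congr {α α' : ∀ i, A.grading (deg i)} {s : Set I} (h : ∀ i ∈ s, α i = α' i)
    {x : FreeGC deg} (hx : x ∈ Algebra.adjoin ℚ (gen deg '' s)) :
    liftA deg A α x = liftA deg A α' x := by
  induction hx using Algebra.adjoin_induction with
  | mem x hx =>
    obtain ⟨i, hi, rfl⟩ := hx
    rw [liftA_gen, liftA_gen, h i hi]
  | algebraMap q => rw [AlgHom.commutes, AlgHom.commutes]
  | add x y _ _ hx hy => rw [map_add, map_add, hx, hy]
  | mul x y _ _ hx hy => rw [map_mul, map_mul, hx, hy]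

theorem cardinalMk_le {K : Type} [Infinite K] (hI : Cardinal.mk I ≤ Cardinal.mk K) :
    Cardinal.mk (FreeGC deg) ≤ Cardinal.mk K := by
  have hK := Cardinal.aleph0_le_mk K
  refine (Cardinal.mk_le_of_surjective (RingQuot.mkAlgHom_surjective ℚ (FreeGCRel deg))).trans
    ((FreeAlgebra.cardinalMk_le_max ℚ I).trans (max_le (max_le ?_ hI) hK))
  exact (Cardinal.mk_le_aleph0).trans hK

end FreeGC

end FreeGraded

/-! ### Minimal Sullivan algebras from free graded commutative algebras -/

theorem Algebra.exists_mem_adjoin_of_monotone {E : Type*} [Ring E] [Algebra ℚ E] {s : ℕ → Set E}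
    (hs : Monotone s) {x : E} (hx : x ∈ Algebra.adjoin ℚ (⋃ r, s r)) :
    ∃ r, x ∈ Algebra.adjoin ℚ (s r) := by
  induction hx using Algebra.adjoin_induction with
  | mem x hx =>
    obtain ⟨r, hr⟩ := Set.mem_iUnion.1 hx
    exact ⟨r, Algebra.subset_adjoin hr⟩
  | algebraMap q => exact ⟨0, Subalgebra.algebraMap_mem _ q⟩
  | add x y _ _ hx hy =>
    obtain ⟨r, hr⟩ := hx
    obtain ⟨t, ht⟩ := hy
    exact ⟨max r t, Subalgebra.add_mem _ (Algebra.adjoin_mono (hs (le_max_left r t)) hr)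
      (Algebra.adjoin_mono (hs (le_max_right r t)) ht)⟩
  | mul x y _ _ hx hy =>
    obtain ⟨r, hr⟩ := hx
    obtain ⟨t, ht⟩ := hy
    exact ⟨max r t, Subalgebra.mul_mem _ (Algebra.adjoin_mono (hs (le_max_left r t)) hr)
      (Algebra.adjoin_mono (hs (le_max_right r t)) ht)⟩

theorem CDGA.d_mem_adjoin (C : CDGA) {s : Set C.carrier} (hs : ∀ x ∈ s, ∃ i, x ∈ C.grading i)
    (hd : ∀ x ∈ s, C.d x ∈ Algebra.adjoin ℚ s) {x : C.carrier} (hx : x ∈ Algebra.adjoin ℚ s) :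
    C.d x ∈ Algebra.adjoin ℚ s := by
  have hsgn : (Algebra.adjoin ℚ s).map C.sgnAlgHom ≤ Algebra.adjoin ℚ s := by
    rw [AlgHom.map_adjoin]
    refine Algebra.adjoin_le ?_
    rintro _ ⟨x, hx, rfl⟩
    obtain ⟨i, hi⟩ := hs x hx
    refine Set.mem_of_eq_of_mem (C.sgn_of_mem hi) ?_
    exact Subalgebra.smul_mem _ (Algebra.subset_adjoin hx) _
  induction hx using Algebra.adjoin_induction with
  | mem x hx => exact hd x hx
  | algebraMap q =>
    rw [Algebra.algebraMap_eq_smul_one, map_smul, C.d_one, smul_zero]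
    exact Subalgebra.zero_mem _
  | add x y _ _ hx hy => rw [map_add]; exact Subalgebra.add_mem _ hx hy
  | mul x y hx' hy' hx hy =>
    rw [C.d_mul]
    exact Subalgebra.add_mem _ (Subalgebra.mul_mem _ hx hy')
      (Subalgebra.mul_mem _ (hsgn ⟨x, hx', rfl⟩) hy)

/-- The largest candidate for a Sullivan filtration of a subspace `E`. -/
def CDGA.nilFilt (C : CDGA) (E : Submodule ℚ C.carrier) : ℕ → Submodule ℚ C.carrier
  | 0 => E ⊓ LinearMap.ker C.d
  | r + 1 => E ⊓ (Subalgebra.toSubmodule (Algebra.adjoin ℚ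
      (CDGA.nilFilt C E r : Set C.carrier))).comap C.d

theorem CDGA.nilFilt_le (C : CDGA) (E : Submodule ℚ C.carrier) (r : ℕ) : C.nilFilt E r ≤ E := by
  cases r <;> exact inf_le_left

theorem CDGA.nilFilt_mono (C : CDGA) (E : Submodule ℚ C.carrier) : Monotone (C.nilFilt E) := by
  refine monotone_nat_of_le_succ fun r => ?_
  induction r with
  | zero =>
    rintro x ⟨hx, hdx⟩
    refine ⟨hx, ?_⟩
    rw [SetLike.mem_coe, Submodule.mem_comap, LinearMap.mem_ker.1 hdx]
    exact Submodule.zero_mem _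
  | succ r ih => exact fun x hx => ⟨hx.1, Algebra.adjoin_mono ih hx.2⟩

theorem CDGA.mem_iSup_nilFilt (C : CDGA) {E : Submodule ℚ C.carrier} {ι W : Type*}
    [Preorder W] [WellFoundedLT W] (rank : ι → W) {g : ι → C.carrier} (hg : ∀ i, g i ∈ E)
    (hd : ∀ i, C.d (g i) ∈ Algebra.adjoin ℚ (g '' {j | rank j < rank i})) (i : ι) :
    g i ∈ ⨆ r, C.nilFilt E r := by
  suffices h : ∀ w : W, ∀ i, rank i = w → ∃ r, g i ∈ C.nilFilt E r by
    obtain ⟨r, hr⟩ := h _ i rfl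
    exact Submodule.mem_iSup_of_mem r hr
  intro w
  induction w using WellFoundedLT.induction with
  | ind w ih =>
  rintro i rfl
  obtain ⟨r, hr⟩ := Algebra.exists_mem_adjoin_of_monotone
    (s := fun r => (C.nilFilt E r : Set C.carrier)) (C.nilFilt_mono E)
    (Algebra.adjoin_mono (by
      rintro _ ⟨j, hj, rfl⟩
      exact Set.mem_iUnion.2 (ih _ hj j rfl)) (hd i))
  exact ⟨r + 1, hg i, hr⟩

namespace FreeGC

variable {I : Type} (deg : I → ℤ) (δ : ∀ i, gr deg (deg i + 1))
  (hδ : ∀ i, der deg δ (δ i) = 0) (U : Set I)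

/-- The subalgebra generated by some of the generators. -/
def subgen : Subalgebra ℚ (FreeGC deg) := Algebra.adjoin ℚ (gen deg '' U)

/-- A generator, as an element of the subalgebra `subgen deg U`. -/
def genOf (i : U) : subgen deg U := ⟨gen deg i, Algebra.subset_adjoin ⟨i, i.2, rfl⟩⟩

theorem mem_adjoin_genOf_iff (p : I → Prop) (x : subgen deg U) :
    x ∈ Algebra.adjoin ℚ (genOf deg U '' {j | p j}) ↔
      (x : FreeGC deg) ∈ Algebra.adjoin ℚ (gen deg '' {j | j ∈ U ∧ p j}) := by
  have h : gen deg '' {j | j ∈ U ∧ p j} = (subgen deg U).val '' (genOf deg U '' {j | p j}) := by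
    ext y
    constructor
    · rintro ⟨j, ⟨hj, hpj⟩, rfl⟩
      exact ⟨_, ⟨⟨j, hj⟩, hpj, rfl⟩, rfl⟩
    · rintro ⟨_, ⟨j, hpj, rfl⟩, rfl⟩
      exact ⟨j, ⟨j.2, hpj⟩, rfl⟩
  rw [h, ← AlgHom.map_adjoin]
  constructor
  · exact fun hx => ⟨x, hx, rfl⟩
  · rintro ⟨y, hy, hyx⟩
    rwa [← Subtype.ext hyx]

theorem adjoin_range_genOf : Algebra.adjoin ℚ (Set.range (genOf deg U)) = ⊤ := by
  rw [eq_top_iff]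
  rintro x -
  have h := (mem_adjoin_genOf_iff deg U (fun _ => True) x).2 (by
    simp only [and_true]
    exact x.2)
  simpa using h

theorem subgen_proj_mem (k : ℤ) (x : FreeGC deg) (hx : x ∈ subgen deg U) :
    (cdga deg δ hδ).proj k x ∈ subgen deg U :=
  (cdga deg δ hδ).proj_mem_adjoin
    (by rintro _ ⟨i, -, rfl⟩; exact ⟨deg i, gen_mem_gr deg i⟩) hx k

variable {U}

theorem subgen_d_mem (hU : ∀ i ∈ U, (δ i : FreeGC deg) ∈ subgen deg U) (x : FreeGC deg)
    (hx : x ∈ subgen deg U) : (cdga deg δ hδ).d x ∈ subgen deg U := by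
  refine (cdga deg δ hδ).d_mem_adjoin ?_ ?_ hx
  · rintro _ ⟨i, -, rfl⟩
    exact ⟨deg i, gen_mem_gr deg i⟩
  · rintro _ ⟨i, hi, rfl⟩
    change der deg δ (gen deg i) ∈ _
    rw [der_gen]
    exact hU i hi

variable (hU : ∀ i ∈ U, (δ i : FreeGC deg) ∈ subgen deg U)

/-- The sub-cdga generated by some of the generators. -/
def subCDGA : CDGA :=
  (cdga deg δ hδ).sub (subgen deg U) (subgen_proj_mem deg δ hδ U) (subgen_d_mem deg δ hδ hU)

/-- The span of the generators of degree `k`. -/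
def spanGen (U : Set I) (k : ℤ) : Submodule ℚ (subgen deg U) :=
  Submodule.span ℚ (genOf deg U '' {i | deg i = k})

theorem iSup_spanGen :
    (⨆ k, spanGen deg U k) = Submodule.span ℚ (Set.range (genOf deg U)) := by
  apply le_antisymm
  · exact iSup_le fun k => Submodule.span_mono (Set.image_subset_range _ _)
  · rw [Submodule.span_le]
    rintro _ ⟨i, rfl⟩
    exact Submodule.mem_iSup_of_mem (deg i) (Submodule.subset_span ⟨i, rfl, rfl⟩)

theorem genOf_mem_iSup (i : U) : genOf deg U i ∈ ⨆ k, spanGen deg U k :=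
  Submodule.mem_iSup_of_mem (deg i) (Submodule.subset_span ⟨i, rfl, rfl⟩)

theorem adjoin_iSup_spanGen :
    Algebra.adjoin ℚ ((⨆ k, spanGen deg U k : Submodule ℚ (subgen deg U)) : Set (subgen deg U)) =
      ⊤ := by
  rw [iSup_spanGen, Algebra.adjoin_span, adjoin_range_genOf]

theorem subCDGA_d_genOf (i : U) :
    (subCDGA deg δ hδ hU).d (genOf deg U i) = (⟨δ i, hU i i.2⟩ : subgen deg U) :=
  Subtype.ext (der_gen deg δ i)

theorem existsUnique_extension (B : CDGA) (f : ∀ k : ℤ, spanGen deg U k →ₗ[ℚ] B.carrier)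
    (hf : ∀ (k : ℤ) (v : spanGen deg U k), f k v ∈ B.grading k) :
    ∃! φ : subgen deg U →+* B.carrier,
      (∀ (q : ℚ) (x : subgen deg U), φ (q • x) = q • φ x) ∧
      (∀ i : ℤ, ∀ x : subgen deg U, (x : FreeGC deg) ∈ gr deg i → φ x ∈ B.grading i) ∧
      ∀ (k : ℤ) (v : spanGen deg U k), φ v = f k v := by
  classical
  have hg : ∀ i : U, genOf deg U i ∈ spanGen deg U (deg i) := fun i =>
    Submodule.subset_span ⟨i, rfl, rfl⟩
  let α : ∀ i, B.grading (deg i) := fun i =>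
    if h : i ∈ U then ⟨f (deg i) ⟨genOf deg U ⟨i, h⟩, hg ⟨i, h⟩⟩, hf _ _⟩ else 0
  have hα : ∀ i : U, (α i : B.carrier) = f (deg i) ⟨genOf deg U i, hg i⟩ := by
    rintro ⟨i, hi⟩
    simp only [α, dif_pos hi]
  let φ : subgen deg U →ₐ[ℚ] B.carrier := (liftA deg B α).comp (subgen deg U).val
  have hφ : ∀ i : U, φ (genOf deg U i) = α i := fun i => liftA_gen deg B α i
  refine ⟨φ.toRingHom, ⟨fun q x => map_smul φ q x, fun i x hx => liftA_mem deg B α hx, ?_⟩, ?_⟩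
  · rintro k ⟨v, hv⟩
    change φ v = f k ⟨v, hv⟩
    induction hv using Submodule.span_induction with
    | mem x hx =>
      obtain ⟨i, rfl, rfl⟩ := hx
      rw [hφ, hα]
    | zero => rw [map_zero]; exact (map_zero (f k)).symm
    | add x y hx hy ihx ihy => rw [map_add, ihx, ihy, ← map_add]; rfl
    | smul q x hx ihx => rw [map_smul, ihx, ← map_smul]; rfl
  · rintro ψ ⟨hsmul, -, hψ⟩
    let ψ' : subgen deg U →ₐ[ℚ] B.carrier := AlgHom.mk' ψ hsmul
    have h : ψ' = φ := by
      refine AlgHom.ext_of_adjoin_eq_top (adjoin_range_genOf deg U) ?_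
      rintro _ ⟨i, rfl⟩
      rw [hφ, hα]
      exact hψ (deg i) ⟨genOf deg U i, hg i⟩
    exact RingHom.ext fun x => AlgHom.congr_fun h x

variable {W : Type} [Preorder W] [WellFoundedLT W] (rank : I → W)
  (hpos : ∀ i ∈ U, 1 ≤ deg i)
  (hrank : ∀ i ∈ U, (δ i : FreeGC deg) ∈
    Algebra.adjoin ℚ (gen deg '' {j | j ∈ U ∧ rank j < rank i}))

/-- The Sullivan algebra on generators which can be attached one after the other. -/
def sullivan : SullivanAlgebra where
  toCDGA := subCDGA deg δ hδ hU
  V := spanGen deg U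
  V_le k := by
    refine Submodule.span_le.2 ?_
    rintro _ ⟨i, rfl, rfl⟩
    exact gen_mem_gr deg i
  V_nonpos k hk := by
    refine Submodule.span_eq_bot.2 ?_
    rintro _ ⟨i, rfl, rfl⟩
    exact absurd (hpos i i.2) (not_le.2 (Int.lt_of_le_of_lt hk zero_lt_one))
  gen := adjoin_iSup_spanGen deg
  free B f hf := existsUnique_extension deg B f hf
  filt := (subCDGA deg δ hδ hU).nilFilt (⨆ k, spanGen deg U k)
  filt_le := (subCDGA deg δ hδ hU).nilFilt_le _
  filt_mono := (subCDGA deg δ hδ hU).nilFilt_mono _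
  filt_exhausts := by
    have key : ∀ i, genOf deg U i ∈
        ⨆ r, (subCDGA deg δ hδ hU).nilFilt (⨆ k, spanGen deg U k) r := by
      refine (subCDGA deg δ hδ hU).mem_iSup_nilFilt (fun i : U => rank i)
        (E := ⨆ k, spanGen deg U k) (g := genOf deg U) ?_ ?_
      · exact genOf_mem_iSup deg
      · intro i
        exact Set.mem_of_eq_of_mem (subCDGA_d_genOf deg δ hδ hU i)
          ((mem_adjoin_genOf_iff deg U (fun j => rank j < rank i) ⟨δ i, hU i i.2⟩).2
            (hrank i i.2))
    refine iSup_le fun k => Submodule.span_le.2 ?_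
    rintro _ ⟨i, -, rfl⟩
    exact key i
  d_filt_zero x hx := hx.2
  d_filt_succ r x hx := hx.2

/-- The Sullivan algebra is minimal if the differential of a generator does not involve generators
of larger degree. -/
def minimalSullivan (hdeg : ∀ i ∈ U, (δ i : FreeGC deg) ∈
    Algebra.adjoin ℚ (gen deg '' {j | j ∈ U ∧ deg j ≤ deg i})) : MinimalSullivanAlgebra where
  toSullivanAlgebra := sullivan deg δ hδ hU rank hpos hrank
  minimal := by
    let C := subCDGA deg δ hδ hU
    have hV : (sullivan deg δ hδ hU rank hpos hrank).Vtot =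
        Submodule.span ℚ (Set.range (genOf deg U)) := iSup_spanGen deg
    suffices h : ∀ i : U, C.d (genOf deg U i) ∈
        (sullivan deg δ hδ hU rank hpos hrank).wedge 2 by
      intro x hx
      rw [hV] at hx
      have h' : Submodule.span ℚ (Set.range (genOf deg U)) ≤
          ((sullivan deg δ hδ hU rank hpos hrank).wedge 2).comap C.d := by
        refine Submodule.span_le.2 ?_
        rintro _ ⟨i, rfl⟩
        exact h i
      exact h' hx
    intro i
    have hm := (mem_adjoin_genOf_iff deg U (fun j => deg j ≤ deg i) ⟨δ i, hU i i.2⟩).2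
        (hdeg i i.2)
    obtain ⟨u, hu, y, -, hy, hx⟩ := C.mem_adjoin_split
      (s := genOf deg U '' {j | deg j ≤ deg i}) (m := deg i + 1)
      (by
        rintro _ ⟨j, -, rfl⟩
        exact ⟨deg j, hpos j j.2, gen_mem_gr deg j⟩)
      (by have := hpos i i.2; omega) hm (δ i).2
    have hu0 : u = 0 := by
      refine (Submodule.mem_bot ℚ).1 ((Submodule.span_eq_bot.2 ?_).le hu)
      rintro _ ⟨⟨j, hj, rfl⟩, hj'⟩
      exact C.eq_zero_of_mem_of_mem (Int.ne_of_lt (Int.lt_add_one_of_le hj))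
        (gen_mem_gr deg j) hj'
    have hle : Submodule.span ℚ (genOf deg U '' {j | deg j ≤ deg i}) ≤
        (sullivan deg δ hδ hU rank hpos hrank).Vtot :=
      (Submodule.span_mono (Set.image_subset_range _ _)).trans hV.ge
    refine Set.mem_of_eq_of_mem ((subCDGA_d_genOf deg δ hδ hU i).trans (hx.trans ?_))
      (mul_le_mul' (pow_le_pow_left' hle 2) le_rfl hy)
    rw [hu0, zero_add]

end FreeGC

/-! ### Construction of the minimal model -/

theorem exists_forall_of_local {S : Type*} [Preorder S] [WellFoundedLT S] {D : S → Type*}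
    (R : ∀ s, (∀ s, D s) → D s → Prop) (hR : ∀ s T, ∃ x, R s T x) (T₀ : ∀ s, D s)
    (hloc : ∀ s T T' x, (∀ t < s, T t = T' t) → R s T x → R s T' x) :
    ∃ G : ∀ s, D s, ∀ s, R s G (G s) := by
  classical
  choose f hf using hR
  let step : ∀ s, (∀ t, t < s → D t) → D s := fun s g =>
    f s fun t => if h : t < s then g t h else T₀ t
  refine ⟨(wellFounded_lt (α := S)).fix step, fun s => ?_⟩
  rw [WellFounded.fix_eq]
  refine hloc s _ _ _ (fun t ht => ?_) (hf s _)
  rw [dif_pos ht]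

namespace CDGA

variable (A : CDGA)

/-- The stages of the construction: generators of degree `n + 1` are attached at the stages
`(n, r)`. -/
abbrev Stage : Type := ℕ ×ₗ ℕ

/-- The degree of the generators attached at a given stage. -/
def stageDeg (s : Stage) : ℤ := (ofLex s).1 + 1

/-- The labels of the generators. -/
abbrev Label : Type := Stage × A.carrier

/-- The degrees of the generators. -/
def labelDeg (i : A.Label) : ℤ := stageDeg i.1

/-- The data of a stage: which generators are used, their differentials and their images. -/
structure StageData (s : Stage) where
  used : Set A.carrier
  diff : A.carrier → FreeGC.gr A.labelDeg (stageDeg s + 1)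
  image : A.carrier → A.grading (stageDeg s)

variable {A} (T : ∀ s, A.StageData s)

/-- The differentials of the generators. -/
def diffOf (i : A.Label) : FreeGC.gr A.labelDeg (A.labelDeg i + 1) := (T i.1).diff i.2

/-- The images of the generators. -/
def imageOf (i : A.Label) : A.grading (A.labelDeg i) := (T i.1).image i.2

/-- The derivation defined by the data. -/
def derOf : FreeGC A.labelDeg →ₗ[ℚ] FreeGC A.labelDeg := FreeGC.der A.labelDeg (diffOf T)

/-- The morphism defined by the data. -/
def mapOf : FreeGC A.labelDeg →ₐ[ℚ] A.carrier := FreeGC.liftA A.labelDeg A (imageOf T)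

/-- The generators which are used. -/
def usedOf : Set A.Label := {i | i.2 ∈ (T i.1).used}

/-- The generators which are used before the stage `s`. -/
def usedBelow (s : Stage) : Set A.Label := {i | i ∈ usedOf T ∧ i.1 < s}

/-- The subalgebra generated before the stage `s`. -/
def below (s : Stage) : Subalgebra ℚ (FreeGC A.labelDeg) :=
  FreeGC.subgen A.labelDeg (usedBelow T s)

/-- The relative cocycles at the stage `s`. -/
def relCocycles (s : Stage) : Submodule ℚ (FreeGC A.labelDeg × A.carrier) where
  carrier := {p | (p.1 ∈ below T s ∧ p.1 ∈ FreeGC.gr A.labelDeg (stageDeg s + 1)) ∧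
    derOf T p.1 = 0 ∧ p.2 ∈ A.grading (stageDeg s) ∧ mapOf T p.1 = A.d p.2}
  add_mem' := by
    rintro p q ⟨⟨h1, h2⟩, h3, h4, h5⟩ ⟨⟨h1', h2'⟩, h3', h4', h5'⟩
    refine ⟨⟨add_mem h1 h1', add_mem h2 h2'⟩, ?_, add_mem h4 h4', ?_⟩
    · rw [Prod.fst_add, map_add, h3, h3', add_zero]
    · rw [Prod.fst_add, Prod.snd_add, map_add, map_add, h5, h5']
  zero_mem' := ⟨⟨zero_mem _, zero_mem _⟩, map_zero _, zero_mem _, by simp⟩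
  smul_mem' := by
    rintro c p ⟨⟨h1, h2⟩, h3, h4, h5⟩
    refine ⟨⟨Subalgebra.smul_mem _ h1 c, Submodule.smul_mem _ c h2⟩, ?_,
      Submodule.smul_mem _ c h4, ?_⟩
    · rw [Prod.smul_fst, map_smul, h3, smul_zero]
    · rw [Prod.smul_fst, Prod.smul_snd, map_smul, map_smul, h5]

/-- The relative coboundaries at the stage `s`. -/
def relCobounds (s : Stage) : Submodule ℚ (FreeGC A.labelDeg × A.carrier) where
  carrier := {p | ∃ y ∈ below T s, y ∈ FreeGC.gr A.labelDeg (stageDeg s) ∧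
    ∃ b ∈ A.grading (stageDeg s - 1), p.1 = derOf T y ∧ p.2 = mapOf T y + A.d b}
  add_mem' := by
    rintro p q ⟨y, h1, h2, b, h3, h4, h5⟩ ⟨y', h1', h2', b', h3', h4', h5'⟩
    refine ⟨y + y', add_mem h1 h1', add_mem h2 h2', b + b', add_mem h3 h3', ?_, ?_⟩
    · rw [Prod.fst_add, map_add, h4, h4']
    · rw [Prod.snd_add, map_add, map_add, h5, h5', add_add_add_comm]
  zero_mem' := ⟨0, zero_mem _, zero_mem _, 0, zero_mem _, by simp, by simp⟩
  smul_mem' := by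
    rintro c p ⟨y, h1, h2, b, h3, h4, h5⟩
    refine ⟨c • y, Subalgebra.smul_mem _ h1 c, Submodule.smul_mem _ c h2, c • b,
      Submodule.smul_mem _ c h3, ?_, ?_⟩
    · rw [Prod.smul_fst, map_smul, h4]
    · rw [Prod.smul_snd, map_smul, map_smul, h5, smul_add]

/-- The data `x` adds generators which correspond to a basis of the relative cohomology. -/
structure IsStage (s : Stage) (x : A.StageData s) : Prop where
  eq_zero : ∀ k ∉ x.used, x.diff k = 0 ∧ x.image k = 0
  mem : ∀ k ∈ x.used, ((x.diff k : FreeGC A.labelDeg), (x.image k : A.carrier)) ∈ relCocycles T s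
  indep : LinearIndependent ℚ fun k : x.used =>
    (relCobounds T s).mkQ ((x.diff k : FreeGC A.labelDeg), (x.image k : A.carrier))
  le_span : relCocycles T s ≤ relCobounds T s ⊔ Submodule.span ℚ
    (Set.range fun k : x.used => ((x.diff k : FreeGC A.labelDeg), (x.image k : A.carrier)))

variable {T} {T' : ∀ s, A.StageData s}

theorem usedBelow_congr {s : Stage} (h : ∀ t < s, T t = T' t) : usedBelow T s = usedBelow T' s := by
  ext i
  constructor
  · rintro ⟨hi, his⟩
    refine ⟨?_, his⟩
    rw [usedOf, Set.mem_ofPred_eq] at *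
    rwa [← h _ his]
  · rintro ⟨hi, his⟩
    refine ⟨?_, his⟩
    rw [usedOf, Set.mem_ofPred_eq] at *
    rwa [h _ his]

theorem below_congr {s : Stage} (h : ∀ t < s, T t = T' t) : below T s = below T' s := by
  rw [below, below, usedBelow_congr h]

theorem derOf_congr {s : Stage} (h : ∀ t < s, T t = T' t) {x : FreeGC A.labelDeg}
    (hx : x ∈ below T s) : derOf T x = derOf T' x :=
  FreeGC.der_congr A.labelDeg (fun i hi => by rw [diffOf, diffOf, h _ hi.2]) hx

theorem mapOf_congr {s : Stage} (h : ∀ t < s, T t = T' t) {x : FreeGC A.labelDeg}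
    (hx : x ∈ below T s) : mapOf T x = mapOf T' x :=
  FreeGC.liftA_congr A.labelDeg (fun i hi => by rw [imageOf, imageOf, h _ hi.2]) hx

theorem relCocycles_congr {s : Stage} (h : ∀ t < s, T t = T' t) :
    relCocycles T s = relCocycles T' s := by
  have key : ∀ {T T' : ∀ s, A.StageData s}, (∀ t < s, T t = T' t) →
      relCocycles T s ≤ relCocycles T' s := by
    rintro T T' h p ⟨⟨h1, h2⟩, h3, h4, h5⟩
    exact ⟨⟨below_congr h ▸ h1, h2⟩, derOf_congr h h1 ▸ h3, h4, mapOf_congr h h1 ▸ h5⟩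
  exact le_antisymm (key h) (key fun t ht => (h t ht).symm)

theorem relCobounds_congr {s : Stage} (h : ∀ t < s, T t = T' t) :
    relCobounds T s = relCobounds T' s := by
  have key : ∀ {T T' : ∀ s, A.StageData s}, (∀ t < s, T t = T' t) →
      relCobounds T s ≤ relCobounds T' s := by
    rintro T T' h p ⟨y, h1, h2, b, h3, h4, h5⟩
    exact ⟨y, below_congr h ▸ h1, h2, b, h3, derOf_congr h h1 ▸ h4, mapOf_congr h h1 ▸ h5⟩
  exact le_antisymm (key h) (key fun t ht => (h t ht).symm)

theorem IsStage.congr {s : Stage} {x : A.StageData s} (h : ∀ t < s, T t = T' t)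
    (hx : IsStage T s x) : IsStage T' s x where
  eq_zero := hx.eq_zero
  mem := relCocycles_congr h ▸ hx.mem
  indep := relCobounds_congr h ▸ hx.indep
  le_span := relCobounds_congr h ▸ relCocycles_congr h ▸ hx.le_span

theorem cardinalMk_prod_le (hA : (1 : A.carrier) ≠ 0) :
    Cardinal.mk (FreeGC A.labelDeg × A.carrier) ≤ Cardinal.mk A.carrier := by
  have : Nontrivial A.carrier := ⟨1, 0, hA⟩
  have : Infinite A.carrier := Infinite.of_injective _ (algebraMap ℚ A.carrier).injective
  have hK := Cardinal.aleph0_le_mk A.carrier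
  have hF : Cardinal.mk (FreeGC A.labelDeg) ≤ Cardinal.mk A.carrier := by
    refine FreeGC.cardinalMk_le A.labelDeg ?_
    rw [Cardinal.mk_prod, Cardinal.lift_id, Cardinal.lift_id]
    refine (Cardinal.mul_le_max_of_aleph0_le_right hK).trans (max_le ?_ le_rfl)
    have : Countable Stage := inferInstanceAs (Countable (ℕ × ℕ))
    exact Cardinal.mk_le_aleph0.trans hK
  rw [Cardinal.mk_prod, Cardinal.lift_id, Cardinal.lift_id]
  exact (Cardinal.mul_le_max_of_aleph0_le_right hK).trans (max_le hF le_rfl)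

theorem exists_isStage (hA : (1 : A.carrier) ≠ 0) (T : ∀ s, A.StageData s) (s : Stage) :
    ∃ x, IsStage T s x := by
  obtain ⟨b, hb, hspan, hli⟩ := exists_linearIndependent ℚ
    ((relCobounds T s).mkQ '' (relCocycles T s : Set _))
  choose c hc hcb using fun i : b => hb i.2
  have hcard : Cardinal.mk b ≤ Cardinal.mk A.carrier := by
    refine (Cardinal.mk_le_of_injective (f := c) fun i j h => ?_).trans (cardinalMk_prod_le hA)
    exact Subtype.ext ((hcb i).symm.trans ((congrArg _ h).trans (hcb j)))
  obtain ⟨e⟩ := hcard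
  let z : A.carrier → FreeGC.gr A.labelDeg (stageDeg s + 1) :=
    Function.extend e (fun i => ⟨(c i).1, (hc i).1.2⟩) 0
  let a : A.carrier → A.grading (stageDeg s) :=
    Function.extend e (fun i => ⟨(c i).2, (hc i).2.2.1⟩) 0
  have hz : ∀ i, (((z (e i) : FreeGC A.labelDeg), (a (e i) : A.carrier)) :
      FreeGC A.labelDeg × A.carrier) = c i := by
    intro i
    simp only [z, a, e.injective.extend_apply]
  refine ⟨⟨Set.range e, z, a⟩, ?_, ?_, ?_, ?_⟩
  · intro k hk
    have hzk : z k = 0 := Function.extend_apply' _ _ _ hk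
    have hak : a k = 0 := Function.extend_apply' _ _ _ hk
    exact ⟨hzk, hak⟩
  · rintro _ ⟨i, rfl⟩
    exact Set.mem_of_eq_of_mem (hz i) (hc i)
  · rw [← linearIndependent_equiv (Equiv.ofInjective e e.injective)]
    have h : LinearIndependent ℚ fun i : b => (relCobounds T s).mkQ
        ((z (e i) : FreeGC A.labelDeg), (a (e i) : A.carrier)) := by
      simp only [hz, hcb]
      exact hli
    exact h
  · intro p hp
    have h : (relCobounds T s).mkQ p ∈ Submodule.span ℚ b := by
      rw [hspan]
      exact Submodule.subset_span ⟨p, hp, rfl⟩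
    have hle : Submodule.span ℚ b ≤ (Submodule.span ℚ (Set.range c)).map
        (relCobounds T s).mkQ := by
      rw [Submodule.span_le]
      intro i hi
      exact ⟨c ⟨i, hi⟩, Submodule.subset_span ⟨_, rfl⟩, hcb ⟨i, hi⟩⟩
    obtain ⟨q, hq, hqp⟩ := hle h
    have hpq : p - q ∈ relCobounds T s := by
      rw [← Submodule.ker_mkQ (relCobounds T s), LinearMap.mem_ker, map_sub, hqp, sub_self]
    rw [← sub_add_cancel p q]
    refine Submodule.add_mem_sup hpq (Submodule.span_mono ?_ hq)
    rintro _ ⟨i, rfl⟩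
    exact ⟨⟨e i, i, rfl⟩, hz i⟩

theorem exists_forall_isStage (hA : (1 : A.carrier) ≠ 0) :
    ∃ G : ∀ s, A.StageData s, ∀ s, IsStage G s (G s) :=
  exists_forall_of_local (fun s T x => IsStage T s x) (fun s T => exists_isStage hA T s)
    (fun _ => ⟨∅, 0, 0⟩) fun _ _ _ _ h hx => hx.congr h

end CDGA

namespace CDGA

variable {A : CDGA}

theorem stage_lt_iff {s : Stage} {n r : ℕ} : s < toLex (n, r) ↔
    (ofLex s).1 < n ∨ (ofLex s).1 = n ∧ (ofLex s).2 < r :=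
  Prod.Lex.lt_iff

theorem labelDeg_pos (i : A.Label) : 1 ≤ A.labelDeg i := by
  rw [labelDeg, stageDeg]
  omega

theorem labelDeg_le_of_lt {i j : A.Label} (h : j.1 < i.1) : A.labelDeg j ≤ A.labelDeg i := by
  have h' : (ofLex j.1).1 ≤ (ofLex i.1).1 := by
    rcases Prod.Lex.lt_iff.1 h with h | h
    · exact h.le
    · exact h.1.le
  rw [labelDeg, labelDeg, stageDeg, stageDeg]
  omega

theorem usedBelow_mono (T : ∀ s, A.StageData s) {s t : Stage} (h : s ≤ t) :
    usedBelow T s ⊆ usedBelow T t := fun _ hi => ⟨hi.1, hi.2.trans_le h⟩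

theorem below_le (T : ∀ s, A.StageData s) (s : Stage) :
    below T s ≤ FreeGC.subgen A.labelDeg (usedOf T) :=
  Algebra.adjoin_mono (Set.image_mono fun _ hi => hi.1)

variable {G : ∀ s, A.StageData s}

theorem derOf_diffOf (hG : ∀ s, IsStage G s (G s)) (i : A.Label) :
    FreeGC.der A.labelDeg (diffOf G) (diffOf G i) = 0 := by
  by_cases h : i.2 ∈ (G i.1).used
  · exact ((hG i.1).mem i.2 h).2.1
  · have h0 : diffOf G i = 0 := ((hG i.1).eq_zero i.2 h).1
    rw [h0, ZeroMemClass.coe_zero, map_zero]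

theorem mapOf_diffOf (hG : ∀ s, IsStage G s (G s)) (i : A.Label) :
    mapOf G (diffOf G i : FreeGC A.labelDeg) = A.d (imageOf G i) := by
  by_cases h : i.2 ∈ (G i.1).used
  · exact ((hG i.1).mem i.2 h).2.2.2
  · have h0 : diffOf G i = 0 := ((hG i.1).eq_zero i.2 h).1
    have h1 : imageOf G i = 0 := ((hG i.1).eq_zero i.2 h).2
    rw [h0, h1, ZeroMemClass.coe_zero, ZeroMemClass.coe_zero, map_zero, map_zero]

theorem diffOf_mem_below (hG : ∀ s, IsStage G s (G s)) {i : A.Label} (hi : i ∈ usedOf G) :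
    (diffOf G i : FreeGC A.labelDeg) ∈ below G i.1 := ((hG i.1).mem i.2 hi).1.1

theorem diffOf_mem_subgen (hG : ∀ s, IsStage G s (G s)) (i : A.Label) (hi : i ∈ usedOf G) :
    (diffOf G i : FreeGC A.labelDeg) ∈ FreeGC.subgen A.labelDeg (usedOf G) :=
  below_le G _ (diffOf_mem_below hG hi)

theorem diffOf_mem_adjoin (hG : ∀ s, IsStage G s (G s)) (i : A.Label) (hi : i ∈ usedOf G) :
    (diffOf G i : FreeGC A.labelDeg) ∈ Algebra.adjoin ℚ (FreeGC.gen A.labelDeg ''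
      {j | j ∈ usedOf G ∧ A.labelDeg j ≤ A.labelDeg i}) := by
  refine Algebra.adjoin_mono (Set.image_mono ?_) (diffOf_mem_below hG hi)
  exact fun _ hj => ⟨hj.1, labelDeg_le_of_lt hj.2⟩

/-- The free cdga on all the labels. -/
def bigModel (hG : ∀ s, IsStage G s (G s)) : CDGA := FreeGC.cdga A.labelDeg (diffOf G) (derOf_diffOf hG)

/-- The minimal model. -/
def minimalModel (hG : ∀ s, IsStage G s (G s)) : MinimalSullivanAlgebra :=
  FreeGC.minimalSullivan A.labelDeg (diffOf G) (derOf_diffOf hG) (U := usedOf G)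
    (diffOf_mem_subgen hG) (fun i => i.1) (fun i _ => labelDeg_pos i)
    (fun _ hi => diffOf_mem_below hG hi)
    (diffOf_mem_adjoin hG)

theorem mapOf_derOf (hG : ∀ s, IsStage G s (G s)) (x : FreeGC A.labelDeg) :
    mapOf G (derOf G x) = A.d (mapOf G x) := by
  refine IsGraded.map_d_of_mem_adjoin (A := bigModel hG) (B := A) (f := mapOf G)
    (s := Set.range (FreeGC.gen A.labelDeg))
    (fun _ _ hx => FreeGC.liftA_mem A.labelDeg A _ hx) ?_ ?_
  · rintro _ ⟨i, rfl⟩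
    change mapOf G (FreeGC.der A.labelDeg (diffOf G) (FreeGC.gen A.labelDeg i)) =
      A.d (FreeGC.liftA A.labelDeg A (imageOf G) (FreeGC.gen A.labelDeg i))
    rw [FreeGC.der_gen, FreeGC.liftA_gen, mapOf_diffOf hG]
  · have h := FreeGC.adjoin_range_gen A.labelDeg
    exact h.ge (Algebra.mem_top)

/-- The quasi-isomorphism from the minimal model. -/
def modelMap (hG : ∀ s, IsStage G s (G s)) : Hom (minimalModel hG).toCDGA A :=
  (Hom.ofAlgHom (A := bigModel hG) (mapOf G) (fun _ _ hx => FreeGC.liftA_mem A.labelDeg A _ hx)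
    (mapOf_derOf hG)).comp
    (Hom.ofSub (bigModel hG) (FreeGC.subgen A.labelDeg (usedOf G))
      (FreeGC.subgen_proj_mem _ _ _ _) (FreeGC.subgen_d_mem _ _ _ (diffOf_mem_subgen hG)))

theorem exists_lift_of_mem_relCocycles (hG : ∀ s, IsStage G s (G s)) {s : Stage}
    {p : FreeGC A.labelDeg × A.carrier} (hp : p ∈ relCocycles G s) :
    ∃ w ∈ FreeGC.subgen A.labelDeg (usedOf G), w ∈ FreeGC.gr A.labelDeg (stageDeg s) ∧
      ∃ b ∈ A.grading (stageDeg s - 1), p.1 = derOf G w ∧ p.2 = mapOf G w + A.d b := by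
  obtain ⟨q, ⟨y, hy, hys, b, hb, h1, h2⟩, t, ht, rfl⟩ := Submodule.mem_sup.1 ((hG s).le_span hp)
  have hle : Submodule.span ℚ (Set.range fun k : (G s).used =>
      (((G s).diff k : FreeGC A.labelDeg), ((G s).image k : A.carrier))) ≤
      ((Subalgebra.toSubmodule (FreeGC.subgen A.labelDeg (usedOf G))) ⊓
        FreeGC.gr A.labelDeg (stageDeg s)).map
      ((derOf G).prod (mapOf G).toLinearMap) := by
    refine Submodule.span_le.2 ?_
    rintro _ ⟨k, rfl⟩
    refine ⟨FreeGC.gen A.labelDeg (s, k), ⟨Algebra.subset_adjoin ⟨(s, k), k.2, rfl⟩,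
      FreeGC.gen_mem_gr A.labelDeg (s, k.1)⟩, Prod.ext ?_ ?_⟩
    · exact FreeGC.der_gen A.labelDeg (diffOf G) (s, k.1)
    · exact FreeGC.liftA_gen A.labelDeg A (imageOf G) (s, k.1)
  obtain ⟨w, ⟨hw, hws⟩, rfl⟩ := hle ht
  refine ⟨y + w, add_mem (below_le G s hy) hw, add_mem hys hws, b, hb, ?_, ?_⟩
  · rw [Prod.fst_add, h1, map_add]
    rfl
  · rw [Prod.snd_add, h2, map_add, add_right_comm]
    rfl

theorem labelDeg_eq_or_gen_eq_zero (hG : ∀ s, IsStage G s (G s)) {i : A.Label} {n : ℤ}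
    (h : FreeGC.gen A.labelDeg i ∈ FreeGC.gr A.labelDeg n) :
    A.labelDeg i = n ∨ FreeGC.gen A.labelDeg i = 0 := by
  by_cases hi : A.labelDeg i = n
  · exact Or.inl hi
  · exact Or.inr ((bigModel hG).eq_zero_of_mem_of_mem hi (FreeGC.gen_mem_gr A.labelDeg i) h)

theorem exists_split (hG : ∀ s, IsStage G s (G s)) {U : Set A.Label} {m : ℤ} (hm : 1 ≤ m)
    {x : FreeGC A.labelDeg}
    (hx : x ∈ FreeGC.subgen A.labelDeg U) (hxm : x ∈ FreeGC.gr A.labelDeg m) :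
    ∃ u ∈ Submodule.span ℚ (FreeGC.gen A.labelDeg '' {i ∈ U | A.labelDeg i = m}),
      ∃ y ∈ FreeGC.subgen A.labelDeg {i ∈ U | A.labelDeg i < m}, x = u + y := by
  obtain ⟨u, hu, y, hy, -, rfl⟩ := (bigModel hG).mem_adjoin_split
    (s := FreeGC.gen A.labelDeg '' U) (by
      rintro _ ⟨i, -, rfl⟩
      exact ⟨A.labelDeg i, labelDeg_pos i, FreeGC.gen_mem_gr A.labelDeg i⟩) hm hx hxm
  refine ⟨u, ?_, y, ?_, rfl⟩
  · refine Submodule.span_le.2 ?_ hu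
    rintro _ ⟨⟨i, hi, rfl⟩, him⟩
    rcases labelDeg_eq_or_gen_eq_zero hG him with h | h
    · exact Submodule.subset_span ⟨i, ⟨hi, h⟩, rfl⟩
    · exact Set.mem_of_eq_of_mem h (Submodule.zero_mem _)
  · refine Algebra.adjoin_le ?_ hy
    rintro _ ⟨⟨i, hi, rfl⟩, n, hn, hin⟩
    rcases labelDeg_eq_or_gen_eq_zero hG hin with h | h
    · exact Algebra.subset_adjoin ⟨i, ⟨hi, h.trans_lt hn⟩, rfl⟩
    · exact Set.mem_of_eq_of_mem h (Subalgebra.zero_mem _)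

theorem mem_below_of_exact (hG : ∀ s, IsStage G s (G s)) {n r : ℕ} {x : FreeGC A.labelDeg}
    (hx : x ∈ below G (toLex (n, r + 1))) (hxn : x ∈ FreeGC.gr A.labelDeg (n + 1))
    (hdx : derOf G x = 0) {b : A.carrier} (hb : b ∈ A.grading n) (hxb : mapOf G x = A.d b) :
    x ∈ below G (toLex (n, r)) := by
  set s : Stage := toLex (n, r) with hs
  let v : (G s).used → FreeGC A.labelDeg := fun k => FreeGC.gen A.labelDeg (s, k)
  obtain ⟨u, hu, y, hy, rfl⟩ := exists_split hG (by omega) hx hxn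
  have hu' : u ∈ Subalgebra.toSubmodule (below G s) ⊔ Submodule.span ℚ (Set.range v) := by
    refine Submodule.span_le.2 ?_ hu
    rintro _ ⟨i, ⟨⟨hiU, hi⟩, -⟩, rfl⟩
    by_cases h : i.1 = s
    · refine Submodule.mem_sup_right (Submodule.subset_span ⟨⟨i.2, ?_⟩, ?_⟩)
      · rw [← h]
        exact hiU
      · simp only [v, ← h]
    · refine Submodule.mem_sup_left (Algebra.subset_adjoin ⟨i, ⟨hiU, ?_⟩, rfl⟩)
      refine lt_of_le_of_ne (not_lt.1 fun h' => ?_) h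
      rw [stage_lt_iff] at hi
      have h'' := Prod.Lex.lt_iff.1 h'
      simp only [hs, ofLex_toLex] at h''
      omega
  have hy' : y ∈ below G s := by
    refine Algebra.adjoin_mono (Set.image_mono ?_) hy
    rintro i ⟨⟨hiU, -⟩, hi⟩
    refine ⟨hiU, stage_lt_iff.2 (Or.inl ?_)⟩
    rw [labelDeg, stageDeg] at hi
    omega
  obtain ⟨y₁, hy₁, t, ht, rfl⟩ := Submodule.mem_sup.1 hu'
  have htn : t ∈ FreeGC.gr A.labelDeg (n + 1) := by
    refine Submodule.span_le.2 ?_ ht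
    rintro _ ⟨k, rfl⟩
    exact FreeGC.gen_mem_gr A.labelDeg (s, k.1)
  let L := (relCobounds G s).mkQ ∘ₗ ((derOf G).prod (mapOf G).toLinearMap)
  have hLv : L ∘ v = fun k : (G s).used => (relCobounds G s).mkQ
      (((G s).diff k : FreeGC A.labelDeg), ((G s).image k : A.carrier)) := by
    funext k
    refine congrArg (relCobounds G s).mkQ (Prod.ext ?_ ?_)
    · exact FreeGC.der_gen A.labelDeg (diffOf G) (s, k.1)
    · exact FreeGC.liftA_gen A.labelDeg A (imageOf G) (s, k.1)
  have hLt : L t = 0 := by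
    refine (Submodule.Quotient.mk_eq_zero _).2 ⟨-(y₁ + y), neg_mem (add_mem hy₁ hy'), ?_, b, ?_,
      ?_, ?_⟩
    · have h : -(y₁ + y) = t - (y₁ + t + y) := by abel
      rw [h]
      exact sub_mem htn hxn
    · have h : stageDeg s - 1 = n := by simp [stageDeg, hs]
      rw [h]
      exact hb
    · change derOf G t = _
      rw [← sub_eq_zero, ← map_sub, ← hdx]
      congr 1
      abel
    · change mapOf G t = _
      rw [← hxb, ← map_add]
      congr 1
      abel
  obtain ⟨c, hc⟩ := (Finsupp.mem_span_range_iff_exists_finsupp).1 ht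
  have hc' : Finsupp.linearCombination ℚ v c = t := hc
  have hc0 : c = 0 := by
    have hi := (hG s).indep
    rw [← hLv] at hi
    refine linearIndependent_iff.1 hi c ?_
    rw [← LinearMap.map_finsupp_linearCombination, hc', hLt]
  have ht0 : t = 0 := by rw [← hc', hc0, map_zero]
  rw [ht0, add_zero]
  exact add_mem hy₁ hy'

theorem exists_mem_below (hG : ∀ s, IsStage G s (G s)) {n : ℕ} {x : FreeGC A.labelDeg}
    (hx : x ∈ FreeGC.subgen A.labelDeg (usedOf G)) (hxn : x ∈ FreeGC.gr A.labelDeg (n + 1)) :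
    ∃ r, x ∈ below G (toLex (n, r)) := by
  have hmono : Monotone fun r : ℕ => FreeGC.gen A.labelDeg '' usedBelow G (toLex (n, r)) := by
    intro r r' h
    refine Set.image_mono (usedBelow_mono G (Prod.Lex.le_iff.2 (Or.inr ⟨rfl, h⟩)))
  have hmem : ∀ i ∈ usedOf G, A.labelDeg i ≤ n + 1 → FreeGC.gen A.labelDeg i ∈
      Algebra.adjoin ℚ (⋃ r, FreeGC.gen A.labelDeg '' usedBelow G (toLex (n, r))) := by
    intro i hi hin
    refine Algebra.subset_adjoin (Set.mem_iUnion.2 ⟨(ofLex i.1).2 + 1, i, ⟨hi, ?_⟩, rfl⟩)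
    rw [labelDeg, stageDeg] at hin
    rw [stage_lt_iff]
    omega
  obtain ⟨u, hu, y, hy, rfl⟩ := exists_split hG (by omega) hx hxn
  refine Algebra.exists_mem_adjoin_of_monotone hmono (add_mem ?_ ?_)
  · rw [← Subalgebra.mem_toSubmodule]
    refine Submodule.span_le.2 ?_ hu
    rintro _ ⟨i, hi, rfl⟩
    exact hmem i hi.1 hi.2.le
  · refine Algebra.adjoin_le ?_ hy
    rintro _ ⟨i, hi, rfl⟩
    exact hmem i hi.1 hi.2.le

theorem exists_derOf_eq (hG : ∀ s, IsStage G s (G s)) {n : ℕ} {x : FreeGC A.labelDeg}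
    (hx : x ∈ FreeGC.subgen A.labelDeg (usedOf G)) (hxn : x ∈ FreeGC.gr A.labelDeg (n + 1))
    (hdx : derOf G x = 0) {b : A.carrier} (hb : b ∈ A.grading n) (hxb : mapOf G x = A.d b) :
    ∃ w ∈ FreeGC.subgen A.labelDeg (usedOf G), w ∈ FreeGC.gr A.labelDeg n ∧ derOf G w = x := by
  obtain ⟨r, hr⟩ := exists_mem_below hG hx hxn
  have h0 : x ∈ below G (toLex (n, 0)) := by
    induction r with
    | zero => exact hr
    | succ r ih => exact ih (mem_below_of_exact hG hr hxn hdx hb hxb)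
  cases n with
  | zero =>
    have hU : usedBelow G (toLex (0, 0)) = ∅ := by
      refine Set.eq_empty_of_forall_notMem fun i hi => ?_
      have h := stage_lt_iff.1 hi.2
      omega
    rw [below, FreeGC.subgen, hU, Set.image_empty, Algebra.adjoin_empty, Algebra.mem_bot] at h0
    obtain ⟨q, rfl⟩ := h0
    refine ⟨0, zero_mem _, zero_mem _, ?_⟩
    rw [map_zero]
    refine ((bigModel hG).eq_zero_of_mem_of_mem (i := 0) (j := (0 : ℕ) + 1) (by simp) ?_ hxn).symm
    rw [Algebra.algebraMap_eq_smul_one]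
    exact Submodule.smul_mem _ _ (FreeGC.one_mem_gr A.labelDeg)
  | succ m =>
    have hmono : Monotone fun r : ℕ => FreeGC.gen A.labelDeg '' usedBelow G (toLex (m, r)) := by
      intro r r' h
      exact Set.image_mono (usedBelow_mono G (Prod.Lex.le_iff.2 (Or.inr ⟨rfl, h⟩)))
    obtain ⟨r, hr⟩ := Algebra.exists_mem_adjoin_of_monotone hmono
      (Algebra.adjoin_mono (by
        rintro _ ⟨i, hi, rfl⟩
        refine Set.mem_iUnion.2 ⟨(ofLex i.1).2 + 1, i, ⟨hi.1, ?_⟩, rfl⟩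
        have h := stage_lt_iff.1 hi.2
        rw [stage_lt_iff]
        omega) h0)
    have hdeg : stageDeg (toLex (m, r)) = ((m + 1 : ℕ) : ℤ) := by simp [stageDeg]
    obtain ⟨w, hw, hws, -, -, hwx, -⟩ := exists_lift_of_mem_relCocycles hG
      (s := toLex (m, r)) (p := (x, b)) ⟨⟨hr, hdeg ▸ hxn⟩, hdx, hdeg ▸ hb, hxb⟩
    exact ⟨w, hw, hdeg ▸ hws, hwx.symm⟩

theorem modelMap_quasiIso (hG : ∀ s, IsStage G s (G s)) (hA : A.IsConn) : QuasiIso (modelMap hG) := by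
  let S := (minimalModel hG).toCDGA
  have hone : ∀ n ≤ 0, ∀ x : S.carrier, x ∈ S.grading n → ∃ q : ℚ, x = q • (1 : S.carrier) := by
    intro n hn x hx
    obtain ⟨q, hq⟩ := (bigModel hG).mem_span_one_of_mem_adjoin
      (s := FreeGC.gen A.labelDeg '' usedOf G) (by
        rintro _ ⟨i, -, rfl⟩
        exact ⟨A.labelDeg i, labelDeg_pos i, FreeGC.gen_mem_gr A.labelDeg i⟩) hn x.2 hx
    exact ⟨q, Subtype.ext hq⟩
  refine ⟨fun n x hx hfx => ?_, fun n a ha => ?_⟩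
  · obtain ⟨b, hb, hbx⟩ := A.exists_d_eq_of_mem_cobounds hfx
    obtain ⟨hxn, hdx⟩ := S.mem_cocycles.1 hx
    rcases le_or_gt n 0 with hn | hn
    · obtain ⟨q, rfl⟩ := hone n hn x hxn
      have hb0 : b = 0 := by
        rw [hA.neg _ (by omega), Submodule.mem_bot] at hb
        exact hb
      rw [hb0, map_zero, (modelMap hG).map_smul, map_one, eq_comm, smul_eq_zero] at hbx
      rw [hbx.resolve_right hA.one_ne_zero, zero_smul]
      exact Submodule.zero_mem _
    · obtain ⟨m, rfl⟩ : ∃ m : ℕ, n = m + 1 := ⟨(n - 1).toNat, by omega⟩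
      rw [add_sub_cancel_right] at hb
      obtain ⟨w, hw, hwn, hwx⟩ := exists_derOf_eq hG x.2 hxn (congrArg Subtype.val hdx) hb hbx.symm
      have hd : S.d ⟨w, hw⟩ = x := Subtype.ext hwx
      rw [← hd]
      refine S.d_mem_cobounds ?_
      rw [add_sub_cancel_right]
      exact hwn
  · obtain ⟨han, hda⟩ := A.mem_cocycles.1 ha
    rcases lt_trichotomy n 0 with hn | rfl | hn
    · rw [hA.neg n hn, Submodule.mem_bot] at han
      refine ⟨0, Submodule.zero_mem _, ?_⟩
      rw [han, map_zero, sub_zero]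
      exact Submodule.zero_mem _
    · obtain ⟨q, rfl⟩ := hA.exists_smul_one a ha
      refine ⟨q • 1, Submodule.smul_mem _ _ (S.mem_cocycles.2 ⟨S.one_mem, S.d_one⟩), ?_⟩
      rw [(modelMap hG).map_smul, map_one, sub_self]
      exact Submodule.zero_mem _
    · obtain ⟨m, rfl⟩ : ∃ m : ℕ, n = m + 1 := ⟨(n - 1).toNat, by omega⟩
      obtain ⟨w, hw, hws, b, hb, h1, h2⟩ := exists_lift_of_mem_relCocycles hG
        (s := toLex (m, 0)) (p := (0, a))
        ⟨⟨zero_mem _, zero_mem _⟩, map_zero _, han, (map_zero _).trans hda.symm⟩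
      refine ⟨⟨w, hw⟩, S.mem_cocycles.2 ⟨hws, Subtype.ext h1.symm⟩, ?_⟩
      have h3 : a - (modelMap hG).toFun ⟨w, hw⟩ = A.d b := sub_eq_of_eq_add' h2
      rw [h3]
      exact A.d_mem_cobounds hb

/-- Connected cdga's have minimal models. -/
theorem exists_minimalModel (hA : A.IsConn) :
    ∃ (S : MinimalSullivanAlgebra) (φ : Hom S.toCDGA A), QuasiIso φ := by
  obtain ⟨G, hG⟩ := exists_forall_isStage hA.one_ne_zero
  exact ⟨minimalModel hG, modelMap hG, modelMap_quasiIso hG hA⟩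

end CDGA

/-! ## STATEMENT 0

For every path connected topological space `X` there exists a quasi-isomorphism
`φ : (∧V,d) → A_PL(X)` from a minimal Sullivan algebra; and if
`ψ : (∧W,d) → A_PL(X)` is a second quasi-isomorphism from a minimal Sullivan
algebra, then there is a cdga isomorphism `χ : (∧W,d) → (∧V,d)` such that
`φ∘χ` is homotopic to `ψ`.

Here `A_PL(X)` is represented by a cdga `A` whose cohomology is the rational
singular cohomology of `X` (the property of `A_PL(X)` relevant here). -/
theorem statement_0 (X : Type) [TopologicalSpace X] [PathConnectedSpace X]
    (A : CDGA) (hA : IsAPLModelOf A X) :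
    (∃ (S : MinimalSullivanAlgebra) (φ : CDGA.Hom S.toCDGA A), CDGA.QuasiIso φ) ∧
    (∀ (S T : MinimalSullivanAlgebra) (φ : CDGA.Hom S.toCDGA A)
        (ψ : CDGA.Hom T.toCDGA A), CDGA.QuasiIso φ → CDGA.QuasiIso ψ →
        ∃ χ : CDGA.Hom T.toCDGA S.toCDGA,
          CDGA.IsIso χ ∧ CDGA.Homotopic (φ.comp χ) ψ) := by
  exact ⟨CDGA.exists_minimalModel (CDGA.isConn_of_isAPLModelOf hA),
    fun S T φ ψ hφ hψ => CDGA.exists_isIso_homotopic S T φ ψ hφ hψ⟩
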